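/- Fix an integer d ≥ 3 and a real p with 1/(d-1) < p < 1. For every b > 0 there exist δ, c, C, R > 0 such that: if 𝒢 is a regular (b,d)-expander on n vertices with girth exceeding R, then with probability at least 1 − C·exp(−c n), the random graph G ∼ 𝒢_p contains a minor of the complete graph K_t with t ≥ δ√n; that is, there exist t pairwise disjoint vertex subsets V₁, …, V_t of G, each inducing a connected subgraph of G, such that for every pair i ≠ j there is an edge of G with one endpoint in V_i and the other in V_j. -/

import Mathlib

open scoped Classical symmDiff

noncomputable section

namespace Percolation

variable {V : Type} [Fintype V] [DecidableEq V]

/-- The edge set of `G` as a finset. -/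
noncomputable def edgeFinset' (G : SimpleGraph V) : Finset (Sym2 V) :=
  Finset.univ.filter (· ∈ G.edgeSet)

/-- Probability that bond percolation on `G` with parameter `p` produces a spanning
subgraph satisfying `P`. -/
noncomputable def percProb (G : SimpleGraph V) (p : ℝ) (P : SimpleGraph V → Prop) : ℝ :=
  ∑ s ∈ (edgeFinset' G).powerset,
    (p ^ s.card * (1 - p) ^ ((edgeFinset' G).card - s.card)) *
      (if P (SimpleGraph.fromEdgeSet (↑s)) then 1 else 0)

/-- Joint probability for two independent bond percolations on `G`. -/
noncomputable def percProb2 (G : SimpleGraph V) (p₁ p₂ : ℝ)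
    (P : SimpleGraph V → SimpleGraph V → Prop) : ℝ :=
  ∑ s ∈ (edgeFinset' G).powerset, ∑ t ∈ (edgeFinset' G).powerset,
    (p₁ ^ s.card * (1 - p₁) ^ ((edgeFinset' G).card - s.card)) *
    (p₂ ^ t.card * (1 - p₂) ^ ((edgeFinset' G).card - t.card)) *
      (if P (SimpleGraph.fromEdgeSet (↑s)) (SimpleGraph.fromEdgeSet (↑t)) then 1 else 0)

/-- Number of edges of `G` joining `S` to its complement. -/
noncomputable def cutCard (G : SimpleGraph V) (S : Finset V) : ℕ :=
  ((edgeFinset' G).filter (fun e => ∃ x ∈ S, ∃ y, y ∉ S ∧ e = s(x, y))).card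

/-- `G` is a `(b,d)`-expander: max degree at most `d`, and every vertex set of size at most
`n/2` has at least `b|S|` edges to its complement. -/
def IsExpander (G : SimpleGraph V) (b : ℝ) (d : ℕ) : Prop :=
  (∀ v, (G.neighborSet v).ncard ≤ d) ∧
  ∀ S : Finset V, (S.card : ℝ) ≤ Fintype.card V / 2 → b * S.card ≤ cutCard G S

/-- `G` is a regular `(b,d)`-expander. -/
def IsRegularExpander (G : SimpleGraph V) (b : ℝ) (d : ℕ) : Prop :=
  IsExpander G b d ∧ ∀ v, (G.neighborSet v).ncard = d

/-- The vertices of the connected component `c` of `G`. -/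
noncomputable def compVerts (G : SimpleGraph V) (c : G.ConnectedComponent) : Finset V :=
  Finset.univ.filter (fun v => G.connectedComponentMk v = c)

/-- The edges of the connected component `c` of `G`. -/
noncomputable def compEdges (G : SimpleGraph V) (c : G.ConnectedComponent) : Finset (Sym2 V) :=
  (edgeFinset' G).filter (fun e => ∀ v ∈ e, G.connectedComponentMk v = c)

/-- `c` is a largest connected component of `G`. -/
def IsLargestComp (G : SimpleGraph V) (c : G.ConnectedComponent) : Prop :=
  ∀ c' : G.ConnectedComponent, (compVerts G c').card ≤ (compVerts G c).card

/-- The 2-core of the connected component `c` of `G` : the maximal subgraph of `G`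
supported inside `c` all of whose vertices have degree at least 2. -/
noncomputable def twoCoreComp (G : SimpleGraph V) (c : G.ConnectedComponent) : SimpleGraph V :=
  sSup {H : SimpleGraph V | H ≤ G ∧ (∀ v ∈ H.support, G.connectedComponentMk v = c) ∧
    ∀ v ∈ H.support, 2 ≤ (H.neighborSet v).ncard}

/-- The event `A^R_{x,y}(H)`: the connected component of `y` in `H` with the edge `xy`
removed (if present) has at least `R` vertices. -/
def eventA (H : SimpleGraph V) (R : ℕ) (x y : V) : Prop :=
  R ≤ (compVerts (H.deleteEdges {s(x, y)})
        ((H.deleteEdges {s(x, y)}).connectedComponentMk y)).card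

/-- `E₁(H)`: edges `xy` of `H` such that `A^R_{x,y}` or `A^R_{y,x}` holds. -/
noncomputable def E1set (H : SimpleGraph V) (R : ℕ) : Finset (Sym2 V) :=
  (edgeFinset' H).filter (fun e => ∃ x y, e = s(x, y) ∧ (eventA H R x y ∨ eventA H R y x))

/-- `V₁(H)`: vertices `x` such that for some `y`, `xy ∈ E(H)` and `A^R_{x,y}` holds. -/
noncomputable def V1set (H : SimpleGraph V) (R : ℕ) : Finset V :=
  Finset.univ.filter (fun x => ∃ y, H.Adj x y ∧ eventA H R x y)

/-- `E₂(H)`: edges `xy` of `H` such that both `A^R_{x,y}` and `A^R_{y,x}` hold. -/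
noncomputable def E2set (H : SimpleGraph V) (R : ℕ) : Finset (Sym2 V) :=
  (edgeFinset' H).filter (fun e => ∃ x y, e = s(x, y) ∧ eventA H R x y ∧ eventA H R y x)

/-- `V₂(H)`: vertices incident to an edge of `E₂(H)`. -/
noncomputable def V2set (H : SimpleGraph V) (R : ℕ) : Finset V :=
  Finset.univ.filter (fun x => ∃ e ∈ E2set H R, x ∈ e)

/-- `V̄₁(H)`: vertices `y` such that `A^R_{x,y}(H)` holds for some `x`. -/
noncomputable def Vbar1 (H : SimpleGraph V) (R : ℕ) : Finset V :=
  Finset.univ.filter (fun y => ∃ x, eventA H R x y)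

/-- `S` is `k`-thick in `H`: a union of pairwise disjoint subsets, each of size at least
`k`, each inducing a connected subgraph of `H`. -/
def IsThick (H : SimpleGraph V) (k : ℕ) (S : Finset V) : Prop :=
  ∃ P : Finset (Finset V),
    (∀ T ∈ P, k ≤ T.card ∧ (H.induce (↑T : Set V)).Connected) ∧
    (↑P : Set (Finset V)).PairwiseDisjoint id ∧ S = P.biUnion id

/-- `S` is a separator of `K`. -/
def IsSeparator {W : Type} [Fintype W] (K : SimpleGraph W) (S : Finset W) : Prop :=
  ∃ A B : Finset W, Disjoint A B ∧ Disjoint A S ∧ Disjoint B S ∧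
    (∀ w, w ∈ A ∨ w ∈ B ∨ w ∈ S) ∧
    (∀ a ∈ A, ∀ b ∈ B, ¬ K.Adj a b) ∧
    3 * A.card ≤ 2 * Fintype.card W ∧ 3 * B.card ≤ 2 * Fintype.card W

/-!
Split the percolation into two independent stages. After the first stage, still supercritical,
exploring the tree-like neighbourhoods of a graph of large girth shows that linearly many vertices
lie in clusters of bounded size `k` or more, outside an event of exponentially small probability.
Both sides of a split of these clusters into two large parts are joined in the expander by linearly
many disjoint paths of bounded length that avoid any given small set `X`, so some path is entirely
open in the second stage; the resulting failure probability beats the number of choices of `X` and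
of the split. Hence with the stated probability the percolated graph is well-linked: two parts of a
set of linear size can only be separated by removing linearly many vertices.

A well-linked graph of bounded degree contains a complete minor of order `√n`. Branch sets of order
`√n` vertices are added one at a time. After discarding a small set, the unused vertices span an
expander, and by the Cheeger inequality a lazy random walk on it avoids a set of `√n` vertices for
`l` steps with probability exponentially small in `l / √n`. Hence a walk of order `√n` steps passes
within bounded average distance of all earlier branch sets, and short detours turn its range into a
new branch set adjacent to all of them.
-/

section RandomSubset

variable {α : Type*} {p : ℝ} {E F I : Finset α}

/-- The expectation of `f` at a random subset of `E` that contains each element independently with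
probability `p`. -/
def percExp (p : ℝ) (E : Finset α) (f : Finset α → ℝ) : ℝ :=
  ∑ s ∈ E.powerset, (p ^ s.card * (1 - p) ^ (E.card - s.card)) * f s

/-- The probability that a random subset of `E`, containing each element independently with
probability `p`, satisfies `P`. -/
def percPr (p : ℝ) (E : Finset α) (P : Finset α → Prop) : ℝ :=
  percExp p E fun s => if P s then 1 else 0

lemma percExp_empty (p : ℝ) (f : Finset α → ℝ) : percExp p ∅ f = f ∅ := by
  simp [percExp]

lemma percExp_insert [DecidableEq α] (p : ℝ) {e : α} (he : e ∉ E) (f : Finset α → ℝ) :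
    percExp p (insert e E) f
      = (1 - p) * percExp p E f + p * percExp p E (fun s => f (insert e s)) := by
  unfold percExp
  rw [Finset.sum_powerset_insert he, Finset.mul_sum, Finset.mul_sum]
  congr 1
  · refine Finset.sum_congr rfl fun s hs => ?_
    rw [Finset.card_insert_of_notMem he,
      Nat.succ_sub (Finset.card_le_card (Finset.mem_powerset.1 hs)), pow_succ]
    ring
  · refine Finset.sum_congr rfl fun s hs => ?_
    have hes : e ∉ s := fun h => he (Finset.mem_powerset.1 hs h)
    rw [Finset.card_insert_of_notMem he, Finset.card_insert_of_notMem hes, Nat.succ_sub_succ,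
      pow_succ]
    ring

lemma percExp_mono (h0 : 0 ≤ p) (h1 : p ≤ 1) {f g : Finset α → ℝ}
    (h : ∀ s ⊆ E, f s ≤ g s) : percExp p E f ≤ percExp p E g :=
  Finset.sum_le_sum fun s hs => mul_le_mul_of_nonneg_left (h s (Finset.mem_powerset.1 hs))
    (mul_nonneg (pow_nonneg h0 _) (pow_nonneg (by linarith) _))

lemma percExp_congr {f g : Finset α → ℝ} (h : ∀ s ⊆ E, f s = g s) :
    percExp p E f = percExp p E g :=
  Finset.sum_congr rfl fun s hs => by rw [h s (Finset.mem_powerset.1 hs)]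

lemma percExp_add (p : ℝ) (E : Finset α) (f g : Finset α → ℝ) :
    percExp p E (fun s => f s + g s) = percExp p E f + percExp p E g := by
  simp [percExp, mul_add, Finset.sum_add_distrib]

lemma percExp_sub (p : ℝ) (E : Finset α) (f g : Finset α → ℝ) :
    percExp p E (fun s => f s - g s) = percExp p E f - percExp p E g := by
  simp [percExp, mul_sub, Finset.sum_sub_distrib]

lemma percExp_const_mul (p : ℝ) (E : Finset α) (c : ℝ) (f : Finset α → ℝ) :
    percExp p E (fun s => c * f s) = c * percExp p E f := by
  simp only [percExp, Finset.mul_sum, mul_left_comm c]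

lemma percExp_sum {ι : Type*} (p : ℝ) (E : Finset α) (T : Finset ι) (f : ι → Finset α → ℝ) :
    percExp p E (fun s => ∑ i ∈ T, f i s) = ∑ i ∈ T, percExp p E (f i) := by
  simp only [percExp, Finset.mul_sum]
  exact Finset.sum_comm

lemma percExp_prod [DecidableEq α] (p : ℝ) (E : Finset α) (a b : α → ℝ) :
    percExp p E (fun s => (∏ e ∈ s, a e) * ∏ e ∈ E \ s, b e)
      = ∏ e ∈ E, (p * a e + (1 - p) * b e) := by
  rw [Finset.prod_add]
  refine Finset.sum_congr rfl fun s hs => ?_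
  rw [Finset.prod_mul_distrib, Finset.prod_mul_distrib, Finset.prod_const, Finset.prod_const,
    Finset.card_sdiff_of_subset (Finset.mem_powerset.1 hs)]
  ring

lemma percExp_const (p : ℝ) (E : Finset α) (c : ℝ) : percExp p E (fun _ => c) = c := by
  induction E using Finset.induction_on with
  | empty => exact percExp_empty p _
  | insert e E he ih => rw [percExp_insert p he, ih]; ring

lemma percPr_nonneg (h0 : 0 ≤ p) (h1 : p ≤ 1) (E : Finset α) (P : Finset α → Prop) :
    0 ≤ percPr p E P := by
  rw [← percExp_const p E 0]
  exact percExp_mono h0 h1 fun s _ => by split_ifs <;> norm_num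

lemma percPr_le_one (h0 : 0 ≤ p) (h1 : p ≤ 1) (E : Finset α) (P : Finset α → Prop) :
    percPr p E P ≤ 1 := by
  rw [← percExp_const p E 1]
  exact percExp_mono h0 h1 fun s _ => by split_ifs <;> norm_num

lemma percPr_mono (h0 : 0 ≤ p) (h1 : p ≤ 1) {P Q : Finset α → Prop}
    (h : ∀ s ⊆ E, P s → Q s) : percPr p E P ≤ percPr p E Q :=
  percExp_mono h0 h1 fun s hs => by
    have := h s hs
    split_ifs <;> first | tauto | norm_num

lemma percPr_congr (p : ℝ) {P Q : Finset α → Prop} (h : ∀ s ⊆ E, P s ↔ Q s) :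
    percPr p E P = percPr p E Q :=
  percExp_congr fun s hs => by simp only [h s hs]

lemma percPr_not (p : ℝ) (E : Finset α) (P : Finset α → Prop) :
    percPr p E (fun s => ¬ P s) = 1 - percPr p E P := by
  rw [← percExp_const p E 1, percPr, percPr, ← percExp_sub]
  exact percExp_congr fun s _ => by split_ifs <;> norm_num

lemma percPr_exists_le {ι : Type*} (h0 : 0 ≤ p) (h1 : p ≤ 1) (E : Finset α) (T : Finset ι)
    (P : ι → Finset α → Prop) :
    percPr p E (fun s => ∃ i ∈ T, P i s) ≤ ∑ i ∈ T, percPr p E (P i) := by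
  simp only [percPr]
  rw [← percExp_sum]
  refine percExp_mono h0 h1 fun s _ => ?_
  have hnonneg : ∀ i ∈ T, (0 : ℝ) ≤ if P i s then 1 else 0 := fun i _ => by
    split_ifs <;> norm_num
  split_ifs with h
  · obtain ⟨i, hi, hP⟩ := h
    exact (if_pos hP).symm.le.trans
      (Finset.single_le_sum (f := fun i => if P i s then (1 : ℝ) else 0) hnonneg hi)
  · exact Finset.sum_nonneg hnonneg

lemma percExp_card_filter {ι : Type*} (p : ℝ) (E : Finset α) (T : Finset ι)
    (P : ι → Finset α → Prop) [∀ s, DecidablePred fun i => P i s] :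
    percExp p E (fun s => ((T.filter fun i => P i s).card : ℝ)) = ∑ i ∈ T, percPr p E (P i) := by
  simp only [percPr, ← percExp_sum]
  refine percExp_congr fun s _ => ?_
  rw [Finset.card_filter, Nat.cast_sum]
  refine Finset.sum_congr rfl fun i _ => ?_
  split_ifs <;> simp

lemma percPr_inter_eq [DecidableEq α] (p : ℝ) (hF : F ⊆ E) (hI : I ⊆ F) :
    percPr p E (fun s => s ∩ F = I) = p ^ I.card * (1 - p) ^ (F.card - I.card) := by
  have hfactor : ∀ e ∈ E, p * (if e ∉ F \ I then 1 else 0) + (1 - p) * (if e ∉ I then 1 else 0)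
      = (if e ∈ I then p else 1) * if e ∈ F \ I then 1 - p else 1 := by
    intro e _
    by_cases h1 : e ∈ I <;> by_cases h2 : e ∈ F <;> simp [h1, h2]
  have hiff : ∀ s ⊆ E, s ∩ F = I ↔ (∀ e ∈ s, e ∉ F \ I) ∧ ∀ e ∈ E \ s, e ∉ I := by
    intro s hs
    refine ⟨?_, fun ⟨hs₁, hs₂⟩ => ?_⟩
    · rintro rfl
      simp only [Finset.sdiff_inter_self_right, Finset.mem_sdiff, Finset.mem_inter]
      tauto
    ext e
    have := @hI e
    have := @hF e
    have := @hs e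
    have := hs₁ e
    have := hs₂ e
    simp only [Finset.mem_inter, Finset.mem_sdiff] at *
    tauto
  calc percPr p E (fun s => s ∩ F = I)
      = percExp p E fun s => (∏ e ∈ s, if e ∉ F \ I then 1 else 0) *
          ∏ e ∈ E \ s, if e ∉ I then 1 else 0 := percExp_congr fun s hs => by
        simp only [hiff s hs, Finset.prod_ite_zero, Finset.prod_const_one]
        split_ifs <;> first | tauto | norm_num
    _ = p ^ I.card * (1 - p) ^ (F.card - I.card) := by
        rw [percExp_prod, Finset.prod_congr rfl hfactor, Finset.prod_mul_distrib,
          Finset.prod_ite_mem, Finset.prod_ite_mem, Finset.prod_const, Finset.prod_const,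
          Finset.inter_eq_right.2 (hI.trans hF),
          Finset.inter_eq_right.2 (Finset.sdiff_subset.trans hF), Finset.card_sdiff_of_subset hI]

lemma percPr_subset (p : ℝ) (hF : F ⊆ E) : percPr p E (fun s => F ⊆ s) = p ^ F.card := by
  simpa only [Finset.inter_eq_right, Nat.sub_self, pow_zero, mul_one]
    using percPr_inter_eq p hF (subset_refl F)

lemma percExp_union [DecidableEq α] {p₁ p₂ : ℝ} (hp : 1 - p = (1 - p₁) * (1 - p₂)) (E : Finset α)
    (f : Finset α → ℝ) :
    percExp p E f = percExp p₁ E (fun s => percExp p₂ E (fun t => f (s ∪ t))) := by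
  obtain rfl : p = 1 - (1 - p₁) * (1 - p₂) := by linarith
  induction E using Finset.induction_on generalizing f with
  | empty => simp [percExp_empty]
  | insert e E he ih =>
    rw [percExp_insert _ he, percExp_insert p₁ he, ih, ih]
    simp only [percExp_insert p₂ he, Finset.union_insert, Finset.insert_union,
      Finset.insert_idem, percExp_add, percExp_const_mul]
    ring

lemma percPr_le_percPr_not_add [DecidableEq α] {p₁ p₂ a : ℝ}
    (hp : 1 - p = (1 - p₁) * (1 - p₂)) (h0 : 0 ≤ p₁) (h1 : p₁ ≤ 1) (h0' : 0 ≤ p₂) (h1' : p₂ ≤ 1)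
    {P Q : Finset α → Prop} (ha : 0 ≤ a)
    (h : ∀ s ⊆ E, Q s → percPr p₂ E (fun t => P (s ∪ t)) ≤ a) :
    percPr p E P ≤ percPr p₁ E (fun s => ¬ Q s) + a := by
  rw [percPr, percExp_union hp, percPr, ← percExp_const p₁ E a, ← percExp_add]
  refine percExp_mono h0 h1 fun s hs => ?_
  by_cases hQ : Q s
  · rw [if_neg (not_not.2 hQ), zero_add]
    exact h s hs hQ
  · rw [if_pos hQ]
    exact (percPr_le_one h0' h1' E _).trans (by linarith)

lemma exp_le_one_add_add_sq {z K : ℝ} (hz : |z| ≤ K) (hK : K ≤ 1) :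
    Real.exp z ≤ 1 + z + K ^ 2 := by
  have hsq : z ^ 2 ≤ K ^ 2 := by
    rw [← sq_abs z]
    gcongr
  linarith [(abs_le.1 (Real.abs_exp_sub_one_sub_id_le (hz.trans hK))).2]

lemma exp_two_point_le {x y K : ℝ} (h0 : 0 ≤ p) (h1 : p ≤ 1) (hxy : |x - y| ≤ K) :
    (1 - p) * Real.exp x + p * Real.exp y ≤ Real.exp ((1 - p) * x + p * y + K ^ 2) := by
  have hp : 0 ≤ 1 - p := by linarith
  set m := (1 - p) * x + p * y with hm
  have hx : |x - m| ≤ K := by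
    rw [show x - m = p * (x - y) by rw [hm]; ring, abs_mul, abs_of_nonneg h0]
    nlinarith [abs_nonneg (x - y)]
  have hy : |y - m| ≤ K := by
    rw [show y - m = -((1 - p) * (x - y)) by rw [hm]; ring, abs_neg, abs_mul, abs_of_nonneg hp]
    nlinarith [abs_nonneg (x - y)]
  have hcentred : (1 - p) * Real.exp (x - m) + p * Real.exp (y - m) ≤ Real.exp (K ^ 2) := by
    rcases le_total K 1 with hK | hK
    · calc _ ≤ (1 - p) * (1 + (x - m) + K ^ 2) + p * (1 + (y - m) + K ^ 2) := by
            gcongr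
            exacts [exp_le_one_add_add_sq hx hK, exp_le_one_add_add_sq hy hK]
        _ = K ^ 2 + 1 := by rw [hm]; ring
        _ ≤ _ := Real.add_one_le_exp _
    · calc _ ≤ (1 - p) * Real.exp (K ^ 2) + p * Real.exp (K ^ 2) := by
            have hKsq : K ≤ K ^ 2 := by nlinarith
            gcongr
            exacts [(le_abs_self _).trans (hx.trans hKsq), (le_abs_self _).trans (hy.trans hKsq)]
        _ = Real.exp (K ^ 2) := by ring
  calc (1 - p) * Real.exp x + p * Real.exp y
      = Real.exp m * ((1 - p) * Real.exp (x - m) + p * Real.exp (y - m)) := by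
        rw [mul_add, mul_left_comm, mul_left_comm _ p, ← Real.exp_add, ← Real.exp_add,
          add_sub_cancel, add_sub_cancel]
    _ ≤ Real.exp m * Real.exp (K ^ 2) := by gcongr
    _ = _ := (Real.exp_add _ _).symm

lemma abs_percExp_sub_percExp_le (h0 : 0 ≤ p) (h1 : p ≤ 1) {f g : Finset α → ℝ} {K : ℝ}
    (h : ∀ s, |f s - g s| ≤ K) : |percExp p E f - percExp p E g| ≤ K := by
  rw [← percExp_sub, abs_le]
  constructor
  · rw [← percExp_const p E (-K)]
    exact percExp_mono h0 h1 fun s _ => (abs_le.1 (h s)).1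
  · rw [← percExp_const p E K]
    exact percExp_mono h0 h1 fun s _ => (abs_le.1 (h s)).2

lemma percExp_exp_le [DecidableEq α] (h0 : 0 ≤ p) (h1 : p ≤ 1) (E : Finset α) (f : Finset α → ℝ)
    {K : ℝ} (hf : ∀ e s, |f (insert e s) - f s| ≤ K) :
    percExp p E (fun s => Real.exp (f s)) ≤ Real.exp (percExp p E f + E.card * K ^ 2) := by
  induction E using Finset.induction_on generalizing f with
  | empty => simp [percExp_empty]
  | insert e E he ih =>
    rw [percExp_insert p he, percExp_insert p he, Finset.card_insert_of_notMem he]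
    have ih_absent := ih f hf
    have ih_present := ih (fun s => f (insert e s)) fun e' s => by
      rw [Finset.insert_comm]
      exact hf _ _
    set A := percExp p E f
    set B := percExp p E (fun s => f (insert e s))
    have hAB : |A - B| ≤ K := abs_percExp_sub_percExp_le h0 h1 fun s => by
      rw [abs_sub_comm]
      exact hf e s
    calc _ ≤ (1 - p) * Real.exp (A + E.card * K ^ 2) + p * Real.exp (B + E.card * K ^ 2) := by
          gcongr
      _ = ((1 - p) * Real.exp A + p * Real.exp B) * Real.exp (E.card * K ^ 2) := by
          rw [Real.exp_add, Real.exp_add]; ring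
      _ ≤ Real.exp ((1 - p) * A + p * B + K ^ 2) * Real.exp (E.card * K ^ 2) := by
          gcongr
          exact exp_two_point_le h0 h1 hAB
      _ = _ := by rw [← Real.exp_add]; push_cast; ring_nf

-- The Chernoff bound with the tilt `l = a / (2 N K²)`, which minimises `-l a + N (l K)²`.
lemma percPr_le_percExp_sub_le [DecidableEq α] (h0 : 0 ≤ p) (h1 : p ≤ 1) {f : Finset α → ℝ}
    {K N a : ℝ} (hf : ∀ e s, |f (insert e s) - f s| ≤ K) (hE : E.card ≤ N) (ha : 0 ≤ a) :
    percPr p E (fun s => f s ≤ percExp p E f - a) ≤ Real.exp (-(a ^ 2 / (4 * N * K ^ 2))) := by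
  have hN : 0 ≤ N := (Nat.cast_nonneg _).trans hE
  set l := a / (2 * N * K ^ 2) with hl
  have hl0 : 0 ≤ l := by positivity
  have hmarkov : percPr p E (fun s => f s ≤ percExp p E f - a)
      ≤ percExp p E fun s => Real.exp (l * (percExp p E f - a - f s)) :=
    percExp_mono h0 h1 fun s _ => by
      split_ifs with h
      · exact Real.one_le_exp (mul_nonneg hl0 (sub_nonneg.2 h))
      · positivity
  have hmean : percExp p E (fun s => l * (percExp p E f - a - f s)) = -(l * a) := by
    rw [percExp_const_mul, percExp_sub, percExp_const]
    ring
  have hexponent : -(l * a) + N * (l * K) ^ 2 = -(a ^ 2 / (4 * N * K ^ 2)) := by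
    rcases eq_or_ne N 0 with rfl | hN0
    · simp [hl]
    rcases eq_or_ne K 0 with rfl | hK0
    · simp [hl]
    rw [hl]
    field_simp
    ring
  calc _ ≤ _ := hmarkov
    _ ≤ Real.exp (-(l * a) + E.card * (l * K) ^ 2) := by
        rw [← hmean]
        refine percExp_exp_le h0 h1 E _ fun e s => ?_
        rw [← mul_sub, sub_sub_sub_cancel_left, abs_mul, abs_of_nonneg hl0, abs_sub_comm]
        gcongr
        exact hf e s
    _ ≤ _ := by
        rw [← hexponent]
        gcongr

end RandomSubset

section Cluster

variable {W : Type*} {s t : Finset (Sym2 W)} {v x y : W}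

/-- The spanning subgraph with edge set `s`; it is the percolated graph when `s` is the random set
of retained edges. -/
abbrev openGraph (s : Finset (Sym2 W)) : SimpleGraph W :=
  SimpleGraph.fromEdgeSet (↑s : Set (Sym2 W))

lemma openGraph_mono (h : s ⊆ t) : openGraph s ≤ openGraph t :=
  SimpleGraph.fromEdgeSet_mono (by exact_mod_cast h)

lemma mem_of_reachable {H : SimpleGraph W} {C : Set W}
    (hC : ∀ x y, H.Adj x y → x ∈ C → y ∈ C) (h : H.Reachable x y) (hx : x ∈ C) : y ∈ C := by
  obtain ⟨w⟩ := h
  induction w with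
  | nil => exact hx
  | cons hadj _ ih => exact ih (hC _ _ hadj hx)

lemma isAcyclic_induce_of_card_lt_girth {G : SimpleGraph W} {S : Finset W}
    (hS : S.card < G.girth) : (G.induce (↑S : Set W)).IsAcyclic := by
  intro a w hw
  have hgirth := SimpleGraph.girth_le_length (hw.map
    (f := (SimpleGraph.Embedding.induce (G := G) (↑S : Set W)).toHom) Subtype.val_injective)
  have hlength : w.length ≤ S.card := by
    simpa using hw.support_nodup.length_le_card
  rw [SimpleGraph.Walk.length_map] at hgirth
  omega

variable [Fintype W]

/-- The vertices that can be reached from `v` along edges in `s`. -/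
def cluster (s : Finset (Sym2 W)) (v : W) : Finset W :=
  Finset.univ.filter fun x => (openGraph s).Reachable v x

lemma mem_cluster : x ∈ cluster s v ↔ (openGraph s).Reachable v x := by
  simp [cluster]

lemma self_mem_cluster (s : Finset (Sym2 W)) (v : W) : v ∈ cluster s v :=
  mem_cluster.2 (SimpleGraph.Reachable.refl _)

lemma cluster_eq_of_mem (h : x ∈ cluster s v) : cluster s x = cluster s v := by
  ext y
  rw [mem_cluster] at h
  rw [mem_cluster, mem_cluster]
  exact ⟨h.trans, h.symm.trans⟩

lemma mem_cluster_comm : x ∈ cluster s v ↔ v ∈ cluster s x := by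
  rw [mem_cluster, mem_cluster, SimpleGraph.reachable_comm]

lemma mem_cluster_of_adj (hx : x ∈ cluster s v) (hxy : (openGraph s).Adj x y) :
    y ∈ cluster s v :=
  mem_cluster.2 ((mem_cluster.1 hx).trans hxy.reachable)

lemma cluster_mono (h : s ⊆ t) (v : W) : cluster s v ⊆ cluster t v := fun _ hx =>
  mem_cluster.2 ((mem_cluster.1 hx).mono (openGraph_mono h))

lemma cluster_subset_of_adj_closed {C : Finset W}
    (hC : ∀ x y, (openGraph s).Adj x y → x ∈ C → y ∈ C) (hv : v ∈ C) : cluster s v ⊆ C :=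
  fun _ hx => mem_of_reachable (C := ↑C) hC (mem_cluster.1 hx) hv

lemma induce_cluster_connected (s : Finset (Sym2 W)) (v : W) :
    ((openGraph s).induce (↑(cluster s v) : Set W)).Connected := by
  have hsupp : (↑(cluster s v) : Set W) = ((openGraph s).connectedComponentMk v).supp := by
    ext x
    simp [mem_cluster, SimpleGraph.reachable_comm]
  rw [hsupp]
  exact SimpleGraph.ConnectedComponent.connected_toSimpleGraph _

end Cluster

section ClusterEdges

variable {W : Type} [Fintype W] {G : SimpleGraph W} {s s₀ : Finset (Sym2 W)} {v x y : W}
  {S : Finset W}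

lemma mk_mem_edgeFinset' : s(x, y) ∈ edgeFinset' G ↔ G.Adj x y := by
  simp [edgeFinset']

lemma openGraph_le (hs : s ⊆ edgeFinset' G) : openGraph s ≤ G := fun _ _ h =>
  mk_mem_edgeFinset'.1 (hs (by exact_mod_cast ((SimpleGraph.fromEdgeSet_adj _).1 h).1))

/-- The edges of `G` with at least one endpoint in `S`. -/
def edgesTouching (G : SimpleGraph W) (S : Finset W) : Finset (Sym2 W) :=
  (edgeFinset' G).filter fun e => ∃ x ∈ e, x ∈ S

/-- The edges of `G` with both endpoints in `S`. -/
def edgesInside (G : SimpleGraph W) (S : Finset W) : Finset (Sym2 W) :=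
  (edgeFinset' G).filter fun e => ∀ x ∈ e, x ∈ S

lemma mk_mem_edgesTouching : s(x, y) ∈ edgesTouching G S ↔ G.Adj x y ∧ (x ∈ S ∨ y ∈ S) := by
  simp [edgesTouching, mk_mem_edgeFinset']

lemma mk_mem_edgesInside : s(x, y) ∈ edgesInside G S ↔ G.Adj x y ∧ x ∈ S ∧ y ∈ S := by
  simp [edgesInside, mk_mem_edgeFinset']

lemma edgesTouching_subset (G : SimpleGraph W) (S : Finset W) :
    edgesTouching G S ⊆ edgeFinset' G :=
  Finset.filter_subset _ _

lemma edgesInside_subset_edgesTouching (G : SimpleGraph W) (S : Finset W) :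
    edgesInside G S ⊆ edgesTouching G S := by
  intro e he
  induction e with
  | h x y =>
    rw [mk_mem_edgesInside] at he
    exact mk_mem_edgesTouching.2 ⟨he.1, Or.inl he.2.1⟩

lemma cluster_eq_of_inter_edgesTouching_eq (hs : s ⊆ edgeFinset' G) (hs₀ : s₀ ⊆ edgeFinset' G)
    (h : s ∩ edgesTouching G (cluster s₀ v) = s₀ ∩ edgesTouching G (cluster s₀ v)) :
    cluster s v = cluster s₀ v := by
  have hadj : ∀ x y, x ∈ cluster s₀ v → ((openGraph s).Adj x y ↔ (openGraph s₀).Adj x y) := by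
    intro x y hx
    have hmem := Finset.ext_iff.1 h s(x, y)
    simp only [Finset.mem_inter, mk_mem_edgesTouching, hx, true_or, and_true,
      ← mk_mem_edgeFinset'] at hmem
    have := @hs s(x, y)
    have := @hs₀ s(x, y)
    simp only [SimpleGraph.fromEdgeSet_adj, Finset.mem_coe]
    tauto
  refine subset_antisymm (cluster_subset_of_adj_closed (fun x y hxy hx =>
    mem_cluster_of_adj hx ((hadj x y hx).1 hxy)) (self_mem_cluster _ _)) ?_
  refine (cluster_subset_of_adj_closed (C := cluster s₀ v ∩ cluster s v) (fun x y hxy hx => ?_)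
    (by simp [self_mem_cluster])).trans Finset.inter_subset_right
  obtain ⟨hx₀, hx⟩ := Finset.mem_inter.1 hx
  exact Finset.mem_inter.2
    ⟨mem_cluster_of_adj hx₀ hxy, mem_cluster_of_adj hx ((hadj x y hx₀).2 hxy)⟩

-- An edge of `G` that is missing from `s` would close a cycle with a path inside the cluster.
lemma mk_mem_of_mem_cluster (hs : s ⊆ edgeFinset' G) (hg : (cluster s v).card < G.girth)
    (hxy : G.Adj x y) (hx : x ∈ cluster s v) (hy : y ∈ cluster s v) : s(x, y) ∈ s := by
  by_contra hclosed
  obtain ⟨w, hw⟩ := ((mem_cluster.1 hy).symm.trans (mem_cluster.1 hx)).exists_isPath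
  have hle := openGraph_le hs
  have hnotMem : s(x, y) ∉ (w.mapLe hle).edges := by
    rw [SimpleGraph.Walk.edges_mapLe_eq_edges]
    intro h
    have hopen := w.edges_subset_edgeSet h
    rw [SimpleGraph.edgeSet_fromEdgeSet] at hopen
    exact hclosed hopen.1
  have hgirth := SimpleGraph.girth_le_length
    (SimpleGraph.Path.cons_isCycle (⟨w.mapLe hle, hw.mapLe hle⟩ : G.Path y x) hxy hnotMem)
  simp only [SimpleGraph.Walk.length_cons, SimpleGraph.Walk.length_map,
    SimpleGraph.Walk.mapLe] at hgirth
  have hsupport : w.support.toFinset ⊆ cluster s v := fun z hz =>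
    mem_cluster.2 ((mem_cluster.1 hy).trans (w.takeUntil z (List.mem_toFinset.1 hz)).reachable)
  have hcard := Finset.card_le_card hsupport
  rw [List.toFinset_card_of_nodup hw.support_nodup, SimpleGraph.Walk.length_support] at hcard
  omega

lemma inter_edgesTouching_cluster (hs : s ⊆ edgeFinset' G) (hg : (cluster s v).card < G.girth) :
    s ∩ edgesTouching G (cluster s v) = edgesInside G (cluster s v) := by
  ext e
  induction e with
  | h x y =>
    rw [Finset.mem_inter, mk_mem_edgesTouching, mk_mem_edgesInside]
    constructor
    · rintro ⟨hopen, hxy, hx | hy⟩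
      all_goals have hadj : (openGraph s).Adj x y :=
        (SimpleGraph.fromEdgeSet_adj _).2 ⟨hopen, hxy.ne⟩
      · exact ⟨hxy, hx, mem_cluster_of_adj hx hadj⟩
      · exact ⟨hxy, mem_cluster_of_adj hy hadj.symm, hy⟩
    · rintro ⟨hxy, hx, hy⟩
      exact ⟨mk_mem_of_mem_cluster hs hg hxy hx hy, hxy, Or.inl hx⟩

lemma cluster_eq_iff_inter_edgesTouching_eq (hs : s ⊆ edgeFinset' G) (hs₀ : s₀ ⊆ edgeFinset' G)
    (hg : (cluster s₀ v).card < G.girth) :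
    cluster s v = cluster s₀ v ↔
      s ∩ edgesTouching G (cluster s₀ v) = edgesInside G (cluster s₀ v) := by
  constructor
  · intro h
    rw [← h] at hg ⊢
    exact inter_edgesTouching_cluster hs hg
  · intro h
    exact cluster_eq_of_inter_edgesTouching_eq hs hs₀
      (h.trans (inter_edgesTouching_cluster hs₀ hg).symm)

lemma card_edgesInside_add_one (hS : (G.induce (↑S : Set W)).Connected)
    (hg : S.card < G.girth) : (edgesInside G S).card + 1 = S.card := by
  have hinside : edgesInside G S = G.edgeFinset ∩ S.sym2 := by
    ext e
    simp [edgesInside, edgeFinset', Finset.mem_sym2_iff]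
  have hmap := congrArg Finset.card
    (SimpleGraph.map_edgeFinset_induce (G := G) (s := (↑S : Set W)))
  rw [Finset.card_map, Finset.toFinset_coe] at hmap
  have htree : (G.induce (↑S : Set W)).IsTree := ⟨hS, isAcyclic_induce_of_card_lt_girth hg⟩
  have hcard := htree.card_edgeFinset
  rw [Fintype.card_of_finset' S fun _ => Iff.rfl] at hcard
  rw [hinside, ← hmap]
  convert hcard

lemma card_filter_mem_edge {e : Sym2 W} (he : e ∈ edgeFinset' G) (S : Finset W) :
    (S.filter (· ∈ e)).card
      = (if e ∈ edgesTouching G S then 1 else 0) + if e ∈ edgesInside G S then 1 else 0 := by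
  induction e with
  | h x y =>
    have hxy := mk_mem_edgeFinset'.1 he
    have hfilter : S.filter (· ∈ s(x, y)) = ({x, y} : Finset W).filter (· ∈ S) := by
      ext z
      simp [and_comm]
    rw [hfilter, Finset.card_filter, Finset.sum_pair hxy.ne]
    simp only [mk_mem_edgesTouching, mk_mem_edgesInside, hxy, true_and]
    by_cases hx : x ∈ S <;> by_cases hy : y ∈ S <;> simp [hx, hy]

lemma card_filter_mem_edgeFinset' (G : SimpleGraph W) (x : W) :
    ((edgeFinset' G).filter (x ∈ ·)).card = (G.neighborSet x).ncard := by
  rw [Set.ncard_eq_toFinset_card', ← SimpleGraph.neighborFinset, G.card_neighborFinset_eq_degree,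
    ← G.card_incidenceFinset_eq_degree]
  congr 1
  ext e
  simp [edgeFinset', SimpleGraph.incidenceSet]

-- Counts the pairs of a vertex of `S` and an edge at it.
lemma card_edgesTouching_add_card_edgesInside {d : ℕ}
    (hdeg : ∀ x, (G.neighborSet x).ncard = d) (S : Finset W) :
    (edgesTouching G S).card + (edgesInside G S).card = d * S.card := by
  have hinside := (edgesInside_subset_edgesTouching G S).trans (edgesTouching_subset G S)
  calc _ = ∑ e ∈ edgeFinset' G, (S.filter (· ∈ e)).card := by
        rw [Finset.sum_congr rfl fun e he => card_filter_mem_edge he S, Finset.sum_add_distrib,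
          ← Finset.card_filter, ← Finset.card_filter, Finset.filter_mem_eq_inter,
          Finset.filter_mem_eq_inter, Finset.inter_eq_right.2 (edgesTouching_subset G S),
          Finset.inter_eq_right.2 hinside]
    _ = ∑ x ∈ S, ((edgeFinset' G).filter (x ∈ ·)).card :=
        (Finset.sum_card_bipartiteAbove_eq_sum_card_bipartiteBelow (fun x e => x ∈ e)).symm
    _ = d * S.card := by
        simp [card_filter_mem_edgeFinset', hdeg, mul_comm]

lemma card_edgeFinset'_le {d : ℕ} (hdeg : ∀ x, (G.neighborSet x).ncard = d) :
    (edgeFinset' G).card ≤ d * Fintype.card W := by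
  have h := card_edgesTouching_add_card_edgesInside hdeg Finset.univ
  have hinside : edgesInside G Finset.univ = edgeFinset' G := by
    simp [edgesInside]
  rw [hinside, Finset.card_univ] at h
  omega

end ClusterEdges

section LargeVerts

variable {W : Type*} [Fintype W] {k : ℕ}

/-- The vertices lying in clusters with at least `k` vertices. -/
def largeVerts (k : ℕ) (s : Finset (Sym2 W)) : Finset W :=
  Finset.univ.filter fun v => k ≤ (cluster s v).card

lemma mem_largeVerts {s : Finset (Sym2 W)} {v : W} :
    v ∈ largeVerts k s ↔ k ≤ (cluster s v).card := by
  simp [largeVerts]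

lemma largeVerts_mono {s t : Finset (Sym2 W)} (h : s ⊆ t) : largeVerts k s ⊆ largeVerts k t :=
  fun v hv => mem_largeVerts.2
    ((mem_largeVerts.1 hv).trans (Finset.card_le_card (cluster_mono h v)))

lemma cluster_insert_subset {s : Finset (Sym2 W)} {x y v : W} (hx : v ∉ cluster s x)
    (hy : v ∉ cluster s y) : cluster (insert s(x, y) s) v ⊆ cluster s v := by
  refine cluster_subset_of_adj_closed (fun a b hab ha => ?_) (self_mem_cluster _ _)
  obtain ⟨hmem, hne⟩ := (SimpleGraph.fromEdgeSet_adj _).1 hab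
  simp only [Finset.coe_insert, Set.mem_insert_iff, Sym2.eq_iff] at hmem
  rcases hmem with (⟨rfl, rfl⟩ | ⟨rfl, rfl⟩) | hmem
  · exact absurd (mem_cluster_comm.1 ha) hx
  · exact absurd (mem_cluster_comm.1 ha) hy
  · exact mem_cluster_of_adj ha ((SimpleGraph.fromEdgeSet_adj _).2 ⟨hmem, hne⟩)

lemma card_cluster_sdiff_largeVerts_le (k : ℕ) (s : Finset (Sym2 W)) (x : W) :
    (cluster s x \ largeVerts k s).card ≤ k := by
  rcases (cluster s x \ largeVerts k s).eq_empty_or_nonempty with h | ⟨z, hz⟩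
  · simp [h]
  · rw [Finset.mem_sdiff, mem_largeVerts, not_le] at hz
    rw [← cluster_eq_of_mem hz.1]
    exact (Finset.card_le_card Finset.sdiff_subset).trans hz.2.le

lemma largeVerts_insert_subset (k : ℕ) (s : Finset (Sym2 W)) (x y : W) :
    largeVerts k (insert s(x, y) s)
      ⊆ largeVerts k s ∪ ((cluster s x \ largeVerts k s) ∪ (cluster s y \ largeVerts k s)) := by
  intro v hv
  by_cases hx : v ∈ cluster s x
  · simp only [Finset.mem_union, Finset.mem_sdiff]
    tauto
  by_cases hy : v ∈ cluster s y
  · simp only [Finset.mem_union, Finset.mem_sdiff]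
    tauto
  exact Finset.mem_union_left _ (mem_largeVerts.2 ((mem_largeVerts.1 hv).trans
    (Finset.card_le_card (cluster_insert_subset hx hy))))

lemma abs_card_largeVerts_insert_sub_le (k : ℕ) (e : Sym2 W) (s : Finset (Sym2 W)) :
    |((largeVerts k (insert e s)).card : ℝ) - (largeVerts k s).card| ≤ 2 * k := by
  induction e with
  | h x y =>
    have hlower : (largeVerts k s).card ≤ (largeVerts k (insert s(x, y) s)).card :=
      Finset.card_le_card (largeVerts_mono (Finset.subset_insert _ _))
    have hupper : (largeVerts k (insert s(x, y) s)).card ≤ (largeVerts k s).card + 2 * k := by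
      have hunion := (Finset.card_le_card (largeVerts_insert_subset k s x y)).trans
        (Finset.card_union_le _ _)
      have hunion' := Finset.card_union_le (cluster s x \ largeVerts k s)
        (cluster s y \ largeVerts k s)
      have hx := card_cluster_sdiff_largeVerts_le k s x
      have hy := card_cluster_sdiff_largeVerts_le k s y
      omega
    rify at hlower hupper
    rw [abs_of_nonneg (by linarith)]
    linarith

end LargeVerts

section LargeClusters

variable {W : Type} [Fintype W] {G : SimpleGraph W} {d k : ℕ} {p : ℝ}

/-- The critical probability for bond percolation on the infinite `d`-regular tree. -/
def critProb (d : ℕ) : ℝ := 1 / ((d : ℝ) - 1)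

/-- A lower bound for the probability that a given vertex lies in a large cluster, when a
`d`-regular graph of large girth is percolated with parameter `p`. -/
def largeClusterProb (d : ℕ) (p : ℝ) : ℝ := 1 - (1 - p) / (1 - critProb d)

lemma critProb_pos (hd : 2 ≤ d) : 0 < critProb d := by
  have : (2 : ℝ) ≤ d := by exact_mod_cast hd
  exact one_div_pos.2 (by linarith)

lemma largeClusterProb_pos (hp : critProb d < p) (h1 : p < 1) : 0 < largeClusterProb d p := by
  rw [largeClusterProb, sub_pos, div_lt_one (by linarith)]
  linarith

-- The function `x (1 - x) ^ (d - 2)` is maximal at the critical probability: the factors by which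
-- `x` and `1 - x` change have weighted arithmetic mean `1`.
lemma mul_one_sub_pow_le (hd : 3 ≤ d) (h0 : 0 ≤ p) (h1 : p ≤ 1) :
    p * (1 - p) ^ (d - 2) ≤ critProb d * (1 - critProb d) ^ (d - 2) := by
  have hd' : (3 : ℝ) ≤ d := by exact_mod_cast hd
  have hd₁ : (d : ℝ) - 1 ≠ 0 := by linarith
  have hd₂ : (d : ℝ) - 2 ≠ 0 := by linarith
  have hq : 1 - critProb d = (d - 2) / (d - 1) := by
    rw [critProb]
    field_simp
    ring
  have hq0 : 0 < critProb d := critProb_pos (by omega)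
  have hq1 : 0 < 1 - critProb d := by
    rw [hq]
    exact div_pos (by linarith) (by linarith)
  set a := p / critProb d with ha
  set c := (1 - p) / (1 - critProb d) with hc
  have := div_nonneg h0 hq0.le
  have := div_nonneg (sub_nonneg.2 h1) hq1.le
  have hratio : a * c ^ (d - 2) ≤ 1 := calc
    a * c ^ (d - 2) ≤ Real.exp (a - 1) * Real.exp (c - 1) ^ (d - 2) := by
      gcongr
      · linarith [Real.add_one_le_exp (a - 1)]
      · linarith [Real.add_one_le_exp (c - 1)]
    _ = Real.exp ((a - 1) + (d - 2 : ℕ) * (c - 1)) := by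
      rw [Real.exp_add, Real.exp_nat_mul]
    _ = 1 := by
      rw [Real.exp_eq_one_iff, Nat.cast_sub (by omega), ha, hc, hq, critProb]
      field_simp
      push_cast
      ring
  calc p * (1 - p) ^ (d - 2)
      = a * c ^ (d - 2) * (critProb d * (1 - critProb d) ^ (d - 2)) := by
        rw [ha, hc, div_pow]
        field_simp
    _ ≤ _ := mul_le_of_le_one_left (by positivity) hratio

lemma tree_weight_le (hd : 3 ≤ d) (hp : critProb d < p) (h1 : p < 1) {i j : ℕ}
    (hij : 2 * i + j = d * (i + 1)) :
    p ^ i * (1 - p) ^ j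
      ≤ (1 - p) / (1 - critProb d) * (critProb d ^ i * (1 - critProb d) ^ j) := by
  have hq0 : 0 < critProb d := critProb_pos (by omega)
  have hp' : 0 ≤ 1 - p := by linarith
  have hj : j = (d - 2) * i + (d - 1) + 1 := by
    obtain ⟨r, rfl⟩ : ∃ r, d = r + 2 := ⟨d - 2, by omega⟩
    simp only [Nat.add_sub_cancel, Nat.add_succ_sub_one]
    nlinarith
  have hsplit : ∀ x : ℝ,
      x ^ i * (1 - x) ^ j = (x * (1 - x) ^ (d - 2)) ^ i * (1 - x) ^ (d - 1) * (1 - x) := by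
    intro x
    rw [hj, mul_pow]
    ring
  rw [hsplit, hsplit]
  calc (p * (1 - p) ^ (d - 2)) ^ i * (1 - p) ^ (d - 1) * (1 - p)
      ≤ (critProb d * (1 - critProb d) ^ (d - 2)) ^ i * (1 - critProb d) ^ (d - 1) * (1 - p) := by
        have hbase := mul_one_sub_pow_le hd (hq0.trans hp).le h1.le
        have := mul_nonneg (hq0.trans hp).le (pow_nonneg hp' (d - 2))
        have := this.trans hbase
        gcongr
    _ = _ := by
        have : 1 - critProb d ≠ 0 := by linarith
        field_simp

lemma percPr_cluster_eq (p : ℝ) {v : W} {s₀ : Finset (Sym2 W)} (hs₀ : s₀ ⊆ edgeFinset' G)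
    (hg : (cluster s₀ v).card < G.girth) :
    percPr p (edgeFinset' G) (fun s => cluster s v = cluster s₀ v)
      = p ^ (edgesInside G (cluster s₀ v)).card * (1 - p) ^
        ((edgesTouching G (cluster s₀ v)).card - (edgesInside G (cluster s₀ v)).card) := by
  rw [← percPr_inter_eq p (edgesTouching_subset G _) (edgesInside_subset_edgesTouching G _)]
  exact percPr_congr p fun s hs => cluster_eq_iff_inter_edgesTouching_eq hs hs₀ hg

lemma percPr_cluster_eq_le (hd : 3 ≤ d) (hdeg : ∀ x, (G.neighborSet x).ncard = d)
    (hp : critProb d < p) (h1 : p < 1) (v : W) {S : Finset W} (hS : S.card < G.girth) :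
    percPr p (edgeFinset' G) (fun s => cluster s v = S)
      ≤ (1 - p) / (1 - critProb d) *
        percPr (critProb d) (edgeFinset' G) (fun s => cluster s v = S) := by
  by_cases h : ∃ s₀ ⊆ edgeFinset' G, cluster s₀ v = S
  · obtain ⟨s₀, hs₀, rfl⟩ := h
    have htree : (edgesInside G (cluster s₀ v)).card + 1 = (cluster s₀ v).card :=
      card_edgesInside_add_one ((induce_cluster_connected s₀ v).mono
        (SimpleGraph.comap_monotone _ (openGraph_le hs₀))) hS
    have hcount := card_edgesTouching_add_card_edgesInside hdeg (cluster s₀ v)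
    have hle := Finset.card_le_card (edgesInside_subset_edgesTouching G (cluster s₀ v))
    rw [percPr_cluster_eq p hs₀ hS, percPr_cluster_eq _ hs₀ hS]
    refine tree_weight_le hd hp h1 ?_
    rw [htree, ← hcount]
    omega
  · have hzero : ∀ q : ℝ, percPr q (edgeFinset' G) (fun s => cluster s v = S) = 0 := fun q =>
      (percExp_congr fun s hs => if_neg fun hc => h ⟨s, hs, hc⟩).trans (percExp_const q _ 0)
    rw [hzero, hzero, mul_zero]

lemma percPr_card_cluster_lt_eq_sum (p : ℝ) (E : Finset (Sym2 W)) (v : W) (k : ℕ) :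
    percPr p E (fun s => (cluster s v).card < k)
      = ∑ S ∈ Finset.univ.filter (fun S : Finset W => S.card < k),
        percPr p E (fun s => cluster s v = S) := by
  simp only [percPr]
  rw [← percExp_sum]
  refine percExp_congr fun s _ => ?_
  convert (Finset.sum_ite_eq _ (cluster s v) fun _ => (1 : ℝ)).symm
  simp

lemma percPr_card_cluster_lt_le (hd : 3 ≤ d) (hdeg : ∀ x, (G.neighborSet x).ncard = d)
    (hp : critProb d < p) (h1 : p < 1) (v : W) (hk : k ≤ G.girth) :
    percPr p (edgeFinset' G) (fun s => (cluster s v).card < k)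
      ≤ (1 - p) / (1 - critProb d) := by
  have hq0 : 0 < critProb d := critProb_pos (by omega)
  have hratio : 0 ≤ (1 - p) / (1 - critProb d) := div_nonneg (by linarith) (by linarith)
  calc _ ≤ (1 - p) / (1 - critProb d) *
        percPr (critProb d) (edgeFinset' G) (fun s => (cluster s v).card < k) := by
        rw [percPr_card_cluster_lt_eq_sum, percPr_card_cluster_lt_eq_sum, Finset.mul_sum]
        refine Finset.sum_le_sum fun S hS => percPr_cluster_eq_le hd hdeg hp h1 v ?_
        exact (Finset.mem_filter.1 hS).2.trans_le hk
    _ ≤ _ := mul_le_of_le_one_right hratio (percPr_le_one hq0.le (by linarith) _ _)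

lemma mul_card_le_percExp_card_largeVerts (hd : 3 ≤ d) (hdeg : ∀ x, (G.neighborSet x).ncard = d)
    (hp : critProb d < p) (h1 : p < 1) (hk : k ≤ G.girth) :
    largeClusterProb d p * Fintype.card W
      ≤ percExp p (edgeFinset' G) fun s => ((largeVerts k s).card : ℝ) := by
  have hvertex : ∀ v : W, largeClusterProb d p
      ≤ percPr p (edgeFinset' G) fun s => k ≤ (cluster s v).card := fun v => by
    have hsmall := percPr_card_cluster_lt_le hd hdeg hp h1 v hk
    have hnot := percPr_not p (edgeFinset' G) fun s => (cluster s v).card < k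
    simp only [not_lt] at hnot
    rw [hnot, largeClusterProb]
    linarith
  calc largeClusterProb d p * Fintype.card W = ∑ _v : W, largeClusterProb d p := by
        rw [Finset.sum_const, Finset.card_univ, nsmul_eq_mul, mul_comm]
    _ ≤ ∑ v : W, percPr p (edgeFinset' G) fun s => k ≤ (cluster s v).card :=
        Finset.sum_le_sum fun v _ => hvertex v
    _ = _ := (percExp_card_filter p _ Finset.univ _).symm

lemma percPr_card_largeVerts_lt_le (hd : 3 ≤ d) (hdeg : ∀ x, (G.neighborSet x).ncard = d)
    (hp : critProb d < p) (h1 : p < 1) (hk : k ≤ G.girth) :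
    percPr p (edgeFinset' G)
      (fun s => ((largeVerts k s).card : ℝ) < largeClusterProb d p / 2 * Fintype.card W)
      ≤ Real.exp (-(largeClusterProb d p ^ 2 / (64 * d * k ^ 2)) * Fintype.card W) := by
  have hq0 : 0 < critProb d := critProb_pos (by omega)
  have hη := largeClusterProb_pos hp h1
  have hmean := mul_card_le_percExp_card_largeVerts hd hdeg hp h1 hk
  calc _ ≤ percPr p (edgeFinset' G) fun s => ((largeVerts k s).card : ℝ)
          ≤ percExp p (edgeFinset' G) (fun s => ((largeVerts k s).card : ℝ))
            - largeClusterProb d p / 2 * Fintype.card W :=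
        percPr_mono (by linarith) h1.le fun s _ hs => by linarith
    _ ≤ _ := percPr_le_percExp_sub_le (by linarith) h1.le
        (abs_card_largeVerts_insert_sub_le k)
        (by exact_mod_cast card_edgeFinset'_le hdeg : _ ≤ (d : ℝ) * Fintype.card W)
        (by positivity)
    _ = _ := by
        rcases eq_or_ne (Fintype.card W : ℝ) 0 with hn | hn
        · simp [hn]
        congr 1
        field_simp
        ring

end LargeClusters

section DisjointFamilies

variable {α : Type*} {p : ℝ} {E : Finset α}

lemma abs_card_filter_subset_insert_sub_le [DecidableEq α] {𝒬 : Finset (Finset α)}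
    (h𝒬 : (𝒬 : Set (Finset α)).PairwiseDisjoint id) (e : α) (s : Finset α) :
    |((𝒬.filter (· ⊆ insert e s)).card : ℝ) - (𝒬.filter (· ⊆ s)).card| ≤ 1 := by
  have hlower : (𝒬.filter (· ⊆ s)).card ≤ (𝒬.filter (· ⊆ insert e s)).card :=
    Finset.card_le_card (Finset.monotone_filter_right _ fun Q _ hQ =>
      hQ.trans (Finset.subset_insert _ _))
  have hunion : 𝒬.filter (· ⊆ insert e s) ⊆ 𝒬.filter (· ⊆ s) ∪ 𝒬.filter (e ∈ ·) := by
    intro Q hQ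
    rw [Finset.mem_filter] at hQ
    by_cases he : e ∈ Q
    · exact Finset.mem_union_right _ (Finset.mem_filter.2 ⟨hQ.1, he⟩)
    · exact Finset.mem_union_left _
        (Finset.mem_filter.2 ⟨hQ.1, (Finset.subset_insert_iff_of_notMem he).1 hQ.2⟩)
  have hone : (𝒬.filter (e ∈ ·)).card ≤ 1 := Finset.card_le_one.2 fun Q hQ Q' hQ' => by
    rw [Finset.mem_filter] at hQ hQ'
    exact h𝒬.elim_finset hQ.1 hQ'.1 e hQ.2 hQ'.2
  have hupper : (𝒬.filter (· ⊆ insert e s)).card ≤ (𝒬.filter (· ⊆ s)).card + 1 :=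
    (Finset.card_le_card hunion).trans ((Finset.card_union_le _ _).trans (by gcongr))
  rify at hlower hupper
  rw [abs_of_nonneg (by linarith)]
  linarith

lemma percPr_forall_not_subset_le (h0 : 0 ≤ p) (h1 : p ≤ 1) {𝒬 : Finset (Finset α)}
    (h𝒬 : (𝒬 : Set (Finset α)).PairwiseDisjoint id) (hE : ∀ Q ∈ 𝒬, Q ⊆ E) {L : ℕ}
    (hL : ∀ Q ∈ 𝒬, Q.card ≤ L) {N : ℝ} (hN : E.card ≤ N) :
    percPr p E (fun s => ∀ Q ∈ 𝒬, ¬ Q ⊆ s)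
      ≤ Real.exp (-((p ^ L * 𝒬.card) ^ 2 / (4 * N))) := by
  have hmean : p ^ L * 𝒬.card ≤ percExp p E fun s => ((𝒬.filter (· ⊆ s)).card : ℝ) := by
    rw [percExp_card_filter, mul_comm, ← nsmul_eq_mul]
    refine Finset.card_nsmul_le_sum _ _ _ fun Q hQ => ?_
    rw [percPr_subset p (hE Q hQ)]
    exact pow_le_pow_of_le_one h0 h1 (hL Q hQ)
  have hconc := percPr_le_percExp_sub_le h0 h1 (f := fun s => ((𝒬.filter (· ⊆ s)).card : ℝ))
    (abs_card_filter_subset_insert_sub_le h𝒬) hN (by positivity : 0 ≤ p ^ L * 𝒬.card)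
  rw [one_pow, mul_one] at hconc
  refine (percPr_mono h0 h1 fun s _ hs => ?_).trans hconc
  rw [Finset.filter_false_of_mem hs, Finset.card_empty, Nat.cast_zero]
  linarith

end DisjointFamilies

section Connectors

variable {W : Type*} {Q Q' : Finset (Sym2 W)} {X A B : Finset W} {x : W}

/-- The endpoints of the edges in `Q`. -/
def endpoints (Q : Finset (Sym2 W)) : Finset W := Q.biUnion Sym2.toFinset

lemma mem_endpoints : x ∈ endpoints Q ↔ ∃ e ∈ Q, x ∈ e := by
  simp [endpoints]

lemma card_endpoints_le (Q : Finset (Sym2 W)) : (endpoints Q).card ≤ Q.card * 2 :=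
  Finset.card_biUnion_le_card_mul _ _ _ fun e _ => by
    rw [Sym2.card_toFinset]
    split_ifs <;> norm_num

lemma endpoints_union : endpoints (Q ∪ Q') = endpoints Q ∪ endpoints Q' :=
  Finset.union_biUnion

lemma disjoint_of_disjoint_endpoints (h : Disjoint (endpoints Q) (endpoints Q')) :
    Disjoint Q Q' := by
  refine Finset.disjoint_left.2 fun e he he' => ?_
  induction e with
  | h x y =>
    exact Finset.disjoint_left.1 h (mem_endpoints.2 ⟨_, he, Sym2.mem_mk_left x y⟩)
      (mem_endpoints.2 ⟨_, he', Sym2.mem_mk_left x y⟩)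

/-- The edge set `Q` joins `A` to `B` and avoids the vertex set `X`. -/
def IsConnector (Q : Finset (Sym2 W)) (A B X : Finset W) : Prop :=
  Disjoint (endpoints Q) X ∧ ∃ a ∈ A, ∃ b ∈ B, (openGraph Q).Reachable a b

lemma IsConnector.nonempty (hQ : IsConnector Q A B X) (hAB : Disjoint A B) : Q.Nonempty := by
  obtain ⟨-, a, ha, b, hb, hab⟩ := hQ
  rw [Finset.nonempty_iff_ne_empty]
  rintro rfl
  have : a = b := by simpa [openGraph] using hab
  exact Finset.disjoint_left.1 hAB ha (this ▸ hb)

end Connectors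

section Balls

variable {W : Type*} {H : SimpleGraph W} {U S : Finset W}

/-- The external neighbourhood of `S` in `U`. -/
def nbrsIn (H : SimpleGraph W) (U S : Finset W) : Finset W := {y ∈ U \ S | ∃ x ∈ S, H.Adj x y}

lemma mem_nbrsIn {y : W} : y ∈ nbrsIn H U S ↔ (y ∈ U ∧ y ∉ S) ∧ ∃ x ∈ S, H.Adj x y := by
  rw [nbrsIn, Finset.mem_filter, Finset.mem_sdiff]

/-- The ball of a given radius around `S` in the graph induced on `U`. -/
def ballIn (H : SimpleGraph W) (U S : Finset W) : ℕ → Finset W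
  | 0 => S
  | r + 1 => ballIn H U S r ∪ nbrsIn H U (ballIn H U S r)

lemma ballIn_subset (H : SimpleGraph W) (hS : S ⊆ U) (r : ℕ) : ballIn H U S r ⊆ U := by
  induction r with
  | zero => exact hS
  | succ r ih => exact Finset.union_subset ih fun x hx => (mem_nbrsIn.1 hx).1.1

lemma ballIn_mono (H : SimpleGraph W) (U S : Finset W) : Monotone (ballIn H U S) :=
  monotone_nat_of_le_succ fun _ => Finset.subset_union_left

lemma card_ballIn_succ (H : SimpleGraph W) (U S : Finset W) (r : ℕ) :
    (ballIn H U S (r + 1)).card = (ballIn H U S r).card + (nbrsIn H U (ballIn H U S r)).card :=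
  Finset.card_union_of_disjoint <|
    Finset.disjoint_left.2 fun _ hx hx' => (mem_nbrsIn.1 hx').1.2 hx

end Balls

section ConnectorsInExpanders

variable {W : Type} [Fintype W] {G : SimpleGraph W} {X Y A B S : Finset W} {b p θ κ : ℝ}
  {d r : ℕ} {x : W}

/-- The vertices outside `S` with a neighbour in `S`. -/
def outerNbrs (G : SimpleGraph W) (S : Finset W) : Finset W :=
  nbrsIn G Finset.univ S

lemma mem_outerNbrs : x ∈ outerNbrs G S ↔ x ∉ S ∧ ∃ y ∈ S, G.Adj y x := by
  simp [outerNbrs, mem_nbrsIn]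

lemma card_filter_adj_eq (G : SimpleGraph W) (x : W) :
    (Finset.univ.filter (G.Adj x)).card = (G.neighborSet x).ncard := by
  rw [Set.ncard_eq_toFinset_card']
  congr 1
  ext y
  simp

lemma cutCard_le (hdeg : ∀ x, (G.neighborSet x).ncard ≤ d) (S : Finset W) :
    cutCard G S ≤ (outerNbrs G S).card * d := by
  have hcover : (edgeFinset' G).filter (fun e => ∃ x ∈ S, ∃ y, y ∉ S ∧ e = s(x, y))
      ⊆ (outerNbrs G S).biUnion fun y => (Finset.univ.filter (G.Adj y)).image fun x => s(x, y) := by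
    intro e he
    obtain ⟨he, x, hx, y, hy, rfl⟩ := Finset.mem_filter.1 he
    have hadj := mk_mem_edgeFinset'.1 he
    exact Finset.mem_biUnion.2 ⟨y, mem_outerNbrs.2 ⟨hy, x, hx, hadj⟩,
      Finset.mem_image.2 ⟨x, by simpa using hadj.symm, rfl⟩⟩
  exact (Finset.card_le_card hcover).trans (Finset.card_biUnion_le_card_mul _ _ _ fun y _ =>
    Finset.card_image_le.trans ((card_filter_adj_eq G y).trans_le (hdeg y)))

lemma IsExpander.mul_card_le_card_outerNbrs_mul (hG : IsExpander G b d)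
    (hS : (S.card : ℝ) ≤ Fintype.card W / 2) : b * S.card ≤ (outerNbrs G S).card * d :=
  (hG.2 S hS).trans (by exact_mod_cast cutCard_le hG.1 S)

lemma exists_edges_of_mem_ballIn {U : Finset W} (hS : S ⊆ U) (hx : x ∈ ballIn G U S r) :
    ∃ Q ⊆ edgeFinset' G, Q.card ≤ r ∧ endpoints Q ⊆ U ∧ ∃ a ∈ S, (openGraph Q).Reachable a x := by
  induction r generalizing x with
  | zero => exact ⟨∅, by simp, by simp, by simp [endpoints], x, hx, SimpleGraph.Reachable.refl _⟩
  | succ r ih =>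
    rcases Finset.mem_union.1 hx with hx | hx
    · obtain ⟨Q, hQ, hcard, hreach⟩ := ih hx
      exact ⟨Q, hQ, by omega, hreach⟩
    · obtain ⟨⟨hxU, -⟩, y, hy, hyx⟩ := mem_nbrsIn.1 hx
      have hyU := ballIn_subset G hS r hy
      obtain ⟨Q, hQ, hcard, hQU, a, ha, hay⟩ := ih hy
      refine ⟨insert s(y, x) Q, Finset.insert_subset (mk_mem_edgeFinset'.2 hyx) hQ,
        (Finset.card_insert_le _ _).trans (by omega), ?_, a, ha, ?_⟩
      · rw [endpoints, Finset.biUnion_insert, Finset.union_subset_iff]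
        exact ⟨fun z hz => by
          rcases Sym2.mem_iff.1 (Sym2.mem_toFinset.1 hz) with rfl | rfl <;> assumption, hQU⟩
      · have hadj : (openGraph (insert s(y, x) Q)).Adj y x :=
          (SimpleGraph.fromEdgeSet_adj _).2 ⟨by simp, hyx.ne⟩
        exact (hay.mono (openGraph_mono (Finset.subset_insert _ _))).trans hadj.reachable

/-- The ball of radius `r` around `A` in the graph `G` with the vertices in `Y` removed. -/
def avoidBall (G : SimpleGraph W) (Y A : Finset W) (r : ℕ) : Finset W := ballIn G Yᶜ (A \ Y) r

lemma sdiff_subset_compl (A Y : Finset W) : A \ Y ⊆ Yᶜ := fun x hx => by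
  simpa using (Finset.mem_sdiff.1 hx).2

lemma exists_edges_of_mem_avoidBall (hx : x ∈ avoidBall G Y A r) :
    ∃ Q ⊆ edgeFinset' G, Q.card ≤ r ∧ Disjoint (endpoints Q) Y ∧
      ∃ a ∈ A, (openGraph Q).Reachable a x := by
  obtain ⟨Q, hQ, hcard, hQY, a, ha, hax⟩ := exists_edges_of_mem_ballIn (sdiff_subset_compl A Y) hx
  exact ⟨Q, hQ, hcard, Finset.disjoint_left.2 fun z hz => Finset.mem_compl.1 (hQY hz), a,
    (Finset.mem_sdiff.1 ha).1, hax⟩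

lemma card_avoidBall_add_card_outerNbrs_le (G : SimpleGraph W) (Y A : Finset W) (r : ℕ) :
    (avoidBall G Y A r).card + (outerNbrs G (avoidBall G Y A r)).card
      ≤ (avoidBall G Y A (r + 1)).card + Y.card := by
  have hsub : outerNbrs G (avoidBall G Y A r) \ Y ⊆ nbrsIn G Yᶜ (avoidBall G Y A r) :=
    fun x hx => by
      obtain ⟨hx, hxY⟩ := Finset.mem_sdiff.1 hx
      obtain ⟨hxB, hadj⟩ := mem_outerNbrs.1 hx
      exact mem_nbrsIn.2 ⟨⟨Finset.mem_compl.2 hxY, hxB⟩, hadj⟩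
  have hsdiff := (Finset.le_card_sdiff Y _).trans (Finset.card_le_card hsub)
  have hsucc : (avoidBall G Y A (r + 1)).card = _ := card_ballIn_succ G Yᶜ (A \ Y) r
  rw [← avoidBall] at hsucc
  omega

lemma card_le_card_avoidBall (G : SimpleGraph W) (Y A : Finset W) (r : ℕ) :
    A.card ≤ (avoidBall G Y A r).card + Y.card := by
  have hsdiff := Finset.le_card_sdiff Y A
  have hmono : (A \ Y).card ≤ (avoidBall G Y A r).card :=
    Finset.card_le_card (ballIn_mono G Yᶜ (A \ Y) (Nat.zero_le r))
  omega

lemma half_lt_card_avoidBall_or_le (hG : IsExpander G b d) (hb : 0 ≤ b) (hd : 0 < d)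
    (hκb : 4 * d * κ ≤ b * θ) (hκθ : 2 * κ ≤ θ) (hA : θ * Fintype.card W ≤ A.card)
    (hY : Y.card ≤ κ * Fintype.card W) (r : ℕ) :
    (Fintype.card W : ℝ) / 2 < (avoidBall G Y A r).card ∨
      r * κ * Fintype.card W ≤ (avoidBall G Y A r).card := by
  induction r with
  | zero => simp
  | succ r ih =>
    rcases le_or_gt ((avoidBall G Y A r).card : ℝ) (Fintype.card W / 2) with hsmall | hbig
    · right
      have hd' : (0 : ℝ) < d := by exact_mod_cast hd
      have : (0 : ℝ) ≤ Fintype.card W := Nat.cast_nonneg _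
      have hball := card_le_card_avoidBall G Y A r
      have hgrow := card_avoidBall_add_card_outerNbrs_le G Y A r
      rify at hball hgrow
      have hexpand := hG.mul_card_le_card_outerNbrs_mul hsmall
      have hhalf : θ / 2 * Fintype.card W ≤ (avoidBall G Y A r).card := by nlinarith
      have houter : 2 * κ * Fintype.card W ≤ (outerNbrs G (avoidBall G Y A r)).card := by
        refine le_of_mul_le_mul_right ?_ hd'
        calc 2 * κ * Fintype.card W * d = 4 * d * κ * (Fintype.card W / 2) := by ring
          _ ≤ b * θ * (Fintype.card W / 2) := by gcongr
          _ = b * (θ / 2 * Fintype.card W) := by ring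
          _ ≤ b * (avoidBall G Y A r).card := by gcongr
          _ ≤ _ := hexpand
      have hih := ih.resolve_left hsmall.not_gt
      push_cast
      linarith
    · left
      have hmono : (avoidBall G Y A r).card ≤ (avoidBall G Y A (r + 1)).card :=
        Finset.card_le_card (ballIn_mono G Yᶜ (A \ Y) (Nat.le_succ r))
      exact hbig.trans_le (by exact_mod_cast hmono)

lemma exists_isConnector [Nonempty W] (hG : IsExpander G b d) (hb : 0 ≤ b) (hd : 0 < d)
    (hκb : 4 * d * κ ≤ b * θ) (hκθ : 2 * κ ≤ θ) (hr : 1 ≤ r * κ)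
    (hA : θ * Fintype.card W ≤ A.card) (hB : θ * Fintype.card W ≤ B.card)
    (hY : Y.card ≤ κ * Fintype.card W) :
    ∃ Q ⊆ edgeFinset' G, Q.card ≤ 2 * r ∧ IsConnector Q A B Y := by
  have hn : (0 : ℝ) < Fintype.card W := by exact_mod_cast Fintype.card_pos
  have hhalf : ∀ C : Finset W, θ * Fintype.card W ≤ C.card →
      (Fintype.card W : ℝ) / 2 < (avoidBall G Y C r).card := fun C hC => by
    rcases half_lt_card_avoidBall_or_le hG hb hd hκb hκθ hC hY r with h | h
    · exact h
    · nlinarith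
  have hmeet : ¬ Disjoint (avoidBall G Y A r) (avoidBall G Y B r) := fun hdisj => by
    have hunion := Finset.card_le_univ (avoidBall G Y A r ∪ avoidBall G Y B r)
    rw [Finset.card_union_of_disjoint hdisj] at hunion
    rify at hunion
    linarith [hhalf A hA, hhalf B hB]
  obtain ⟨x, hxA, hxB⟩ := Finset.not_disjoint_iff.1 hmeet
  obtain ⟨Q, hQ, hcard, hQY, a, ha, hax⟩ := exists_edges_of_mem_avoidBall hxA
  obtain ⟨Q', hQ', hcard', hQY', b', hb', hbx⟩ := exists_edges_of_mem_avoidBall hxB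
  refine ⟨Q ∪ Q', Finset.union_subset hQ hQ', (Finset.card_union_le _ _).trans (by omega), ?_,
    a, ha, b', hb', ?_⟩
  · rw [endpoints_union]
    exact Finset.disjoint_union_left.2 ⟨hQY, hQY'⟩
  · exact (hax.mono (openGraph_mono Finset.subset_union_left)).trans
      (hbx.mono (openGraph_mono Finset.subset_union_right)).symm

lemma exists_disjoint_isConnectors (hG : IsExpander G b d) (hb : 0 ≤ b) (hd : 0 < d)
    (hκb : 4 * d * κ ≤ b * θ) (hκθ : 2 * κ ≤ θ) (hr : 1 ≤ r * κ) (hAB : Disjoint A B)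
    (hA : θ * Fintype.card W ≤ A.card) (hB : θ * Fintype.card W ≤ B.card) [Nonempty W] {m : ℕ}
    (hX : X.card + 4 * r * m ≤ κ * Fintype.card W) :
    ∃ 𝒬 : Finset (Finset (Sym2 W)), 𝒬.card = m ∧
      (𝒬 : Set (Finset (Sym2 W))).PairwiseDisjoint id ∧
      ∀ Q ∈ 𝒬, Q ⊆ edgeFinset' G ∧ Q.card ≤ 2 * r ∧ IsConnector Q A B X := by
  induction m with
  | zero => exact ⟨∅, by simp, by simp, by simp⟩
  | succ m ih =>
    push_cast at hX
    obtain ⟨𝒬, hm, hdisj, h𝒬⟩ := ih (by nlinarith [(Nat.cast_nonneg r : (0 : ℝ) ≤ r)])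
    have hcard : (X ∪ 𝒬.biUnion endpoints).card ≤ X.card + m * (2 * r * 2) := by
      refine (Finset.card_union_le _ _).trans (Nat.add_le_add_left ?_ _)
      rw [← hm]
      exact Finset.card_biUnion_le_card_mul _ _ _ fun Q hQ =>
        (card_endpoints_le Q).trans (Nat.mul_le_mul_right _ (h𝒬 Q hQ).2.1)
    rify at hcard
    obtain ⟨Q, hQE, hQr, hQ⟩ := exists_isConnector hG hb hd hκb hκθ hr hA hB
      (Y := X ∪ 𝒬.biUnion endpoints) (by nlinarith [(Nat.cast_nonneg r : (0 : ℝ) ≤ r)])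
    obtain ⟨hQX, hQ𝒬⟩ := Finset.disjoint_union_right.1 hQ.1
    have hnew : ∀ Q' ∈ 𝒬, Disjoint Q Q' := fun Q' hQ' =>
      disjoint_of_disjoint_endpoints ((Finset.disjoint_biUnion_right _ _ _).1 hQ𝒬 Q' hQ')
    have hmem : Q ∉ 𝒬 := fun h => (hQ.nonempty hAB).ne_empty (disjoint_self.1 (hnew Q h))
    refine ⟨insert Q 𝒬, by rw [Finset.card_insert_of_notMem hmem, hm], ?_, ?_⟩
    · rw [Finset.coe_insert]
      exact hdisj.insert fun Q' hQ' _ => hnew Q' hQ'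
    · exact Finset.forall_mem_insert .. |>.2 ⟨⟨hQE, hQr, hQX, hQ.2⟩, h𝒬⟩

lemma sq_sub_two_mul_le_sq_floor {u : ℝ} (hu : 0 ≤ u) : u ^ 2 - 2 * u ≤ (⌊u⌋₊ : ℝ) ^ 2 := by
  have hfloor := Nat.sub_one_lt_floor u
  rcases le_total u 1 with h | h <;> nlinarith [(Nat.cast_nonneg ⌊u⌋₊ : (0 : ℝ) ≤ ⌊u⌋₊)]

lemma percPr_not_exists_isConnector_le [Nonempty W] (hG : IsRegularExpander G b d) (hb : 0 ≤ b)
    (hd : 0 < d) (h0 : 0 ≤ p) (h1 : p ≤ 1) (hκ0 : 0 ≤ κ) (hκ1 : κ ≤ 1)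
    (hκb : 4 * d * κ ≤ b * θ) (hκθ : 2 * κ ≤ θ) (hr : 1 ≤ r * κ) (hAB : Disjoint A B)
    (hA : θ * Fintype.card W ≤ A.card) (hB : θ * Fintype.card W ≤ B.card)
    (hX : X.card ≤ κ / 2 * Fintype.card W) :
    percPr p (edgeFinset' G) (fun t => ¬ ∃ Q ⊆ t, IsConnector Q A B X)
      ≤ Real.exp (1 - (p ^ (2 * r) * κ / (16 * r)) ^ 2 / d * Fintype.card W) := by
  have : (0 : ℝ) < Fintype.card W := by exact_mod_cast Fintype.card_pos
  have hd1 : (1 : ℝ) ≤ d := by exact_mod_cast hd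
  have hr1 : (1 : ℝ) ≤ r := by nlinarith [(Nat.cast_nonneg r : (0 : ℝ) ≤ r)]
  set u := κ * Fintype.card W / (8 * r) with hu
  have hu0 : 0 ≤ u := by positivity
  have hum : 4 * r * ⌊u⌋₊ ≤ κ / 2 * Fintype.card W := by
    calc 4 * r * (⌊u⌋₊ : ℝ) ≤ 4 * r * u := by
          gcongr
          exact Nat.floor_le hu0
      _ = κ / 2 * Fintype.card W := by
          rw [hu]
          field_simp
          ring
  obtain ⟨𝒬, hm, hdisj, h𝒬⟩ := exists_disjoint_isConnectors hG.1 hb hd hκb hκθ hr hAB hA hB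
    (m := ⌊u⌋₊) (X := X) (by linarith)
  calc _ ≤ percPr p (edgeFinset' G) fun t => ∀ Q ∈ 𝒬, ¬ Q ⊆ t :=
        percPr_mono h0 h1 fun t _ ht Q hQ hQt => ht ⟨Q, hQt, (h𝒬 Q hQ).2.2⟩
    _ ≤ _ := percPr_forall_not_subset_le h0 h1 hdisj (fun Q hQ => (h𝒬 Q hQ).1)
        (fun Q hQ => (h𝒬 Q hQ).2.1)
        (by exact_mod_cast card_edgeFinset'_le hG.2 : _ ≤ (d : ℝ) * Fintype.card W)
    _ ≤ _ := by
        rw [Real.exp_le_exp, neg_le, neg_sub, hm, mul_pow]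
        have hpow : (p ^ (2 * r)) ^ 2 ≤ 1 := pow_le_one₀ (by positivity) (pow_le_one₀ h0 h1)
        have hsmall : (p ^ (2 * r)) ^ 2 * κ / (16 * r * d) ≤ 1 := by
          rw [div_le_one (by positivity)]
          nlinarith [mul_le_one₀ hpow hκ0 hκ1, mul_le_mul hr1 hd1 zero_le_one (by positivity)]
        calc (p ^ (2 * r) * κ / (16 * r)) ^ 2 / d * Fintype.card W - 1
            ≤ (p ^ (2 * r) * κ / (16 * r)) ^ 2 / d * Fintype.card W
              - (p ^ (2 * r)) ^ 2 * κ / (16 * r * d) := by linarith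
          _ = (p ^ (2 * r)) ^ 2 * (u ^ 2 - 2 * u) / (4 * (d * Fintype.card W)) := by
              rw [hu]
              field_simp
              ring
          _ ≤ _ := by
              gcongr
              exact sq_sub_two_mul_le_sq_floor hu0

lemma exists_percPr_not_exists_isConnector_le (hb : 0 < b) (hd : 0 < d) (hθ0 : 0 < θ)
    (hθ1 : θ ≤ 1) (h0 : 0 < p) (h1 : p ≤ 1) :
    ∃ c > (0 : ℝ), ∃ ε > (0 : ℝ), ∀ (W : Type) [Fintype W] [Nonempty W] (G : SimpleGraph W),
      IsRegularExpander G b d → ∀ X A B : Finset W, Disjoint A B →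
        θ * Fintype.card W ≤ A.card → θ * Fintype.card W ≤ B.card →
        X.card ≤ ε * Fintype.card W →
        percPr p (edgeFinset' G) (fun t => ¬ ∃ Q ⊆ t, IsConnector Q A B X)
          ≤ Real.exp (1 - c * Fintype.card W) := by
  have : (0 : ℝ) < d := by exact_mod_cast hd
  set κ := min (b * θ / (4 * d)) (θ / 2)
  have hκ0 : 0 < κ := lt_min (by positivity) (by positivity)
  have hκb : 4 * d * κ ≤ b * θ := (le_div_iff₀' (by positivity)).1 (min_le_left _ _)
  have hκθ : 2 * κ ≤ θ := (le_div_iff₀' two_pos).1 (min_le_right _ _)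
  obtain ⟨r, hr⟩ := exists_nat_ge (1 / κ)
  have hr0 : (0 : ℝ) < r := (one_div_pos.2 hκ0).trans_le hr
  exact ⟨_, by positivity, κ / 2, by positivity, fun W _ _ G hG X A B hAB hA hB hX =>
    percPr_not_exists_isConnector_le hG hb.le hd h0.le h1 hκ0.le (by linarith) hκb hκθ
      ((div_le_iff₀ hκ0).1 hr) hAB hA hB hX⟩

end ConnectorsInExpanders

section Separations

variable {W : Type*} {H H' : SimpleGraph W} {s t Q : Finset (Sym2 W)} {A B C X : Finset W}
  {v x y : W}

/-- The sets `A`, `B` and the separator `X` partition the vertices of `H`, and no edge of `H` joins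
`A` to `B`. -/
structure IsSeparation (H : SimpleGraph W) (A B X : Finset W) : Prop where
  disjoint : Disjoint A B
  disjoint_left : Disjoint A X
  disjoint_right : Disjoint B X
  mem_or : ∀ v, v ∈ A ∨ v ∈ B ∨ v ∈ X
  not_adj : ∀ x ∈ A, ∀ y ∈ B, ¬ H.Adj x y

lemma IsSeparation.symm (h : IsSeparation H A B X) : IsSeparation H B A X where
  disjoint := h.disjoint.symm
  disjoint_left := h.disjoint_right
  disjoint_right := h.disjoint_left
  mem_or v := by have := h.mem_or v; tauto
  not_adj x hx y hy hxy := h.not_adj y hy x hx hxy.symm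

lemma IsSeparation.anti (h : IsSeparation H A B X) (hle : H' ≤ H) : IsSeparation H' A B X :=
  { h with not_adj := fun x hx y hy hxy => h.not_adj x hx y hy (hle hxy) }

lemma IsSeparation.mem_left (h : IsSeparation H A B X) (hx : x ∈ A) (hxy : H.Adj x y)
    (hy : y ∉ X) : y ∈ A :=
  (h.mem_or y).resolve_right fun hyBX =>
    hyBX.elim (fun hyB => h.not_adj x hx y hyB hxy) hy

lemma IsSeparation.not_isConnector (h : IsSeparation (openGraph s) A B X) (hQ : Q ⊆ s) :
    ¬ IsConnector Q A B X := by
  rintro ⟨hQX, a, ha, b, hb, hab⟩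
  refine Finset.disjoint_left.1 h.disjoint (mem_of_reachable (C := ↑A) ?_ hab ha) hb
  intro x y hxy hx
  refine h.mem_left hx (openGraph_mono hQ hxy) (Finset.disjoint_left.1 hQX ?_)
  exact mem_endpoints.2 ⟨_, by exact_mod_cast ((SimpleGraph.fromEdgeSet_adj _).1 hxy).1,
    Sym2.mem_mk_right x y⟩

/-- The sets in `𝒜` and those in `𝒞 \ 𝒜` cover two disjoint sets with at least `m` vertices each,
and no set of edges in `t` connects one to the other off `X`. -/
def IsBadSplit (X : Finset W) (𝒜 𝒞 : Finset (Finset W)) (m : ℝ) (t : Finset (Sym2 W)) : Prop :=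
  (Disjoint (𝒜.biUnion id) ((𝒞 \ 𝒜).biUnion id) ∧
    m ≤ (𝒜.biUnion id).card ∧ m ≤ ((𝒞 \ 𝒜).biUnion id).card) ∧
  ¬ ∃ Q ⊆ t, IsConnector Q (𝒜.biUnion id) ((𝒞 \ 𝒜).biUnion id) X

lemma percPr_isBadSplit_le {p q m : ℝ} {E : Finset (Sym2 W)} {𝒜 𝒞 : Finset (Finset W)}
    (h0 : 0 ≤ p) (h1 : p ≤ 1) (hq : 0 ≤ q)
    (hconn : ∀ A B : Finset W, Disjoint A B → m ≤ A.card → m ≤ B.card →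
      percPr p E (fun t => ¬ ∃ Q ⊆ t, IsConnector Q A B X) ≤ q) :
    percPr p E (IsBadSplit X 𝒜 𝒞 m) ≤ q := by
  by_cases hlarge : Disjoint (𝒜.biUnion id) ((𝒞 \ 𝒜).biUnion id) ∧
      m ≤ (𝒜.biUnion id).card ∧ m ≤ ((𝒞 \ 𝒜).biUnion id).card
  · exact (percPr_mono h0 h1 fun t _ ht => ht.2).trans
      (hconn _ _ hlarge.1 hlarge.2.1 hlarge.2.2)
  · have hzero : percPr p E (IsBadSplit X 𝒜 𝒞 m) = 0 :=
      (percExp_congr fun t _ => if_neg fun ht => hlarge ht.1).trans (percExp_const p E 0)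
    exact hzero.trans_le hq

/-- The edges of `s` with no endpoint in `X`. -/
def edgesOff (s : Finset (Sym2 W)) (X : Finset W) : Finset (Sym2 W) :=
  s.filter fun e => ∀ x ∈ e, x ∉ X

lemma openGraph_edgesOff_adj :
    (openGraph (edgesOff s X)).Adj x y ↔ (openGraph s).Adj x y ∧ x ∉ X ∧ y ∉ X := by
  simp only [SimpleGraph.fromEdgeSet_adj, edgesOff, Finset.coe_filter, Set.mem_ofPred_eq,
    Sym2.mem_iff, forall_eq_or_imp, forall_eq, Finset.mem_coe]
  tauto

variable [Fintype W] {k : ℕ}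

lemma IsSeparation.cluster_edgesOff_subset (h : IsSeparation (openGraph s) A B X) (hv : v ∈ A) :
    cluster (edgesOff s X) v ⊆ A :=
  cluster_subset_of_adj_closed (fun _ _ hxy hx =>
    h.mem_left hx (openGraph_edgesOff_adj.1 hxy).1 (openGraph_edgesOff_adj.1 hxy).2.2) hv

lemma cluster_edgesOff_disjoint (hv : v ∉ X) : Disjoint (cluster (edgesOff s X) v) X := by
  have hsub : cluster (edgesOff s X) v ⊆ Xᶜ := cluster_subset_of_adj_closed
    (fun _ _ hxy _ => Finset.mem_compl.2 (openGraph_edgesOff_adj.1 hxy).2.2)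
    (Finset.mem_compl.2 hv)
  exact Finset.disjoint_left.2 fun x hx => Finset.mem_compl.1 (hsub hx)

/-- The clusters with at least `k` vertices that remain after deleting the vertices in `X`. -/
def chunks (s : Finset (Sym2 W)) (X : Finset W) (k : ℕ) : Finset (Finset W) :=
  (largeVerts k (edgesOff s X) \ X).image (cluster (edgesOff s X))

lemma mem_chunks : C ∈ chunks s X k ↔
    ∃ v ∉ X, k ≤ (cluster (edgesOff s X) v).card ∧ cluster (edgesOff s X) v = C := by
  simp only [chunks, Finset.mem_image, Finset.mem_sdiff, mem_largeVerts]
  tauto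

lemma card_chunks_mul_le (s : Finset (Sym2 W)) (X : Finset W) (k : ℕ) :
    (chunks s X k).card * k ≤ Fintype.card W := by
  have hdisj : (chunks s X k : Set (Finset W)).PairwiseDisjoint id := by
    intro C hC D hD hne
    obtain ⟨v, -, -, rfl⟩ := mem_chunks.1 (Finset.mem_coe.1 hC)
    obtain ⟨w, -, -, rfl⟩ := mem_chunks.1 (Finset.mem_coe.1 hD)
    exact Finset.disjoint_left.2 fun x hx hx' =>
      hne ((cluster_eq_of_mem hx).symm.trans (cluster_eq_of_mem hx'))
  calc (chunks s X k).card * k ≤ ∑ C ∈ chunks s X k, C.card :=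
        Finset.card_nsmul_le_sum _ _ _ fun C hC => by
          obtain ⟨v, -, hv, rfl⟩ := mem_chunks.1 hC
          exact hv
    _ = ((chunks s X k).biUnion id).card := (Finset.card_biUnion hdisj).symm
    _ ≤ Fintype.card W := Finset.card_le_univ _

lemma IsSeparation.subset_or_of_mem_chunks (h : IsSeparation (openGraph s) A B X)
    (hC : C ∈ chunks s X k) : C ⊆ A ∨ C ⊆ B := by
  obtain ⟨v, hvX, -, rfl⟩ := mem_chunks.1 hC
  rcases h.mem_or v with hv | hv | hv
  · exact Or.inl (h.cluster_edgesOff_subset hv)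
  · exact Or.inr (h.symm.cluster_edgesOff_subset hv)
  · exact absurd hv hvX

/-- Separating two parts of `Z`, each containing a quarter of its vertices, takes more than `m`
vertices. -/
def IsWellLinkedSet (H : SimpleGraph W) (Z : Finset W) (m : ℝ) : Prop :=
  ∀ A B X : Finset W, IsSeparation H A B X →
    Z.card ≤ 4 * (A ∩ Z).card → Z.card ≤ 4 * (B ∩ Z).card → m < X.card

/-- `H` has a set of at least `η n` vertices, two large parts of which cannot be separated by `ε n`
or fewer vertices. -/
def WellLinked (H : SimpleGraph W) (η ε : ℝ) : Prop :=
  ∃ Z : Finset W, η * Fintype.card W ≤ Z.card ∧ IsWellLinkedSet H Z (ε * Fintype.card W)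

end Separations

section SplitCounting

variable {W : Type} [Fintype W] {G : SimpleGraph W} {s t : Finset (Sym2 W)} {A B X : Finset W}
  {v : W} {b c p η ε l : ℝ} {d k : ℕ}

lemma card_outerNbrs_le (hdeg : ∀ x, (G.neighborSet x).ncard ≤ d) (X : Finset W) :
    (outerNbrs G X).card ≤ X.card * d := by
  have hcover : outerNbrs G X ⊆ X.biUnion fun x => Finset.univ.filter (G.Adj x) := by
    intro y hy
    obtain ⟨-, x, hx, hxy⟩ := mem_outerNbrs.1 hy
    exact Finset.mem_biUnion.2 ⟨x, hx, by simpa using hxy⟩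
  exact (Finset.card_le_card hcover).trans (Finset.card_biUnion_le_card_mul _ _ _ fun y _ =>
    (card_filter_adj_eq G y).trans_le (hdeg y))

-- A cluster that loses vertices when `X` is deleted has an edge into `X`.
lemma exists_mem_outerNbrs_of_card_cluster_lt (hs : s ⊆ edgeFinset' G) (hv : v ∉ X)
    (hlt : (cluster (edgesOff s X) v).card < (cluster s v).card) :
    ∃ y ∈ outerNbrs G X, v ∈ cluster (edgesOff s X) y := by
  by_contra! hnone
  refine hlt.not_ge (Finset.card_le_card (cluster_subset_of_adj_closed ?_ (self_mem_cluster _ _)))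
  intro x y hxy hx
  have hxX := Finset.disjoint_left.1 (cluster_edgesOff_disjoint hv) hx
  by_cases hy : y ∈ X
  · exact absurd (mem_cluster_comm.1 hx)
      (hnone x (mem_outerNbrs.2 ⟨hxX, y, hy, openGraph_le hs hxy.symm⟩))
  · exact mem_cluster_of_adj hx (openGraph_edgesOff_adj.2 ⟨hxy, hxX, hy⟩)

lemma card_largeVerts_sdiff_le (hdeg : ∀ x, (G.neighborSet x).ncard ≤ d)
    (hs : s ⊆ edgeFinset' G) (X : Finset W) (k : ℕ) :
    (largeVerts k s \ (largeVerts k (edgesOff s X) ∪ X)).card ≤ X.card * d * k := by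
  have hcover : largeVerts k s \ (largeVerts k (edgesOff s X) ∪ X) ⊆ (outerNbrs G X).biUnion
      fun y => cluster (edgesOff s X) y \ largeVerts k (edgesOff s X) := by
    intro v hv
    simp only [Finset.mem_sdiff, Finset.mem_union, not_or] at hv
    obtain ⟨hlarge, hsmall, hvX⟩ := hv
    have hlt := (not_le.1 (mt mem_largeVerts.2 hsmall)).trans_le (mem_largeVerts.1 hlarge)
    obtain ⟨y, hy, hvy⟩ := exists_mem_outerNbrs_of_card_cluster_lt hs hvX hlt
    exact Finset.mem_biUnion.2 ⟨y, hy, Finset.mem_sdiff.2 ⟨hvy, hsmall⟩⟩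
  calc _ ≤ (outerNbrs G X).card * k := (Finset.card_le_card hcover).trans
        (Finset.card_biUnion_le_card_mul _ _ _ fun y _ => card_cluster_sdiff_largeVerts_le k _ y)
    _ ≤ X.card * d * k := Nat.mul_le_mul_right k (card_outerNbrs_le hdeg X)

lemma IsSeparation.card_inter_largeVerts_le (h : IsSeparation (openGraph s) A B X)
    (hdeg : ∀ x, (G.neighborSet x).ncard ≤ d) (hs : s ⊆ edgeFinset' G) (k : ℕ) :
    (A ∩ largeVerts k s).card
      ≤ (((chunks s X k).filter fun C => ¬ C ⊆ B).biUnion id).card + X.card * d * k := by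
  have hcover : A ∩ largeVerts k s ⊆ ((chunks s X k).filter fun C => ¬ C ⊆ B).biUnion id ∪
      (largeVerts k s \ (largeVerts k (edgesOff s X) ∪ X)) := by
    intro v hv
    obtain ⟨hvA, hlarge⟩ := Finset.mem_inter.1 hv
    have hvX := Finset.disjoint_left.1 h.disjoint_left hvA
    have hvB := Finset.disjoint_left.1 h.disjoint hvA
    by_cases hoff : v ∈ largeVerts k (edgesOff s X)
    · refine Finset.mem_union_left _ (Finset.mem_biUnion.2 ⟨cluster (edgesOff s X) v,
        Finset.mem_filter.2 ⟨mem_chunks.2 ⟨v, hvX, mem_largeVerts.1 hoff, rfl⟩, fun hsub => ?_⟩,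
        self_mem_cluster _ _⟩)
      exact hvB (hsub (self_mem_cluster _ _))
    · simp only [Finset.mem_union, Finset.mem_sdiff]
      tauto
  exact (Finset.card_le_card hcover).trans ((Finset.card_union_le _ _).trans
    (Nat.add_le_add_left (card_largeVerts_sdiff_le hdeg hs X k) _))

lemma IsSeparation.mul_card_le_card_biUnion (h : IsSeparation (openGraph s) A B X)
    (hdeg : ∀ x, (G.neighborSet x).ncard ≤ d) (hs : s ⊆ edgeFinset' G) (hε : 8 * d * k * ε ≤ η)
    (hZ : η * Fintype.card W ≤ (largeVerts k s).card)
    (hA : (largeVerts k s).card ≤ 4 * (A ∩ largeVerts k s).card)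
    (hX : X.card ≤ ε * Fintype.card W) :
    η / 8 * Fintype.card W ≤ (((chunks s X k).filter fun C => ¬ C ⊆ B).biUnion id).card := by
  have hcard := h.card_inter_largeVerts_le hdeg hs k
  rify at hcard hA
  have hlost : 8 * (X.card * d * k : ℝ) ≤ η * Fintype.card W := by
    calc 8 * (X.card * d * k : ℝ) ≤ 8 * (ε * Fintype.card W * d * k) := by gcongr
      _ = 8 * d * k * ε * Fintype.card W := by ring
      _ ≤ _ := by gcongr
  linarith

lemma exists_isBadSplit (hdeg : ∀ x, (G.neighborSet x).ncard ≤ d) (hs : s ⊆ edgeFinset' G)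
    (hε : 8 * d * k * ε ≤ η) (hZ : η * Fintype.card W ≤ (largeVerts k s).card)
    (hbad : ¬ WellLinked (openGraph (s ∪ t)) η ε) :
    ∃ X : Finset W, X.card ≤ ε * Fintype.card W ∧ ∃ 𝒜 ⊆ chunks s X k,
      IsBadSplit X 𝒜 (chunks s X k) (η / 8 * Fintype.card W) t := by
  simp only [WellLinked, IsWellLinkedSet, not_exists, not_and, not_forall, not_lt,
    exists_prop] at hbad
  obtain ⟨A, B, X, hsep, hA, hB, hX⟩ := hbad _ hZ
  have hseps := hsep.anti (openGraph_mono Finset.subset_union_left)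
  have hsub : ((chunks s X k).filter fun C => ¬ C ⊆ B) ⊆ (chunks s X k).filter (· ⊆ A) :=
    Finset.monotone_filter_right _ fun C hC hCB =>
      (hseps.subset_or_of_mem_chunks hC).resolve_right hCB
  have hleft : ((chunks s X k).filter (· ⊆ A)).biUnion id ⊆ A :=
    Finset.biUnion_subset.2 fun C hC => (Finset.mem_filter.1 hC).2
  have hright : ((chunks s X k).filter fun C => ¬ C ⊆ A).biUnion id ⊆ B :=
    Finset.biUnion_subset.2 fun C hC =>
      (hseps.subset_or_of_mem_chunks (Finset.mem_filter.1 hC).1).resolve_left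
        (Finset.mem_filter.1 hC).2
  refine ⟨X, hX, (chunks s X k).filter (· ⊆ A), Finset.filter_subset _ _, ?_⟩
  rw [IsBadSplit, ← Finset.filter_not]
  refine ⟨⟨Finset.disjoint_of_subset_left hleft (Finset.disjoint_of_subset_right hright
    hsep.disjoint), ?_, hseps.symm.mul_card_le_card_biUnion hdeg hs hε hZ hB hX⟩, ?_⟩
  · exact (hseps.mul_card_le_card_biUnion hdeg hs hε hZ hA hX).trans (by
      exact_mod_cast Finset.card_le_card (Finset.biUnion_subset_biUnion_of_subset_left _ hsub))
  · rintro ⟨Q, hQt, hQX, a, ha, b, hb, hab⟩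
    exact hsep.not_isConnector (hQt.trans Finset.subset_union_right)
      ⟨hQX, a, hleft ha, b, hright hb, hab⟩

lemma card_filter_card_le_le (W : Type*) [Fintype W] (hl0 : 0 < l) (hl1 : l ≤ 1) (m : ℝ) :
    ((Finset.univ.filter fun X : Finset W => (X.card : ℝ) ≤ m).card : ℝ)
      ≤ Real.exp (l * Fintype.card W - Real.log l * m) := by
  rw [Real.exp_sub, le_div_iff₀ (Real.exp_pos _)]
  calc _ = ∑ _X ∈ Finset.univ.filter fun X : Finset W => (X.card : ℝ) ≤ m,
          Real.exp (Real.log l * m) := by rw [Finset.sum_const, nsmul_eq_mul]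
    _ ≤ ∑ X ∈ Finset.univ.filter fun X : Finset W => (X.card : ℝ) ≤ m, l ^ X.card :=
        Finset.sum_le_sum fun X hX => by
          rw [← Real.rpow_natCast, Real.rpow_def_of_pos hl0]
          exact Real.exp_le_exp.2 (mul_le_mul_of_nonpos_left (Finset.mem_filter.1 hX).2
            (Real.log_nonpos hl0.le hl1))
    _ ≤ ∑ X : Finset W, l ^ X.card :=
        Finset.sum_le_sum_of_subset_of_nonneg (Finset.filter_subset _ _) fun X _ _ => by positivity
    _ = (l + 1) ^ Fintype.card W := by simpa using Fintype.sum_pow_mul_eq_add_pow W l 1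
    _ ≤ Real.exp (l * Fintype.card W) := by
        rw [mul_comm, Real.exp_nat_mul]
        gcongr
        exact Real.add_one_le_exp l

lemma card_powerset_chunks_le (s : Finset (Sym2 W)) (X : Finset W) (hk : 0 < k) :
    ((chunks s X k).powerset.card : ℝ) ≤ Real.exp (Real.log 2 / k * Fintype.card W) := by
  have hchunks : ((chunks s X k).card * k : ℝ) ≤ Fintype.card W := by
    exact_mod_cast card_chunks_mul_le s X k
  rw [Finset.card_powerset, Nat.cast_pow, Nat.cast_two, ← Real.rpow_natCast,
    Real.rpow_def_of_pos two_pos, div_mul_eq_mul_div, mul_div_assoc]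
  have : (0 : ℝ) < k := by exact_mod_cast hk
  gcongr
  exact (le_div_iff₀ this).2 hchunks

lemma percPr_not_wellLinked_union_le (hdeg : ∀ x, (G.neighborSet x).ncard ≤ d)
    (hs : s ⊆ edgeFinset' G) (hk : 0 < k) (h0 : 0 ≤ p) (h1 : p ≤ 1) (hl0 : 0 < l) (hl1 : l ≤ 1)
    (hε : 8 * d * k * ε ≤ η) (hZ : η * Fintype.card W ≤ (largeVerts k s).card)
    (hconn : ∀ X A B : Finset W, Disjoint A B → η / 8 * Fintype.card W ≤ A.card →
      η / 8 * Fintype.card W ≤ B.card → X.card ≤ ε * Fintype.card W →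
      percPr p (edgeFinset' G) (fun t => ¬ ∃ Q ⊆ t, IsConnector Q A B X)
        ≤ Real.exp (1 - c * Fintype.card W)) :
    percPr p (edgeFinset' G) (fun t => ¬ WellLinked (openGraph (s ∪ t)) η ε)
      ≤ Real.exp (1 - (c - Real.log 2 / k - l + Real.log l * ε) * Fintype.card W) := by
  set n : ℝ := (Fintype.card W : ℝ)
  set smallSets := Finset.univ.filter fun X : Finset W => (X.card : ℝ) ≤ ε * n
  calc _ ≤ percPr p (edgeFinset' G) fun t => ∃ X ∈ smallSets, ∃ 𝒜 ∈ (chunks s X k).powerset,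
          IsBadSplit X 𝒜 (chunks s X k) (η / 8 * n) t :=
        percPr_mono h0 h1 fun t _ ht => by
          obtain ⟨X, hX, 𝒜, h𝒜, hsplit⟩ := exists_isBadSplit hdeg hs hε hZ ht
          exact ⟨X, Finset.mem_filter.2 ⟨Finset.mem_univ X, hX⟩, 𝒜, Finset.mem_powerset.2 h𝒜,
            hsplit⟩
    _ ≤ ∑ X ∈ smallSets, ∑ 𝒜 ∈ (chunks s X k).powerset,
          percPr p (edgeFinset' G) (IsBadSplit X 𝒜 (chunks s X k) (η / 8 * n)) :=
        (percPr_exists_le h0 h1 _ _ _).trans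
          (Finset.sum_le_sum fun X _ => percPr_exists_le h0 h1 _ _ _)
    _ ≤ ∑ _X ∈ smallSets, Real.exp (Real.log 2 / k * n) * Real.exp (1 - c * n) :=
        Finset.sum_le_sum fun X hX => by
          refine (Finset.sum_le_card_nsmul _ _ _ fun 𝒜 _ => percPr_isBadSplit_le h0 h1
            (Real.exp_pos (1 - c * n)).le fun A B hAB hA hB =>
              hconn X A B hAB hA hB (Finset.mem_filter.1 hX).2).trans ?_
          rw [nsmul_eq_mul]
          gcongr
          exact card_powerset_chunks_le s X hk
    _ ≤ Real.exp (l * n - Real.log l * (ε * n)) *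
          (Real.exp (Real.log 2 / k * n) * Real.exp (1 - c * n)) := by
        rw [Finset.sum_const, nsmul_eq_mul]
        gcongr
        exact card_filter_card_le_le W hl0 hl1 _
    _ = _ := by
        rw [← Real.exp_add, ← Real.exp_add]
        congr 1
        ring

lemma exists_half_le_sub_entropy (d : ℕ) (hc : 0 < c) (hη : 0 < η) {ε₀ : ℝ} (hε₀ : 0 < ε₀) :
    ∃ k : ℕ, 0 < k ∧ ∃ l > 0, l ≤ 1 ∧ ∃ ε > 0, ε ≤ ε₀ ∧ 8 * d * k * ε ≤ η ∧
      c / 2 ≤ c - Real.log 2 / k - l + Real.log l * ε := by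
  obtain ⟨k, hk⟩ := exists_nat_gt (4 * Real.log 2 / c)
  have hk0 : (0 : ℝ) < k := (div_pos (by positivity) hc).trans hk
  have hkc : Real.log 2 / k ≤ c / 4 := by
    rw [div_lt_iff₀ hc] at hk
    rw [div_le_iff₀ hk0]
    linarith
  set l := min 1 (c / 8)
  have hl0 : 0 < l := lt_min one_pos (by positivity)
  have hl1 : l ≤ 1 := min_le_left _ _
  have hlc : l ≤ c / 8 := min_le_right _ _
  have hlog : Real.log l ≤ 0 := Real.log_nonpos hl0.le hl1
  set ε := min ε₀ (min (c / (8 * (1 - Real.log l))) (η / (8 * d * k + 1)))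
  have hε0 : 0 < ε := lt_min hε₀ (lt_min (div_pos hc (by linarith)) (by positivity))
  have hεl : ε * (8 * (1 - Real.log l)) ≤ c :=
    (le_div_iff₀ (by linarith)).1 ((min_le_right _ _).trans (min_le_left _ _))
  have hεk : ε * (8 * d * k + 1) ≤ η :=
    (le_div_iff₀ (by positivity)).1 ((min_le_right _ _).trans (min_le_right _ _))
  exact ⟨k, by exact_mod_cast hk0, l, hl0, hl1, ε, hε0, min_le_left _ _, by nlinarith,
    by nlinarith⟩

end SplitCounting

section WellLinkedness

variable {p b : ℝ} {d : ℕ}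

lemma exists_one_sub_eq_mul_one_sub {q : ℝ} (hq : q < p) (h1 : p < 1) :
    ∃ p₁ p₂ : ℝ, q < p₁ ∧ p₁ < 1 ∧ 0 < p₂ ∧ p₂ ≤ 1 ∧ 1 - p = (1 - p₁) * (1 - p₂) := by
  obtain ⟨p₁, hqp₁, hp₁⟩ := exists_between hq
  have hpos : 0 < 1 - p₁ := by linarith
  refine ⟨p₁, (p - p₁) / (1 - p₁), hqp₁, hp₁.trans h1, div_pos (by linarith) hpos,
    (div_le_one hpos).2 (by linarith), ?_⟩
  field_simp
  ring

-- Sprinkling: `p₁` still exceeds the critical probability, so most vertices lie in large clusters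
-- after the first stage; the independent second stage at density `p₂` links these clusters.
theorem exists_percPr_not_wellLinked_le (hd : 3 ≤ d) (hp : critProb d < p) (h1 : p < 1)
    (hb : 0 < b) :
    ∃ η > (0 : ℝ), ∃ ε > (0 : ℝ), ∃ c > (0 : ℝ), ∃ R : ℕ, 0 < R ∧
      ∀ (W : Type) [Fintype W] [Nonempty W] (G : SimpleGraph W),
        IsRegularExpander G b d → R < G.girth →
        percPr p (edgeFinset' G) (fun s => ¬ WellLinked (openGraph s) η ε)
          ≤ (1 + Real.exp 1) * Real.exp (-c * Fintype.card W) := by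
  obtain ⟨p₁, p₂, hp₁, hp₁1, hp₂0, hp₂1, hpp⟩ := exists_one_sub_eq_mul_one_sub hp h1
  have hq0 : 0 < critProb d := critProb_pos (by omega)
  set η := largeClusterProb d p₁
  have hη0 : 0 < η := largeClusterProb_pos hp₁ hp₁1
  have hη1 : η ≤ 1 := sub_le_self _ (div_nonneg (by linarith) (by linarith))
  obtain ⟨c, hc, ε₀, hε₀, hconn⟩ := exists_percPr_not_exists_isConnector_le hb (show 0 < d by omega)
    (θ := η / 2 / 8) (by positivity) (by linarith) hp₂0 hp₂1
  obtain ⟨k, hk, l, hl0, hl1, ε, hε0, hεε₀, hεk, hrate⟩ :=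
    exists_half_le_sub_entropy d hc (half_pos hη0) hε₀
  set c₀ := min (η ^ 2 / (64 * d * k ^ 2)) (c / 2)
  refine ⟨η / 2, by positivity, ε, hε0, c₀, lt_min (by positivity) (by positivity), k, hk, ?_⟩
  intro W _ _ G hG hgirth
  have hlinked : ∀ s ⊆ edgeFinset' G, η / 2 * Fintype.card W ≤ (largeVerts k s).card →
      percPr p₂ (edgeFinset' G) (fun t => ¬ WellLinked (openGraph (s ∪ t)) (η / 2) ε)
        ≤ Real.exp 1 * Real.exp (-c₀ * Fintype.card W) := fun s hs hZ => by
    refine (percPr_not_wellLinked_union_le (fun x => (hG.2 x).le) hs hk hp₂0.le hp₂1 hl0 hl1 hεk hZ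
      fun X A B hAB hA hB hX => hconn W G hG X A B hAB hA hB (hX.trans (by gcongr))).trans ?_
    rw [← Real.exp_add, neg_mul, ← sub_eq_add_neg]
    gcongr
    exact (min_le_right _ _).trans hrate
  calc _ ≤ percPr p₁ (edgeFinset' G)
            (fun s => ¬ η / 2 * Fintype.card W ≤ (largeVerts k s).card)
          + Real.exp 1 * Real.exp (-c₀ * Fintype.card W) :=
        percPr_le_percPr_not_add hpp (by linarith) hp₁1.le hp₂0.le hp₂1 (by positivity) hlinked
    _ ≤ Real.exp (-c₀ * Fintype.card W) + Real.exp 1 * Real.exp (-c₀ * Fintype.card W) := by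
        gcongr
        simp only [not_le]
        refine (percPr_card_largeVerts_lt_le hd hG.2 hp₁ hp₁1 hgirth.le).trans ?_
        gcongr
        exact min_le_left _ _
    _ = _ := by ring

end WellLinkedness

section Median

variable {W : Type*}

lemma exists_median (U : Finset W) (u : W → ℝ) :
    ∃ c, 2 * {x ∈ U | c < u x}.card ≤ U.card ∧ 2 * {x ∈ U | u x < c}.card ≤ U.card := by
  rcases U.eq_empty_or_nonempty with rfl | hU
  · exact ⟨0, by simp, by simp⟩
  set M := {z ∈ U | 2 * {x ∈ U | u z < u x}.card ≤ U.card}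
  have hM : M.Nonempty := by
    obtain ⟨z, hz, hmax⟩ := U.exists_max_image u hU
    refine ⟨z, Finset.mem_filter.2 ⟨hz, ?_⟩⟩
    simp [Finset.filter_eq_empty_iff.2 fun x hx => not_lt.2 (hmax x hx)]
  obtain ⟨z, hz, hmin⟩ := M.exists_min_image u hM
  refine ⟨u z, (Finset.mem_filter.1 hz).2, ?_⟩
  rcases {x ∈ U | u x < u z}.eq_empty_or_nonempty with hbelow | hbelow
  · simp [hbelow]
  obtain ⟨w, hw, hmax⟩ := Finset.exists_max_image _ u hbelow
  obtain ⟨hwU, hwz⟩ := Finset.mem_filter.1 hw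
  have hwM : ¬ 2 * {x ∈ U | u w < u x}.card ≤ U.card := fun h =>
    (hmin w (Finset.mem_filter.2 ⟨hwU, h⟩)).not_gt hwz
  have hdisj : Disjoint {x ∈ U | u x < u z} {x ∈ U | u w < u x} :=
    Finset.disjoint_left.2 fun x hx hx' =>
      (hmax x hx).not_gt (Finset.mem_filter.1 hx').2
  have hunion := Finset.card_le_card (Finset.union_subset
    (Finset.filter_subset (fun x => u x < u z) U) (Finset.filter_subset (fun x => u w < u x) U))
  rw [Finset.card_union_of_disjoint hdisj] at hunion
  omega

lemma card_mul_sum_sq_le {U T : Finset W} {u : W → ℝ} (hT : T ⊆ U) (hu : ∀ x ∈ T, u x = 0)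
    (c : ℝ) : T.card * ∑ x ∈ U, u x ^ 2 ≤ U.card * ∑ x ∈ U, (u x - c) ^ 2 := by
  have hexpand : ∑ x ∈ U, (u x - c) ^ 2
      = ∑ x ∈ U, u x ^ 2 - 2 * c * ∑ x ∈ U, u x + U.card * c ^ 2 := by
    simp only [sub_sq, Finset.sum_add_distrib, Finset.sum_sub_distrib, Finset.sum_const,
      nsmul_eq_mul, ← Finset.sum_mul, ← Finset.mul_sum]
    ring
  have hcs : (∑ x ∈ U, u x) ^ 2 ≤ (U.card - T.card) * ∑ x ∈ U, u x ^ 2 := by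
    have hsum : ∑ x ∈ U, u x = ∑ x ∈ U \ T, u x := by
      rw [← Finset.sum_sdiff hT, Finset.sum_eq_zero hu, add_zero]
    have hsum_sq : ∑ x ∈ U, u x ^ 2 = ∑ x ∈ U \ T, u x ^ 2 := by
      rw [← Finset.sum_sdiff hT, Finset.sum_eq_zero (s := T) fun x hx => by simp [hu x hx],
        add_zero]
    rw [hsum, hsum_sq, ← Nat.cast_sub (Finset.card_le_card hT), ← Finset.card_sdiff_of_subset hT]
    exact sq_sum_le_card_mul_sum_sq
  rw [hexpand]
  nlinarith [sq_nonneg (U.card * c - ∑ x ∈ U, u x)]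

end Median

section Cheeger

variable {W : Type*} {a : W → W → ℝ} {U T : Finset W} {D α : ℝ}

/-- The total weight, for the pair weights `a`, of the pairs leading from `T` to the rest of
`U`. -/
def boundaryWeight (a : W → W → ℝ) (U T : Finset W) : ℝ := ∑ x ∈ T, ∑ y ∈ U \ T, a x y

lemma boundaryWeight_eq (a : W → W → ℝ) (hT : T ⊆ U) :
    boundaryWeight a U T = ∑ x ∈ U, ∑ y ∈ U, a x y * if x ∈ T ∧ y ∉ T then 1 else 0 := by
  rw [boundaryWeight, ← Finset.sum_subset hT fun x _ hx => by simp [hx]]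
  refine Finset.sum_congr rfl fun x hx => ?_
  simp [hx, Finset.sdiff_eq_filter, Finset.sum_filter]

/-- Pairs with weights `a` expand on `U` with constant `α`: every subset `T` of at most half the
size of `U` has boundary weight at least `α|T|` inside `U`. -/
def ExpandsOn (a : W → W → ℝ) (U : Finset W) (α : ℝ) : Prop :=
  ∀ T ⊆ U, 2 * T.card ≤ U.card → α * T.card ≤ boundaryWeight a U T

/-- The Dirichlet energy of `u` on `U`, for the pair weights `a`; each unordered pair is counted
twice. -/
def energy (a : W → W → ℝ) (U : Finset W) (u : W → ℝ) : ℝ :=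
  ∑ x ∈ U, ∑ y ∈ U, a x y * (u x - u y) ^ 2

lemma max_sub_eq_max_sub_add {h : W → ℝ} {m : ℝ} {x y : W} (hm : 0 ≤ m)
    (hx : x ∈ T → m ≤ h x) (hx' : x ∉ T → h x = 0) (hy : y ∈ T → m ≤ h y)
    (hy' : y ∉ T → h y = 0) :
    max (h x - h y) 0 = max ((if x ∈ T then h x - m else h x) - if y ∈ T then h y - m else h y) 0
      + m * if x ∈ T ∧ y ∉ T then 1 else 0 := by
  by_cases hxT : x ∈ T <;> by_cases hyT : y ∈ T
  · simp [hxT, hyT]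
  · have := hx hxT
    simp only [hxT, hyT, hy' hyT, if_true, if_false, not_false_eq_true, and_self, sub_zero]
    rw [max_eq_left (by linarith), max_eq_left (by linarith)]
    ring
  · have := hy hyT
    simp only [hxT, hyT, hx' hxT, if_true, if_false, not_true_eq_false, and_self]
    rw [max_eq_right (by linarith), max_eq_right (by linarith)]
    ring
  · simp [hxT, hyT]

-- Subtract the minimum of `h` over `T` from `h` on `T`: this costs exactly the boundary weight of
-- `T` times that minimum, and one more point leaves the support.
lemma coarea_le (ha : ∀ x y, 0 ≤ a x y) (hTU : T ⊆ U)
    (hexp : ∀ S ⊆ T, α * S.card ≤ boundaryWeight a U S) {h : W → ℝ} (h0 : ∀ x ∈ T, 0 ≤ h x)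
    (hzero : ∀ x ∈ U, x ∉ T → h x = 0) :
    α * ∑ x ∈ U, h x ≤ ∑ x ∈ U, ∑ y ∈ U, a x y * max (h x - h y) 0 := by
  induction T using Finset.strongInduction generalizing h with
  | _ T ih =>
  rcases T.eq_empty_or_nonempty with rfl | hT
  · rw [Finset.sum_eq_zero fun x hx => hzero x hx (Finset.notMem_empty x), mul_zero]
    exact Finset.sum_nonneg fun x _ => Finset.sum_nonneg fun y _ =>
      mul_nonneg (ha x y) (le_max_right _ _)
  obtain ⟨x₀, hx₀, hmin⟩ := T.exists_min_image h hT
  set m := h x₀ with hm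
  set h' : W → ℝ := fun x => if x ∈ T then h x - m else h x
  have herase : T.erase x₀ ⊆ T := Finset.erase_subset _ _
  have hrec := ih (T.erase x₀) (Finset.erase_ssubset hx₀) (herase.trans hTU)
    (fun S hS => hexp S (hS.trans herase)) (h := h')
    (fun x hx => by simp [h', herase hx, hmin x (herase hx)])
    (fun x hx hxT => by
      by_cases hx' : x ∈ T
      · obtain rfl : x = x₀ := by simpa [hx'] using hxT
        simp [h', hx₀, hm]
      · simp [h', hx', hzero x hx hx'])
  have hsum : ∑ x ∈ U, h x = ∑ x ∈ U, h' x + m * T.card := by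
    have : ∀ x, h x = h' x + if x ∈ T then m else 0 := fun x => by
      by_cases hx : x ∈ T <;> simp [h', hx]
    rw [Finset.sum_congr rfl fun x _ => this x, Finset.sum_add_distrib, ← Finset.sum_filter,
      Finset.filter_mem_eq_inter, Finset.inter_eq_right.2 hTU, Finset.sum_const, nsmul_eq_mul,
      mul_comm m]
  have hvariation : ∑ x ∈ U, ∑ y ∈ U, a x y * max (h x - h y) 0
      = ∑ x ∈ U, ∑ y ∈ U, a x y * max (h' x - h' y) 0 + m * boundaryWeight a U T := by
    simp only [boundaryWeight_eq a hTU, Finset.mul_sum, ← Finset.sum_add_distrib]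
    refine Finset.sum_congr rfl fun x hx => Finset.sum_congr rfl fun y hy => ?_
    rw [max_sub_eq_max_sub_add (h0 x₀ hx₀) (hmin x) (hzero x hx) (hmin y) (hzero y hy)]
    ring
  rw [hsum, hvariation]
  linarith [mul_le_mul_of_nonneg_left (hexp T subset_rfl) (h0 x₀ hx₀)]

lemma max_sq_sub_sq_le {q r l : ℝ} (hq : 0 ≤ q) (hr : 0 ≤ r) (hl : 0 < l) :
    max (q ^ 2 - r ^ 2) 0 ≤ l * max (q - r) 0 ^ 2 + 1 / (2 * l) * (q ^ 2 + r ^ 2) := by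
  refine max_le ?_ (by positivity)
  calc q ^ 2 - r ^ 2 ≤ max (q - r) 0 * (q + r) := by
        rw [sq_sub_sq, mul_comm]
        gcongr
        exact le_max_left _ _
    _ ≤ l * max (q - r) 0 ^ 2 + (q + r) ^ 2 / (4 * l) := by
        rw [← sub_nonneg, show l * max (q - r) 0 ^ 2 + (q + r) ^ 2 / (4 * l)
          - max (q - r) 0 * (q + r) = (2 * l * max (q - r) 0 - (q + r)) ^ 2 / (4 * l) by
            field_simp; ring]
        positivity
    _ ≤ l * max (q - r) 0 ^ 2 + (2 * (q ^ 2 + r ^ 2)) / (4 * l) := by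
        gcongr
        exact add_sq_le
    _ = _ := by field_simp; ring

lemma sum_weight_mul_sq_add_sq_le (hsymm : ∀ x y, a x y = a y x)
    (hD : ∀ x ∈ U, ∑ y ∈ U, a x y ≤ D) (g : W → ℝ) :
    ∑ x ∈ U, ∑ y ∈ U, a x y * (g x ^ 2 + g y ^ 2) ≤ 2 * D * ∑ x ∈ U, g x ^ 2 := by
  have hfst : ∑ x ∈ U, ∑ y ∈ U, a x y * g x ^ 2 ≤ D * ∑ x ∈ U, g x ^ 2 := by
    rw [Finset.mul_sum]
    refine Finset.sum_le_sum fun x hx => ?_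
    rw [← Finset.sum_mul]
    exact mul_le_mul_of_nonneg_right (hD x hx) (sq_nonneg _)
  have hsnd : ∑ x ∈ U, ∑ y ∈ U, a x y * g y ^ 2 = ∑ x ∈ U, ∑ y ∈ U, a x y * g x ^ 2 := by
    rw [Finset.sum_comm]
    exact Finset.sum_congr rfl fun x _ => Finset.sum_congr rfl fun y _ => by rw [hsymm]
  simp only [mul_add, Finset.sum_add_distrib, hsnd]
  linarith

-- The co-area inequality for `g ^ 2`; AM-GM splits `|g x ^ 2 - g y ^ 2|` into a multiple of the
-- squared gradient and a term small enough to be absorbed.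
lemma cheeger_one_sided (ha : ∀ x y, 0 ≤ a x y) (hsymm : ∀ x y, a x y = a y x)
    (hD : ∀ x ∈ U, ∑ y ∈ U, a x y ≤ D) (hD0 : 0 < D) (hα : 0 < α) (hTU : T ⊆ U)
    (hexp : ∀ S ⊆ T, α * S.card ≤ boundaryWeight a U S) {g : W → ℝ} (g0 : ∀ x, 0 ≤ g x)
    (hzero : ∀ x ∈ U, x ∉ T → g x = 0) :
    α ^ 2 / (4 * D) * ∑ x ∈ U, g x ^ 2
      ≤ ∑ x ∈ U, ∑ y ∈ U, a x y * max (g x - g y) 0 ^ 2 := by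
  set S := ∑ x ∈ U, ∑ y ∈ U, a x y * max (g x - g y) 0 ^ 2 with hS
  have hupper : ∑ x ∈ U, ∑ y ∈ U, a x y * max (g x ^ 2 - g y ^ 2) 0
      ≤ 2 * D / α * S + α / (4 * D) * (2 * D * ∑ x ∈ U, g x ^ 2) := by
    calc _ ≤ ∑ x ∈ U, ∑ y ∈ U, (2 * D / α * (a x y * max (g x - g y) 0 ^ 2)
          + α / (4 * D) * (a x y * (g x ^ 2 + g y ^ 2))) := by
          refine Finset.sum_le_sum fun x _ => Finset.sum_le_sum fun y _ => ?_
          refine (mul_le_mul_of_nonneg_left (max_sq_sub_sq_le (g0 x) (g0 y)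
            (show 0 < 2 * D / α by positivity)) (ha x y)).trans_eq ?_
          field_simp
          ring
      _ ≤ _ := by
          simp only [Finset.sum_add_distrib, ← Finset.mul_sum, ← hS]
          gcongr
          exact sum_weight_mul_sq_add_sq_le hsymm hD g
  have hlower := coarea_le ha hTU hexp (h := fun x => g x ^ 2) (fun x _ => sq_nonneg _)
    fun x hx hxT => by simp [hzero x hx hxT]
  have habsorb : α / (4 * D) * (2 * D * ∑ x ∈ U, g x ^ 2) = α / 2 * ∑ x ∈ U, g x ^ 2 := by
    field_simp
    ring
  calc α ^ 2 / (4 * D) * ∑ x ∈ U, g x ^ 2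
      = α / (2 * D) * (α / 2 * ∑ x ∈ U, g x ^ 2) := by field_simp; ring
    _ ≤ α / (2 * D) * (2 * D / α * S) :=
        mul_le_mul_of_nonneg_left (by linarith) (by positivity)
    _ = S := by field_simp

lemma sq_max_sub_max_add_le (q r c : ℝ) :
    max (max (q - c) 0 - max (r - c) 0) 0 ^ 2 + max (max (c - q) 0 - max (c - r) 0) 0 ^ 2
      ≤ (q - r) ^ 2 := by
  rcases le_total q r with hqr | hqr
  · have hfst : max (max (q - c) 0 - max (r - c) 0) 0 = 0 :=
      max_eq_right (by linarith [max_le_max_right 0 (sub_le_sub_right hqr c)])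
    have hsnd : max (max (c - q) 0 - max (c - r) 0) 0 ≤ r - q := by
      refine max_le ?_ (by linarith)
      rw [sub_le_iff_le_add]
      exact max_le (by linarith [le_max_left (c - r) 0]) (by linarith [le_max_right (c - r) 0])
    nlinarith [le_max_right (max (c - q) 0 - max (c - r) 0) 0]
  · have hsnd : max (max (c - q) 0 - max (c - r) 0) 0 = 0 :=
      max_eq_right (by linarith [max_le_max_right 0 (sub_le_sub_left hqr c)])
    have hfst : max (max (q - c) 0 - max (r - c) 0) 0 ≤ q - r := by
      refine max_le ?_ (by linarith)
      rw [sub_le_iff_le_add]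
      exact max_le (by linarith [le_max_left (r - c) 0]) (by linarith [le_max_right (r - c) 0])
    nlinarith [le_max_right (max (q - c) 0 - max (r - c) 0) 0]

-- At a median `c`, both positive parts of `u - c` are supported on at most half of `U`.
lemma exists_sum_sub_sq_le_energy (ha : ∀ x y, 0 ≤ a x y) (hsymm : ∀ x y, a x y = a y x)
    (hD : ∀ x ∈ U, ∑ y ∈ U, a x y ≤ D) (hD0 : 0 < D) (hα : 0 < α) (hU : ExpandsOn a U α)
    (u : W → ℝ) :
    ∃ c, α ^ 2 / (4 * D) * ∑ x ∈ U, (u x - c) ^ 2 ≤ energy a U u := by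
  obtain ⟨c, habove, hbelow⟩ := exists_median U u
  have hside : ∀ {S : Finset W}, S ⊆ U → 2 * S.card ≤ U.card →
      ∀ S' ⊆ S, α * S'.card ≤ boundaryWeight a U S' := fun hS hcard S' hS' =>
    hU S' (hS'.trans hS) ((Nat.mul_le_mul_left 2 (Finset.card_le_card hS')).trans hcard)
  have hpos := cheeger_one_sided ha hsymm hD hD0 hα (Finset.filter_subset _ _)
    (hside (Finset.filter_subset _ _) habove) (g := fun x => max (u x - c) 0)
    (fun x => le_max_right _ _) fun x hx hx' => max_eq_right <| by
      simpa [hx] using hx'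
  have hneg := cheeger_one_sided ha hsymm hD hD0 hα (Finset.filter_subset _ _)
    (hside (Finset.filter_subset _ _) hbelow) (g := fun x => max (c - u x) 0)
    (fun x => le_max_right _ _) fun x hx hx' => max_eq_right <| by
      simpa [hx] using hx'
  have hsplit : ∀ x, (u x - c) ^ 2 = max (u x - c) 0 ^ 2 + max (c - u x) 0 ^ 2 := fun x => by
    rcases le_total c (u x) with h | h
    · rw [max_eq_left (by linarith), max_eq_right (by linarith)]; ring
    · rw [max_eq_right (by linarith), max_eq_left (by linarith)]; ring
  refine ⟨c, ?_⟩
  simp only [hsplit, Finset.sum_add_distrib, mul_add]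
  refine (add_le_add hpos hneg).trans ?_
  simp only [energy, ← Finset.sum_add_distrib, ← mul_add]
  exact Finset.sum_le_sum fun x _ => Finset.sum_le_sum fun y _ =>
    mul_le_mul_of_nonneg_left (sq_max_sub_max_add_le (u x) (u y) c) (ha x y)

lemma poincare (ha : ∀ x y, 0 ≤ a x y) (hsymm : ∀ x y, a x y = a y x)
    (hD : ∀ x ∈ U, ∑ y ∈ U, a x y ≤ D) (hD0 : 0 < D) (hα : 0 < α) (hU : ExpandsOn a U α)
    (hT : T ⊆ U) {u : W → ℝ} (hu : ∀ x ∈ T, u x = 0) :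
    α ^ 2 / (4 * D) * (T.card / U.card * ∑ x ∈ U, u x ^ 2) ≤ energy a U u := by
  obtain ⟨c, hc⟩ := exists_sum_sub_sq_le_energy ha hsymm hD hD0 hα hU u
  refine (mul_le_mul_of_nonneg_left ?_ (by positivity)).trans hc
  rw [div_mul_eq_mul_div]
  exact div_le_of_le_mul₀ (Nat.cast_nonneg _) (Finset.sum_nonneg fun x _ => sq_nonneg _)
    ((card_mul_sum_sq_le hT hu c).trans_eq (mul_comm _ _))

end Cheeger

section KilledWalk

variable {W : Type*} {a : W → W → ℝ} {U T : Finset W} {D α : ℝ}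

/-- The transition operator of the lazy random walk on `U` which jumps along each pair with
probability proportional to its weight, `2 * D` being the total weight available at a point. -/
def lazyStep (a : W → W → ℝ) (D : ℝ) (U : Finset W) (u : W → ℝ) (x : W) : ℝ :=
  u x - 1 / (2 * D) * ∑ y ∈ U, a x y * (u x - u y)

lemma two_mul_sum_mul_sum_eq_energy (hsymm : ∀ x y, a x y = a y x) (U : Finset W) (u : W → ℝ) :
    2 * ∑ x ∈ U, u x * ∑ y ∈ U, a x y * (u x - u y) = energy a U u := by
  have hswap : ∑ x ∈ U, ∑ y ∈ U, u x * (a x y * (u x - u y))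
      = ∑ x ∈ U, ∑ y ∈ U, u y * (a x y * (u y - u x)) := by
    rw [Finset.sum_comm]
    exact Finset.sum_congr rfl fun x _ => Finset.sum_congr rfl fun y _ => by rw [hsymm]
  simp only [Finset.mul_sum U _ (u _), two_mul, energy]
  nth_rewrite 2 [hswap]
  simp only [← Finset.sum_add_distrib]
  exact Finset.sum_congr rfl fun x _ => Finset.sum_congr rfl fun y _ => by ring

lemma sum_sq_sum_le_mul_energy (ha : ∀ x y, 0 ≤ a x y) (hD : ∀ x ∈ U, ∑ y ∈ U, a x y ≤ D)
    (u : W → ℝ) : ∑ x ∈ U, (∑ y ∈ U, a x y * (u x - u y)) ^ 2 ≤ D * energy a U u := by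
  rw [energy, Finset.mul_sum]
  refine Finset.sum_le_sum fun x hx => ?_
  have hnonneg : ∀ y ∈ U, 0 ≤ a x y * (u x - u y) ^ 2 := fun y _ =>
    mul_nonneg (ha x y) (sq_nonneg _)
  calc _ ≤ (∑ y ∈ U, a x y) * ∑ y ∈ U, a x y * (u x - u y) ^ 2 :=
        Finset.sum_sq_le_sum_mul_sum_of_sq_le_mul U (fun y _ => ha x y) hnonneg
          fun y _ => by linarith
    _ ≤ _ := mul_le_mul_of_nonneg_right (hD x hx) (Finset.sum_nonneg hnonneg)

lemma sum_lazyStep_sq_le (ha : ∀ x y, 0 ≤ a x y) (hsymm : ∀ x y, a x y = a y x)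
    (hD : ∀ x ∈ U, ∑ y ∈ U, a x y ≤ D) (hD0 : 0 < D) (u : W → ℝ) :
    ∑ x ∈ U, lazyStep a D U u x ^ 2 ≤ ∑ x ∈ U, u x ^ 2 - 1 / (4 * D) * energy a U u := by
  have hexpand : ∑ x ∈ U, lazyStep a D U u x ^ 2 = ∑ x ∈ U, u x ^ 2
      - 1 / (2 * D) * (2 * ∑ x ∈ U, u x * ∑ y ∈ U, a x y * (u x - u y))
      + 1 / (4 * D ^ 2) * ∑ x ∈ U, (∑ y ∈ U, a x y * (u x - u y)) ^ 2 := by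
    simp only [Finset.mul_sum _ _ (1 / (4 * D ^ 2)), Finset.mul_sum _ _ (2 : ℝ),
      Finset.mul_sum _ _ (1 / (2 * D)), ← Finset.sum_sub_distrib, ← Finset.sum_add_distrib]
    refine Finset.sum_congr rfl fun x _ => ?_
    rw [lazyStep]
    ring
  have hquad : 1 / (4 * D ^ 2) * ∑ x ∈ U, (∑ y ∈ U, a x y * (u x - u y)) ^ 2
      ≤ 1 / (4 * D ^ 2) * (D * energy a U u) := by
    gcongr
    exact sum_sq_sum_le_mul_energy ha hD u
  have hlin : 1 / (2 * D) * energy a U u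
      = 1 / (4 * D) * energy a U u + 1 / (4 * D ^ 2) * (D * energy a U u) := by
    field_simp
    ring
  rw [hexpand, two_mul_sum_mul_sum_eq_energy hsymm]
  linarith

/-- The probability that the lazy random walk on `U` started at a given point is outside `T` at
all times `0, …, l`. -/
def avoidProb (a : W → W → ℝ) (D : ℝ) (U T : Finset W) : ℕ → W → ℝ
  | 0, x => if x ∈ T then 0 else 1
  | l + 1, x => if x ∈ T then 0 else lazyStep a D U (avoidProb a D U T l) x

lemma avoidProb_eq_zero {x : W} (hx : x ∈ T) (l : ℕ) : avoidProb a D U T l x = 0 := by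
  cases l <;> simp [avoidProb, hx]

lemma sum_sq_avoidProb_le (ha : ∀ x y, 0 ≤ a x y) (hsymm : ∀ x y, a x y = a y x)
    (hD : ∀ x ∈ U, ∑ y ∈ U, a x y ≤ D) (hD0 : 0 < D) (hα : 0 < α) (hU : ExpandsOn a U α)
    (hT : T ⊆ U) (l : ℕ) :
    ∑ x ∈ U, avoidProb a D U T l x ^ 2
      ≤ U.card * Real.exp (-(α ^ 2 / (16 * D ^ 2) * (T.card / U.card) * l)) := by
  set ρ := α ^ 2 / (16 * D ^ 2) * (T.card / U.card : ℝ) with hρ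
  induction l with
  | zero =>
    rw [Nat.cast_zero, mul_zero, neg_zero, Real.exp_zero, mul_one, ← nsmul_one,
      ← Finset.sum_const]
    refine Finset.sum_le_sum fun x _ => ?_
    rw [avoidProb]
    split_ifs <;> norm_num
  | succ l ih =>
    set u := avoidProb a D U T l
    have hkill : ∑ x ∈ U, avoidProb a D U T (l + 1) x ^ 2 ≤ ∑ x ∈ U, lazyStep a D U u x ^ 2 := by
      refine Finset.sum_le_sum fun x _ => ?_
      rw [avoidProb]
      split_ifs
      · simpa using sq_nonneg _
      · exact le_rfl
    have hgap : ρ * ∑ x ∈ U, u x ^ 2 ≤ 1 / (4 * D) * energy a U u := by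
      refine le_trans (le_of_eq ?_) (mul_le_mul_of_nonneg_left (poincare ha hsymm hD hD0 hα hU hT
        fun x hx => avoidProb_eq_zero hx l) (by positivity))
      rw [hρ]
      ring
    calc _ ≤ (1 - ρ) * ∑ x ∈ U, u x ^ 2 := by
          linarith [sum_lazyStep_sq_le ha hsymm hD hD0 u]
      _ ≤ Real.exp (-ρ) * (U.card * Real.exp (-(ρ * l))) :=
          mul_le_mul (Real.one_sub_le_exp_neg ρ) ih (Finset.sum_nonneg fun x _ => sq_nonneg _)
            (Real.exp_pos _).le
      _ = _ := by
          rw [mul_left_comm, ← Real.exp_add]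
          congr 2
          push_cast
          ring

lemma sum_avoidProb_le (ha : ∀ x y, 0 ≤ a x y) (hsymm : ∀ x y, a x y = a y x)
    (hD : ∀ x ∈ U, ∑ y ∈ U, a x y ≤ D) (hD0 : 0 < D) (hα : 0 < α) (hU : ExpandsOn a U α)
    (hT : T ⊆ U) (l : ℕ) :
    ∑ x ∈ U, avoidProb a D U T l x
      ≤ U.card * Real.exp (-(α ^ 2 / (16 * D ^ 2) * (T.card / U.card) * l) / 2) := by
  set r := α ^ 2 / (16 * D ^ 2) * (T.card / U.card : ℝ) * l
  refine (abs_le_of_sq_le_sq' ?_ (by positivity)).2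
  calc (∑ x ∈ U, avoidProb a D U T l x) ^ 2
      ≤ U.card * (U.card * Real.exp (-r)) := sq_sum_le_card_mul_sum_sq.trans <| by
        gcongr
        exact sum_sq_avoidProb_le ha hsymm hD hD0 hα hU hT l
    _ = _ := by
        rw [mul_pow, ← Real.exp_nat_mul, Nat.cast_ofNat, mul_div_cancel₀ _ two_ne_zero]
        ring

end KilledWalk

section RandomWalkPaths

variable {W ι : Type*} {a : W → W → ℝ} {H : SimpleGraph W} {U : Finset W} {D α : ℝ}

lemma sum_lazyStep (a : W → W → ℝ) (D : ℝ) (U : Finset W) (I : Finset ι) (u : ι → W → ℝ) (x : W) :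
    ∑ i ∈ I, lazyStep a D U (u i) x = lazyStep a D U (fun z => ∑ i ∈ I, u i z) x := by
  simp only [lazyStep, Finset.sum_sub_distrib, ← Finset.mul_sum]
  rw [Finset.sum_comm]
  simp only [← Finset.mul_sum, Finset.sum_sub_distrib]

lemma exists_le_lazyStep (ha : ∀ x y, 0 ≤ a x y) (hD0 : 0 < D) {x : W} (hD : ∑ y ∈ U, a x y ≤ D)
    (u : W → ℝ) : ∃ y, (y = x ∨ y ∈ U ∧ 0 < a x y) ∧ u y ≤ lazyStep a D U u x := by
  by_contra! hcon
  set v := lazyStep a D U u x with hv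
  have hx := hcon x (Or.inl rfl)
  have hsum : ∑ y ∈ U, a x y * (u x - u y) ≤ D * (u x - v) := by
    calc _ ≤ ∑ y ∈ U, a x y * (u x - v) := Finset.sum_le_sum fun y hy => by
          rcases (ha x y).eq_or_lt with h | h
          · simp [← h]
          · exact mul_le_mul_of_nonneg_left (by linarith [hcon y (Or.inr ⟨hy, h⟩)]) h.le
      _ ≤ _ := by
          rw [← Finset.sum_mul]
          exact mul_le_mul_of_nonneg_right hD (by linarith)
  have hhalf : 1 / (2 * D) * ∑ y ∈ U, a x y * (u x - u y) ≤ (u x - v) / 2 := by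
    calc _ ≤ 1 / (2 * D) * (D * (u x - v)) := by gcongr
      _ = _ := by field_simp
  rw [lazyStep] at hv
  linarith

lemma induce_singleton_connected (H : SimpleGraph W) (x : W) :
    (H.induce (↑({x} : Finset W) : Set W)).Connected := by
  rw [Finset.coe_singleton]
  exact SimpleGraph.Connected.of_subsingleton

lemma induce_insert_connected {C : Finset W} {x y : W} (hC : (H.induce (C : Set W)).Connected)
    (hy : y ∈ C) (hxy : H.Adj x y) : (H.induce (↑(insert x C) : Set W)).Connected := by
  rw [Finset.coe_insert, ← Set.singleton_union]
  exact SimpleGraph.connected_induce_union SimpleGraph.Preconnected.of_subsingleton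
    hC.preconnected (Set.mem_singleton x) hy hxy

/-- Adjacency in `H` as a weight on pairs of vertices. -/
def adjWeight (H : SimpleGraph W) (x y : W) : ℝ := if H.Adj x y then 1 else 0

lemma adj_of_adjWeight_pos {x y : W} (h : 0 < adjWeight H x y) : H.Adj x y := by
  by_contra hxy
  simp [adjWeight, hxy] at h

lemma adjWeight_nonneg (H : SimpleGraph W) (x y : W) : 0 ≤ adjWeight H x y := by
  rw [adjWeight]
  split_ifs <;> norm_num

lemma adjWeight_comm (H : SimpleGraph W) (x y : W) : adjWeight H x y = adjWeight H y x := by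
  simp only [adjWeight, H.adj_comm]

lemma exists_connected_card_disjoint_le (hD : ∀ x ∈ U, ∑ y ∈ U, adjWeight H x y ≤ D)
    (hD0 : 0 < D) (T : ι → Finset W) (l : ℕ) (I : Finset ι) {x : W} (hx : x ∈ U) :
    ∃ C ⊆ U, x ∈ C ∧ (H.induce (C : Set W)).Connected ∧ C.card ≤ l + 1 ∧
      ({i ∈ I | Disjoint C (T i)}.card : ℝ) ≤ ∑ i ∈ I, avoidProb (adjWeight H) D U (T i) l x := by
  induction l generalizing I x with
  | zero =>
    refine ⟨{x}, by simpa using hx, by simp, induce_singleton_connected H x, by simp, ?_⟩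
    rw [Finset.card_filter]
    push_cast
    refine Finset.sum_le_sum fun i _ => ?_
    simp only [Finset.disjoint_singleton_left, avoidProb]
    split_ifs <;> simp_all
  | succ l ih =>
    set I' := {i ∈ I | x ∉ T i} with hI'
    obtain ⟨y, hy, hle⟩ := exists_le_lazyStep (adjWeight_nonneg H) hD0 (hD x hx)
      (fun z => ∑ i ∈ I', avoidProb (adjWeight H) D U (T i) l z)
    have hyU : y ∈ U := hy.elim (fun h => h ▸ hx) And.left
    obtain ⟨C, hCU, hyC, hCc, hCl, hCm⟩ := ih I' hyU
    have hinsert : (H.induce (↑(insert x C) : Set W)).Connected := by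
      rcases hy with rfl | h
      · rwa [Finset.insert_eq_of_mem hyC]
      · exact induce_insert_connected hCc hyC (adj_of_adjWeight_pos h.2)
    refine ⟨insert x C, Finset.insert_subset hx hCU, Finset.mem_insert_self _ _, hinsert,
      (Finset.card_insert_le _ _).trans (by omega), ?_⟩
    have hmissed : {i ∈ I | Disjoint (insert x C) (T i)} = {i ∈ I' | Disjoint C (T i)} := by
      rw [hI', Finset.filter_filter]
      exact Finset.filter_congr fun i _ => Finset.disjoint_insert_left
    have hstep : ∑ i ∈ I, avoidProb (adjWeight H) D U (T i) (l + 1) x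
        = ∑ i ∈ I', lazyStep (adjWeight H) D U (avoidProb (adjWeight H) D U (T i) l) x := by
      rw [hI', Finset.sum_filter]
      exact Finset.sum_congr rfl fun i _ => by rw [avoidProb, ite_not]
    rw [hmissed, hstep, sum_lazyStep]
    exact hCm.trans hle

lemma exists_connected_card_disjoint_le_sum_exp (hD : ∀ x ∈ U, ∑ y ∈ U, adjWeight H x y ≤ D)
    (hD0 : 0 < D) (hα : 0 < α) (hU : ExpandsOn (adjWeight H) U α) (hne : U.Nonempty)
    {I : Finset ι} {T : ι → Finset W} (hT : ∀ i ∈ I, T i ⊆ U) (l : ℕ) :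
    ∃ C ⊆ U, (H.induce (C : Set W)).Connected ∧ C.card ≤ l + 1 ∧
      ({i ∈ I | Disjoint C (T i)}.card : ℝ)
        ≤ ∑ i ∈ I, Real.exp (-(α ^ 2 / (16 * D ^ 2) * ((T i).card / U.card) * l) / 2) := by
  have hmean : ∑ x ∈ U, ∑ i ∈ I, avoidProb (adjWeight H) D U (T i) l x ≤ ∑ _ ∈ U,
      ∑ i ∈ I, Real.exp (-(α ^ 2 / (16 * D ^ 2) * ((T i).card / U.card) * l) / 2) := by
    rw [Finset.sum_comm, Finset.sum_const, nsmul_eq_mul, Finset.mul_sum]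
    exact Finset.sum_le_sum fun i hi => sum_avoidProb_le (adjWeight_nonneg H) (adjWeight_comm H)
      hD hD0 hα hU (hT i hi) l
  obtain ⟨x, hx, hle⟩ := Finset.exists_le_of_sum_le hne hmean
  obtain ⟨C, hCU, -, hCc, hCl, hCm⟩ := exists_connected_card_disjoint_le hD hD0 T l I hx
  exact ⟨C, hCU, hCc, hCl, hCm.trans hle⟩

end RandomWalkPaths

section TruncatedDistance

variable {W ι : Type*} {H : SimpleGraph W} {U S C : Finset W} {D α : ℝ}

lemma boundaryWeight_le_mul_card_nbrsIn (hD : ∀ x ∈ U, ∑ y ∈ U, adjWeight H x y ≤ D)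
    (hS : S ⊆ U) : boundaryWeight (adjWeight H) U S ≤ D * (nbrsIn H U S).card := by
  have hsupp : ∑ y ∈ nbrsIn H U S, ∑ x ∈ S, adjWeight H x y
      = ∑ y ∈ U \ S, ∑ x ∈ S, adjWeight H x y := by
    refine Finset.sum_subset (Finset.filter_subset _ _) fun y hy hy' => ?_
    refine Finset.sum_eq_zero fun x hx => ?_
    rw [adjWeight, if_neg]
    exact fun h => hy' (Finset.mem_filter.2 ⟨hy, x, hx, h⟩)
  rw [boundaryWeight, Finset.sum_comm, ← hsupp, mul_comm, ← nsmul_eq_mul]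
  refine Finset.sum_le_card_nsmul _ _ _ fun y hy => ?_
  simp only [adjWeight_comm H _ y]
  exact (Finset.sum_le_sum_of_subset_of_nonneg hS fun x _ _ => adjWeight_nonneg H y x).trans
    (hD y (mem_nbrsIn.1 hy).1.1)

lemma card_nbrsIn_le_boundaryWeight (H : SimpleGraph W) (U S : Finset W) :
    ((nbrsIn H U S).card : ℝ) ≤ boundaryWeight (adjWeight H) U S := by
  rw [boundaryWeight, Finset.sum_comm, ← mul_one ((nbrsIn H U S).card : ℝ), ← nsmul_eq_mul,
    ← Finset.sum_const]
  refine (Finset.sum_le_sum fun y hy => ?_).trans (Finset.sum_le_sum_of_subset_of_nonneg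
    (Finset.filter_subset _ _) fun y _ _ => Finset.sum_nonneg fun x _ => adjWeight_nonneg H x y)
  obtain ⟨-, x, hx, hxy⟩ := mem_nbrsIn.1 hy
  refine le_trans ?_ (Finset.single_le_sum (fun z _ => adjWeight_nonneg H z y) hx)
  simp [adjWeight, hxy]

lemma boundaryWeight_sdiff (H : SimpleGraph W) (hS : S ⊆ U) :
    boundaryWeight (adjWeight H) U (U \ S) = boundaryWeight (adjWeight H) U S := by
  rw [boundaryWeight, boundaryWeight, Finset.sdiff_sdiff_eq_self hS, Finset.sum_comm]
  exact Finset.sum_congr rfl fun x _ => Finset.sum_congr rfl fun y _ => adjWeight_comm H y x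

lemma exists_connected_of_mem_ballIn (hS : S ⊆ U) (r : ℕ) {x : W} (hx : x ∈ ballIn H U S r) :
    ∃ P ⊆ U, x ∈ P ∧ (H.induce (P : Set W)).Connected ∧ P.card ≤ r + 1 ∧ ¬ Disjoint P S := by
  induction r generalizing x with
  | zero =>
    refine ⟨{x}, by simpa using hS hx, by simp, induce_singleton_connected H x, by simp, ?_⟩
    rwa [Finset.disjoint_singleton_left, not_not]
  | succ r ih =>
    rcases Finset.mem_union.1 hx with h | h
    · obtain ⟨P, hPU, hxP, hPc, hPr, hPS⟩ := ih h
      exact ⟨P, hPU, hxP, hPc, by omega, hPS⟩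
    · obtain ⟨⟨hxU, -⟩, y, hy, hyx⟩ := mem_nbrsIn.1 h
      obtain ⟨P, hPU, hyP, hPc, hPr, hPS⟩ := ih hy
      exact ⟨insert x P, Finset.insert_subset hxU hPU, Finset.mem_insert_self _ _,
        induce_insert_connected hPc hyP hyx.symm, (Finset.card_insert_le _ _).trans (by omega),
        fun h => hPS (Finset.disjoint_of_subset_left (Finset.subset_insert _ _) h)⟩

lemma half_lt_card_ballIn_or_le (hD : ∀ x ∈ U, ∑ y ∈ U, adjWeight H x y ≤ D) (hD0 : 0 < D)
    (hα : 0 < α) (hU : ExpandsOn (adjWeight H) U α) (hS : S ⊆ U) (r : ℕ) :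
    (U.card : ℝ) / 2 < (ballIn H U S r).card ∨
      (1 + r * (α / D)) * S.card ≤ (ballIn H U S r).card := by
  induction r with
  | zero => right; simp [ballIn]
  | succ r ih =>
    set B := ballIn H U S r
    have hcard : ((ballIn H U S (r + 1)).card : ℝ) = B.card + (nbrsIn H U B).card := by
      exact_mod_cast card_ballIn_succ H U S r
    have := ((nbrsIn H U B).card).cast_nonneg (α := ℝ)
    rcases ih.imp_left fun h => show (U.card : ℝ) / 2 < _ from h with hbig | ih
    · left; linarith
    by_cases hbig : (U.card : ℝ) / 2 < B.card
    · left; linarith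
    right
    have hBU : 2 * B.card ≤ U.card := by
      have : 2 * (B.card : ℝ) ≤ U.card := by linarith
      exact_mod_cast this
    have hBS : (S.card : ℝ) ≤ B.card := by
      exact_mod_cast Finset.card_le_card (ballIn_mono H U S (Nat.zero_le r))
    have hnbrs : α / D * S.card ≤ (nbrsIn H U B).card := by
      rw [div_mul_eq_mul_div, div_le_iff₀ hD0, mul_comm ((nbrsIn H U B).card : ℝ)]
      calc α * S.card ≤ α * B.card := by gcongr
        _ ≤ boundaryWeight (adjWeight H) U B := hU _ (ballIn_subset H hS r) hBU
        _ ≤ _ := boundaryWeight_le_mul_card_nbrsIn hD (ballIn_subset H hS r)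
    rw [hcard]
    push_cast
    linarith

/-- The distance from `C` to `S` in the graph induced on `U`, truncated at `m`. -/
def truncDist (H : SimpleGraph W) (U : Finset W) (m : ℕ) (C S : Finset W) : ℕ :=
  {r ∈ Finset.range m | Disjoint C (ballIn H U S r)}.card

lemma not_disjoint_ballIn_truncDist {m : ℕ} (h : truncDist H U m C S < m) :
    ¬ Disjoint C (ballIn H U S (truncDist H U m C S)) := by
  intro hdisj
  have hsub : Finset.range (truncDist H U m C S + 1)
      ⊆ {r ∈ Finset.range m | Disjoint C (ballIn H U S r)} := fun r hr => by
    rw [Finset.mem_range] at hr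
    exact Finset.mem_filter.2 ⟨Finset.mem_range.2 (by omega),
      Finset.disjoint_of_subset_right (ballIn_mono H U S (by omega)) hdisj⟩
  have := Finset.card_le_card hsub
  rw [Finset.card_range, ← truncDist] at this
  omega

lemma exists_connected_joining {m : ℕ} (hS : S ⊆ U) (h : truncDist H U m C S < m) :
    ∃ P ⊆ U, (H.induce (P : Set W)).Connected ∧ P.card ≤ truncDist H U m C S + 1 ∧
      ¬ Disjoint C P ∧ ¬ Disjoint P S := by
  obtain ⟨x, hxC, hx⟩ := Finset.not_disjoint_iff.1 (not_disjoint_ballIn_truncDist h)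
  obtain ⟨P, hPU, hxP, hPc, hPr, hPS⟩ := exists_connected_of_mem_ballIn hS _ hx
  exact ⟨P, hPU, hPc, hPr, Finset.not_disjoint_iff.2 ⟨x, hxC, hxP⟩, hPS⟩

lemma induce_union_biUnion_connected (hC : (H.induce (C : Set W)).Connected) (J : Finset ι)
    {P : ι → Finset W} (hP : ∀ j ∈ J, (H.induce (P j : Set W)).Connected)
    (hmeet : ∀ j ∈ J, ¬ Disjoint C (P j)) :
    (H.induce (↑(C ∪ J.biUnion P) : Set W)).Connected := by
  induction J using Finset.induction_on with
  | empty => rwa [Finset.biUnion_empty, Finset.union_empty]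
  | insert j J _ ih =>
    rw [Finset.forall_mem_insert] at hP hmeet
    obtain ⟨z, hzC, hzP⟩ := Finset.not_disjoint_iff.1 hmeet.1
    have hsplit : C ∪ (insert j J).biUnion P = (C ∪ J.biUnion P) ∪ P j := by
      rw [Finset.biUnion_insert, Finset.union_comm (P j), Finset.union_assoc]
    rw [hsplit, Finset.coe_union]
    exact SimpleGraph.induce_union_connected (ih hP.2 hmeet.2).preconnected hP.1.preconnected
      ⟨z, Finset.mem_coe.2 (Finset.mem_union_left _ hzC), Finset.mem_coe.2 hzP⟩

lemma exists_connected_superset_meeting {m : ℕ} {J : Finset ι} {S : ι → Finset W}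
    (hSU : ∀ j ∈ J, S j ⊆ U) (hCU : C ⊆ U) (hC : (H.induce (C : Set W)).Connected)
    (hlt : ∀ j ∈ J, truncDist H U m C (S j) < m) :
    ∃ C' ⊆ U, (H.induce (C' : Set W)).Connected ∧
      C'.card ≤ C.card + ∑ j ∈ J, (truncDist H U m C (S j) + 1) ∧ ∀ j ∈ J, ¬ Disjoint C' (S j) := by
  choose! P hPU hPc hPl hCP hPS using fun j hj => exists_connected_joining (hSU j hj) (hlt j hj)
  refine ⟨C ∪ J.biUnion P, Finset.union_subset hCU (Finset.biUnion_subset.2 hPU),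
    induce_union_biUnion_connected hC J hPc hCP, (Finset.card_union_le _ _).trans ?_, ?_⟩
  · gcongr
    exact Finset.card_biUnion_le.trans (Finset.sum_le_sum hPl)
  · exact fun j hj h => hPS j hj (Finset.disjoint_of_subset_left
      ((Finset.subset_biUnion_of_mem P hj).trans Finset.subset_union_right) h)

lemma exists_connected_superset_le_card (hα : 0 < α) (hU : ExpandsOn (adjWeight H) U α) {s : ℕ}
    (hsU : 2 * s ≤ U.card) (hCU : C ⊆ U) (hC : (H.induce (C : Set W)).Connected) {j : ℕ}
    (hj : j ≤ s) : ∃ C' ⊆ U, C ⊆ C' ∧ (H.induce (C' : Set W)).Connected ∧ j ≤ C'.card ∧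
      C'.card ≤ max C.card s := by
  induction j with
  | zero => exact ⟨C, hCU, subset_rfl, hC, by omega, le_max_left _ _⟩
  | succ j ih =>
    obtain ⟨C', hCU', hCC', hCc', hjC', hmax⟩ := ih (by omega)
    by_cases hlarge : j + 1 ≤ C'.card
    · exact ⟨C', hCU', hCC', hCc', hlarge, hmax⟩
    have hne : 0 < C'.card := Finset.card_pos.2 (Finset.coe_nonempty.1
      (Set.nonempty_coe_sort.1 hCc'.nonempty))
    have hbd : 0 < boundaryWeight (adjWeight H) U C' :=
      lt_of_lt_of_le (by positivity) (hU C' hCU' (by omega))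
    obtain ⟨x, hx, y, hy, hxy⟩ : ∃ x ∈ C', ∃ y ∈ U \ C', H.Adj x y := by
      by_contra! hcon
      refine hbd.ne' (Finset.sum_eq_zero fun x hx => Finset.sum_eq_zero fun y hy => ?_)
      rw [adjWeight, if_neg (hcon x hx y hy)]
    rw [Finset.mem_sdiff] at hy
    refine ⟨insert y C', Finset.insert_subset hy.1 hCU', hCC'.trans (Finset.subset_insert _ _),
      induce_insert_connected hCc' hx hxy.symm, ?_, ?_⟩ <;>
      rw [Finset.card_insert_of_notMem hy.2]
    · omega
    · exact le_max_of_le_right (by omega)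

end TruncatedDistance

section Hitting

variable {W ι : Type*} {H : SimpleGraph W} {U : Finset W} {D α : ℝ}

/-- A bound for the expected distance to a target when the avoidance probabilities decay at rate
`γ` and the balls around the target grow at rate `β`; see `sum_exp_le_hitConst`. -/
def hitConst (γ β : ℝ) : ℝ := 1 / (1 - Real.exp (-(γ * β / 2))) + 32 / γ ^ 2

lemma hitConst_nonneg {γ β : ℝ} (hγ : 0 < γ) (hβ : 0 < β) : 0 ≤ hitConst γ β := by
  have : Real.exp (-(γ * β / 2)) ≤ 1 := Real.exp_le_one_iff.2 (neg_nonpos.2 (by positivity))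
  exact add_nonneg (div_nonneg zero_le_one (by linarith)) (by positivity)

lemma exp_le_geom_add_exp {γ β s m c : ℝ} (hγ : 0 < γ) (hβ : 0 < β) (hs : 0 < s) (hm : 0 < m)
    (hms : m ≤ s ^ 2) {r : ℕ} (hc : m / 2 < c ∨ r * β * s ≤ c) :
    Real.exp (-(γ * (c / m) * s) / 2)
      ≤ Real.exp (-(γ * β / 2)) ^ r + Real.exp (-(γ * s / 4)) := by
  rw [← Real.exp_nat_mul]
  rcases hc with h | h
  · refine le_add_of_nonneg_of_le (Real.exp_pos _).le (Real.exp_le_exp.2 ?_)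
    have hhalf : 1 / 2 ≤ c / m := by rw [le_div_iff₀ hm]; linarith
    have : γ * (1 / 2) * s ≤ γ * (c / m) * s := by gcongr
    linarith
  · refine le_add_of_le_of_nonneg (Real.exp_le_exp.2 ?_) (Real.exp_pos _).le
    have hlin : r * β ≤ c / m * s := by
      rw [div_mul_eq_mul_div, le_div_iff₀ hm]
      calc r * β * m ≤ r * β * s ^ 2 := by gcongr
        _ = r * β * s * s := by ring
        _ ≤ c * s := by gcongr
    have : γ * (r * β) ≤ γ * (c / m * s) := by gcongr
    linarith

lemma mul_exp_neg_le {γ s m : ℝ} (hγ : 0 < γ) (hs : 0 < s) (hms : m ≤ s ^ 2) :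
    m * Real.exp (-(γ * s / 4)) ≤ 32 / γ ^ 2 := by
  rw [Real.exp_neg, ← div_eq_mul_inv, div_le_div_iff₀ (Real.exp_pos _) (by positivity)]
  have hnonneg : 0 ≤ γ * s / 4 := by positivity
  have hsq : m * γ ^ 2 ≤ s ^ 2 * γ ^ 2 := by gcongr
  nlinarith [Real.quadratic_le_exp_of_nonneg hnonneg]

lemma sum_exp_le_hitConst {γ β s : ℝ} {m : ℕ} (hγ : 0 < γ) (hβ : 0 < β) (hs : 0 < s) (hm : 0 < m)
    (hms : m ≤ s ^ 2) {c : ℕ → ℝ} (hc : ∀ r : ℕ, (m : ℝ) / 2 < c r ∨ r * β * s ≤ c r) :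
    ∑ r ∈ Finset.range m, Real.exp (-(γ * (c r / m) * s) / 2) ≤ hitConst γ β := by
  have hlt : Real.exp (-(γ * β / 2)) < 1 :=
    Real.exp_lt_one_iff.2 (neg_neg_iff_pos.2 (by positivity))
  have hgeom : ∑ r ∈ Finset.range m, Real.exp (-(γ * β / 2)) ^ r
      ≤ 1 / (1 - Real.exp (-(γ * β / 2))) := by
    rw [one_div, ← tsum_geometric_of_lt_one (Real.exp_pos _).le hlt]
    exact Summable.sum_le_tsum _ (fun r _ => by positivity)
      (summable_geometric_of_lt_one (Real.exp_pos _).le hlt)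
  calc _ ≤ ∑ r ∈ Finset.range m, (Real.exp (-(γ * β / 2)) ^ r + Real.exp (-(γ * s / 4))) :=
        Finset.sum_le_sum fun r _ =>
          exp_le_geom_add_exp hγ hβ hs (by exact_mod_cast hm) hms (hc r)
    _ ≤ _ := by
        rw [Finset.sum_add_distrib, Finset.sum_const, nsmul_eq_mul, Finset.card_range]
        exact add_le_add hgeom (mul_exp_neg_le hγ hs hms)

lemma exists_connected_sum_truncDist_le (hD : ∀ x ∈ U, ∑ y ∈ U, adjWeight H x y ≤ D)
    (hD0 : 0 < D) (hα : 0 < α) (hU : ExpandsOn (adjWeight H) U α) (hne : U.Nonempty) {s : ℕ}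
    (hUs : U.card ≤ s ^ 2) {J : Finset ι} {S : ι → Finset W} (hSU : ∀ j ∈ J, S j ⊆ U)
    (hS : ∀ j ∈ J, α * s ≤ (S j).card) :
    ∃ C ⊆ U, (H.induce (C : Set W)).Connected ∧ C.card ≤ s + 1 ∧
      ∑ j ∈ J, (truncDist H U U.card C (S j) : ℝ)
        ≤ J.card * hitConst (α ^ 2 / (16 * D ^ 2)) (α ^ 2 / D) := by
  have hs : 0 < s := Nat.pos_of_ne_zero fun h => by
    have := hne.card_pos
    simp_all
  obtain ⟨C, hCU, hCc, hCs, hmissed⟩ := exists_connected_card_disjoint_le_sum_exp hD hD0 hα hU hne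
    (I := J ×ˢ Finset.range U.card) (T := fun i => ballIn H U (S i.1) i.2)
    (fun i hi => ballIn_subset H (hSU _ (Finset.mem_product.1 hi).1) _) s
  refine ⟨C, hCU, hCc, hCs, ?_⟩
  calc ∑ j ∈ J, (truncDist H U U.card C (S j) : ℝ)
      = ({i ∈ J ×ˢ Finset.range U.card | Disjoint C (ballIn H U (S i.1) i.2)}.card : ℝ) := by
        simp only [truncDist, Finset.card_filter, Finset.sum_product, Nat.cast_sum]
    _ ≤ _ := hmissed
    _ ≤ ∑ j ∈ J, hitConst (α ^ 2 / (16 * D ^ 2)) (α ^ 2 / D) := by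
        rw [Finset.sum_product]
        refine Finset.sum_le_sum fun j hj => ?_
        refine sum_exp_le_hitConst (by positivity) (by positivity) (by exact_mod_cast hs)
          hne.card_pos (by exact_mod_cast hUs)
          (c := fun r => ((ballIn H U (S j) r).card : ℝ)) fun r => ?_
        refine (half_lt_card_ballIn_or_le hD hD0 hα hU (hSU j hj) r).imp_right fun h => ?_
        calc r * (α ^ 2 / D) * s = r * (α / D) * (α * s) := by ring
          _ ≤ (1 + r * (α / D)) * (α * s) := by gcongr; linarith
          _ ≤ (1 + r * (α / D)) * (S j).card := by gcongr; exact hS j hj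
          _ ≤ _ := h
    _ = _ := by rw [Finset.sum_const, nsmul_eq_mul]

lemma exists_connected_hitting (hD : ∀ x ∈ U, ∑ y ∈ U, adjWeight H x y ≤ D) (hD0 : 0 < D)
    (hα : 0 < α) (hU : ExpandsOn (adjWeight H) U α) {s : ℕ} (hs : 0 < s) (hUs : U.card ≤ s ^ 2)
    (hsU : 2 * s ≤ U.card) {J : Finset ι}
    (hJ : J.card * (hitConst (α ^ 2 / (16 * D ^ 2)) (α ^ 2 / D) + 1) ≤ s) {S : ι → Finset W}
    (hSU : ∀ j ∈ J, S j ⊆ U) (hS : ∀ j ∈ J, α * s ≤ (S j).card) :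
    ∃ C ⊆ U, (H.induce (C : Set W)).Connected ∧ C.card ≤ 3 * s ∧ ∀ j ∈ J, ¬ Disjoint C (S j) := by
  have hne : U.Nonempty := Finset.card_pos.1 (by omega)
  obtain ⟨C, hCU, hCc, hCs, hdist⟩ :=
    exists_connected_sum_truncDist_le hD hD0 hα hU hne hUs hSU hS
  have hsum : ∑ j ∈ J, (truncDist H U U.card C (S j) + 1) ≤ s := by
    rw [Finset.sum_add_distrib, Finset.sum_const, smul_eq_mul, mul_one]
    have : ((∑ j ∈ J, truncDist H U U.card C (S j) : ℕ) : ℝ) + J.card ≤ s := by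
      push_cast
      linarith
    exact_mod_cast this
  have hlt : ∀ j ∈ J, truncDist H U U.card C (S j) < U.card := fun j hj => by
    have := Finset.single_le_sum (f := fun j => truncDist H U U.card C (S j) + 1)
      (fun i _ => Nat.zero_le _) hj
    omega
  obtain ⟨C', hCU', hCc', hcard, hmeet⟩ := exists_connected_superset_meeting hSU hCU hCc hlt
  exact ⟨C', hCU', hCc', by omega, hmeet⟩

end Hitting

section BranchFamilies

variable {W : Type*} {H : SimpleGraph W} {s : ℕ} {C : Finset W} {ℬ ℬ' : Finset (Finset W)}

/-- Connected, pairwise disjoint and pairwise adjacent branch sets of a complete minor, with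
between `s` and `3 * s` vertices each. -/
structure IsBranchFamily (H : SimpleGraph W) (s : ℕ) (ℬ : Finset (Finset W)) : Prop where
  connected : ∀ B ∈ ℬ, (H.induce (B : Set W)).Connected
  le_card : ∀ B ∈ ℬ, s ≤ B.card
  card_le : ∀ B ∈ ℬ, B.card ≤ 3 * s
  disjoint : (ℬ : Set (Finset W)).PairwiseDisjoint id
  adj : (ℬ : Set (Finset W)).Pairwise fun B B' => ∃ x ∈ B, ∃ y ∈ B', H.Adj x y

lemma IsBranchFamily.subset (h : IsBranchFamily H s ℬ) (hℬ : ℬ' ⊆ ℬ) :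
    IsBranchFamily H s ℬ' where
  connected B hB := h.connected B (hℬ hB)
  le_card B hB := h.le_card B (hℬ hB)
  card_le B hB := h.card_le B (hℬ hB)
  disjoint := h.disjoint.subset (Finset.coe_subset.2 hℬ)
  adj := h.adj.mono (Finset.coe_subset.2 hℬ)

lemma IsBranchFamily.insert (h : IsBranchFamily H s ℬ) (hC : (H.induce (C : Set W)).Connected)
    (hsC : s ≤ C.card) (hCs : C.card ≤ 3 * s) (hdisj : ∀ B ∈ ℬ, Disjoint C B)
    (hadj : ∀ B ∈ ℬ, ∃ x ∈ C, ∃ y ∈ B, H.Adj x y) : IsBranchFamily H s (insert C ℬ) where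
  connected := (Finset.forall_mem_insert _ _ _).2 ⟨hC, h.connected⟩
  le_card := (Finset.forall_mem_insert _ _ _).2 ⟨hsC, h.le_card⟩
  card_le := (Finset.forall_mem_insert _ _ _).2 ⟨hCs, h.card_le⟩
  disjoint := by
    rw [Finset.coe_insert]
    exact h.disjoint.insert fun B hB _ => hdisj B hB
  adj := by
    rw [Finset.coe_insert]
    refine h.adj.insert fun B hB _ => ⟨hadj B hB, ?_⟩
    obtain ⟨x, hx, y, hy, hxy⟩ := hadj B hB
    exact ⟨y, hy, x, hx, hxy.symm⟩

/-- `H` has a complete minor with at least `δ √n` branch sets. -/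
def HasLargeCompleteMinor [Fintype W] (δ : ℝ) (H : SimpleGraph W) : Prop :=
  ∃ t : ℕ, δ * Real.sqrt (Fintype.card W) ≤ (t : ℝ) ∧
    ∃ f : Fin t → Finset W,
      (∀ i j, i ≠ j → Disjoint (f i) (f j)) ∧
      (∀ i, (H.induce (↑(f i) : Set W)).Connected) ∧
      (∀ i j, i ≠ j → ∃ x ∈ f i, ∃ y ∈ f j, H.Adj x y)

lemma IsBranchFamily.hasLargeCompleteMinor [Fintype W] {δ : ℝ} (h : IsBranchFamily H s ℬ)
    (hδ : δ * Real.sqrt (Fintype.card W) ≤ ℬ.card) : HasLargeCompleteMinor δ H := by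
  let e := ℬ.equivFin.symm
  have hne : ∀ i j, i ≠ j → (e i : Finset W) ≠ e j := fun i j hij heq =>
    hij (e.injective (Subtype.ext heq))
  exact ⟨ℬ.card, hδ, fun i => e i, fun i j hij => h.disjoint (e i).2 (e j).2 (hne i j hij),
    fun i => h.connected _ (e i).2, fun i j hij => h.adj (e i).2 (e j).2 (hne i j hij)⟩

end BranchFamilies

section Separators

variable {W : Type*} {H : SimpleGraph W} {α m : ℝ} {A B S U U' Z : Finset W}

lemma card_nbrsIn_union_le (H : SimpleGraph W) (hU : U' ⊆ U) (S T : Finset W) :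
    (nbrsIn H U' (S ∪ T)).card ≤ (nbrsIn H U S).card + (nbrsIn H U T).card := by
  refine (Finset.card_le_card fun y hy => ?_).trans (Finset.card_union_le _ _)
  obtain ⟨⟨hyU, hyST⟩, x, hx, hxy⟩ := mem_nbrsIn.1 hy
  rw [Finset.mem_union, not_or] at hyST
  exact Finset.mem_union.2 <| (Finset.mem_union.1 hx).imp
    (fun hx => mem_nbrsIn.2 ⟨⟨hU hyU, hyST.1⟩, x, hx, hxy⟩)
    (fun hx => mem_nbrsIn.2 ⟨⟨hU hyU, hyST.2⟩, x, hx, hxy⟩)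

lemma IsWellLinkedSet.three_mul_card_inter_le (hZ : IsWellLinkedSet H Z m)
    (hS : IsSeparation H A B S) (hSm : S.card ≤ m) (hSZ : 12 * S.card ≤ Z.card)
    (hA : 3 * (A ∩ Z).card ≤ 2 * Z.card) : 3 * (A ∩ Z).card ≤ Z.card := by
  by_contra! hlt
  have hcover : Z ⊆ (A ∩ Z) ∪ (B ∩ Z) ∪ S := fun z hz => by
    simp only [Finset.mem_union, Finset.mem_inter]
    have := hS.mem_or z
    tauto
  have hcard : Z.card ≤ (A ∩ Z).card + (B ∩ Z).card + S.card :=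
    (Finset.card_le_card hcover).trans ((Finset.card_union_le _ _).trans
      (Nat.add_le_add_right (Finset.card_union_le _ _) _))
  exact (hZ A B S hS (by omega) (by omega)).not_ge hSm

lemma exists_card_nbrsIn_le_of_not_expandsOn (hα : 0 ≤ α) (hU : ¬ ExpandsOn (adjWeight H) U α)
    (Z : Finset W) : ∃ T ⊆ U, T.Nonempty ∧ (nbrsIn H U T).card ≤ α * T.card ∧
      2 * (T ∩ Z).card ≤ (U ∩ Z).card := by
  simp only [ExpandsOn, not_forall, not_le] at hU
  obtain ⟨S, hSU, hSsmall, hS⟩ := hU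
  have hSne : S.Nonempty := Finset.nonempty_iff_ne_empty.2 fun h => by
    simp [h, boundaryWeight] at hS
  have hcompl : S.card ≤ (U \ S).card := by
    rw [Finset.card_sdiff_of_subset hSU]
    omega
  have hinter : (S ∩ Z).card + ((U \ S) ∩ Z).card = (U ∩ Z).card := by
    rw [← Finset.card_union_of_disjoint (Finset.disjoint_sdiff.mono Finset.inter_subset_left
      Finset.inter_subset_left), ← Finset.union_inter_distrib_right,
      Finset.union_sdiff_of_subset hSU]
  rcases le_total (S ∩ Z).card ((U \ S) ∩ Z).card with hle | hle
  · exact ⟨S, hSU, hSne, (card_nbrsIn_le_boundaryWeight H U S).trans hS.le, by omega⟩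
  · refine ⟨U \ S, Finset.sdiff_subset, Finset.card_pos.1 (hSne.card_pos.trans_le hcompl), ?_,
      by omega⟩
    calc _ ≤ boundaryWeight (adjWeight H) U (U \ S) := card_nbrsIn_le_boundaryWeight H U _
      _ ≤ α * S.card := (boundaryWeight_sdiff H hSU).trans_le hS.le
      _ ≤ α * (U \ S).card := by gcongr

end Separators

section PartialMinors

variable {W : Type*} [Fintype W] {H : SimpleGraph W} {s t : ℕ} {α m Δ : ℝ}
  {B C T X Z : Finset W} {ℬ ℬ' : Finset (Finset W)}

/-- The vertices outside `X` and outside all members of `ℬ`. -/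
def restVerts (X : Finset W) (ℬ : Finset (Finset W)) : Finset W := (X ∪ ℬ.biUnion id)ᶜ

/-- A partial construction of a complete minor with `t` branch sets: a family of branch sets,
together with a discarded set `X` that has a small boundary among the remaining vertices and holds
at most a third of `Z`. -/
structure IsPartialMinor (H : SimpleGraph W) (s t : ℕ) (α : ℝ) (Z X : Finset W)
    (ℬ : Finset (Finset W)) : Prop extends IsBranchFamily H s ℬ where
  disjoint_discarded : ∀ B ∈ ℬ, Disjoint B X
  card_family_le : ℬ.card ≤ t
  boundary_le : (nbrsIn H (restVerts X ℬ) X).card ≤ α * X.card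
  card_inter_le : 3 * (X ∩ Z).card ≤ Z.card

lemma mem_restVerts {x : W} : x ∈ restVerts X ℬ ↔ x ∉ X ∧ ∀ B ∈ ℬ, x ∉ B := by
  simp [restVerts]

lemma isSeparation_restVerts (H : SimpleGraph W) (hX : ∀ B ∈ ℬ, Disjoint B X) :
    IsSeparation H X (restVerts X ℬ \ nbrsIn H (restVerts X ℬ) X)
      (ℬ.biUnion id ∪ nbrsIn H (restVerts X ℬ) X) where
  disjoint := Finset.disjoint_right.2 fun _ hx => (mem_restVerts.1 (Finset.mem_sdiff.1 hx).1).1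
  disjoint_left := by
    rw [Finset.disjoint_union_right, Finset.disjoint_biUnion_right]
    exact ⟨fun B hB => (hX B hB).symm, Finset.disjoint_right.2 fun _ hx => (mem_nbrsIn.1 hx).1.2⟩
  disjoint_right := by
    refine Finset.disjoint_union_right.2 ⟨?_, Finset.sdiff_disjoint⟩
    rw [Finset.disjoint_biUnion_right]
    exact fun B hB => Finset.disjoint_left.2 fun x hx =>
      (mem_restVerts.1 (Finset.mem_sdiff.1 hx).1).2 B hB
  mem_or v := by
    simp only [Finset.mem_sdiff, Finset.mem_union, restVerts, Finset.mem_compl]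
    tauto
  not_adj x hx y hy hxy := by
    obtain ⟨hyU, hyN⟩ := Finset.mem_sdiff.1 hy
    exact hyN (mem_nbrsIn.2 ⟨⟨hyU, (mem_restVerts.1 hyU).1⟩, x, hx, hxy⟩)

lemma IsPartialMinor.card_biUnion_le (h : IsPartialMinor H s t α Z X ℬ) :
    (ℬ.biUnion id).card ≤ 3 * s * t :=
  (Finset.card_biUnion_le_card_mul ℬ id (3 * s) h.card_le).trans <|
    (Nat.mul_le_mul_right _ h.card_family_le).trans_eq (mul_comm _ _)

-- Well-linkedness improves the bound on the part of `Z` that is discarded from two thirds to one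
-- third, so that discarding can be iterated.
lemma IsPartialMinor.discard (h : IsPartialMinor H s t α Z X ℬ) (hα : 0 ≤ α)
    (hZ : IsWellLinkedSet H Z m) (hm : 3 * s * t + α * Fintype.card W ≤ m)
    (hmZ : 12 * m ≤ Z.card) (hℬ : ℬ' ⊆ ℬ) (hrest : restVerts (X ∪ T) ℬ' ⊆ restVerts X ℬ)
    (hXT : Disjoint X T) (hℬT : ∀ B ∈ ℬ', Disjoint B T)
    (hT : (nbrsIn H (restVerts X ℬ) T).card ≤ α * T.card)
    (hTZ : 3 * ((X ∪ T) ∩ Z).card ≤ 2 * Z.card) : IsPartialMinor H s t α Z (X ∪ T) ℬ' := by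
  have hdisj : ∀ B ∈ ℬ', Disjoint B (X ∪ T) := fun B hB =>
    Finset.disjoint_union_right.2 ⟨h.disjoint_discarded B (hℬ hB), hℬT B hB⟩
  have hboundary : (nbrsIn H (restVerts (X ∪ T) ℬ') (X ∪ T)).card ≤ α * (X ∪ T).card := by
    have hunion := card_nbrsIn_union_le H hrest X T
    rify at hunion
    rw [Finset.card_union_of_disjoint hXT]
    push_cast
    linarith [h.boundary_le]
  have hsep : ((ℬ'.biUnion id ∪ nbrsIn H (restVerts (X ∪ T) ℬ') (X ∪ T)).card : ℝ) ≤ m := by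
    have hfamily : (ℬ'.biUnion id).card ≤ 3 * s * t := (Finset.card_le_card
      (Finset.biUnion_subset_biUnion_of_subset_left _ hℬ)).trans h.card_biUnion_le
    have hunion := Finset.card_union_le (ℬ'.biUnion id) (nbrsIn H (restVerts (X ∪ T) ℬ') (X ∪ T))
    have huniv : α * (X ∪ T).card ≤ α * Fintype.card W := by
      gcongr
      exact Finset.card_le_univ _
    rify at hfamily hunion
    linarith
  exact
    { h.toIsBranchFamily.subset hℬ with
      disjoint_discarded := hdisj
      card_family_le := (Finset.card_le_card hℬ).trans h.card_family_le
      boundary_le := hboundary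
      card_inter_le := hZ.three_mul_card_inter_le (isSeparation_restVerts H hdisj) hsep
        (by rify; linarith) hTZ }

lemma IsPartialMinor.exists_discard_of_not_expandsOn (h : IsPartialMinor H s t α Z X ℬ)
    (hα : 0 ≤ α) (hZ : IsWellLinkedSet H Z m) (hm : 3 * s * t + α * Fintype.card W ≤ m)
    (hmZ : 12 * m ≤ Z.card) (hU : ¬ ExpandsOn (adjWeight H) (restVerts X ℬ) α) :
    ∃ T, T.Nonempty ∧ Disjoint X T ∧ IsPartialMinor H s t α Z (X ∪ T) ℬ := by
  obtain ⟨T, hTU, hTne, hT, hTZ⟩ := exists_card_nbrsIn_le_of_not_expandsOn hα hU Z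
  have hXU : Disjoint X (restVerts X ℬ) :=
    Finset.disjoint_right.2 fun x hx => (mem_restVerts.1 hx).1
  refine ⟨T, hTne, hXU.mono_right hTU, h.discard hα hZ hm hmZ subset_rfl (fun x hx => ?_)
    (hXU.mono_right hTU) (fun B hB => ?_) hT ?_⟩
  · rw [mem_restVerts, Finset.mem_union, not_or] at hx
    exact mem_restVerts.2 ⟨hx.1.1, hx.2⟩
  · exact Finset.disjoint_right.2 fun x hx => (mem_restVerts.1 (hTU hx)).2 B hB
  · have hsum : (X ∩ Z).card + (restVerts X ℬ ∩ Z).card ≤ Z.card := by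
      rw [← Finset.card_union_of_disjoint (hXU.mono Finset.inter_subset_left
        Finset.inter_subset_left)]
      exact Finset.card_le_card
        (Finset.union_subset Finset.inter_subset_right Finset.inter_subset_right)
    have hunion := Finset.card_union_le (X ∩ Z) (T ∩ Z)
    have := h.card_inter_le
    rw [Finset.union_inter_distrib_right]
    omega

lemma IsPartialMinor.discard_branchSet (h : IsPartialMinor H s t α Z X ℬ) (hα : 0 ≤ α)
    (hZ : IsWellLinkedSet H Z m) (hm : 3 * s * t + α * Fintype.card W ≤ m)
    (hmZ : 12 * m ≤ Z.card) (ht : 0 < t) (hB : B ∈ ℬ)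
    (hBnbrs : (nbrsIn H (restVerts X ℬ) B).card ≤ α * B.card) :
    IsPartialMinor H s t α Z (X ∪ B) (ℬ.erase B) := by
  refine h.discard hα hZ hm hmZ (Finset.erase_subset _ _) (fun x hx => ?_)
    (h.disjoint_discarded B hB).symm (fun B' hB' => ?_) hBnbrs ?_
  · rw [mem_restVerts, Finset.mem_union, not_or] at hx
    refine mem_restVerts.2 ⟨hx.1.1, fun B' hB' => ?_⟩
    by_cases hne : B' = B
    · exact hne ▸ hx.1.2
    · exact hx.2 B' (Finset.mem_erase.2 ⟨hne, hB'⟩)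
  · obtain ⟨hne, hB'⟩ := Finset.mem_erase.1 hB'
    exact h.disjoint hB' hB hne
  · have hsZ : 36 * s ≤ Z.card := by
      have hst : s ≤ s * t := Nat.le_mul_of_pos_right s ht
      have : 0 ≤ α * Fintype.card W := by positivity
      rify at hst ⊢
      linarith
    have hunion := Finset.card_union_le (X ∩ Z) (B ∩ Z)
    have hBs : (B ∩ Z).card ≤ 3 * s :=
      (Finset.card_le_card Finset.inter_subset_left).trans (h.card_le B hB)
    have := h.card_inter_le
    rw [Finset.union_inter_distrib_right]
    omega

lemma IsPartialMinor.insert_branchSet (h : IsPartialMinor H s t α Z X ℬ) (hlt : ℬ.card < t)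
    (hCU : C ⊆ restVerts X ℬ) (hC : (H.induce (C : Set W)).Connected) (hsC : s ≤ C.card)
    (hCs : C.card ≤ 3 * s) (hadj : ∀ B ∈ ℬ, ∃ x ∈ C, ∃ y ∈ B, H.Adj x y) :
    IsPartialMinor H s t α Z X (insert C ℬ) :=
  { h.toIsBranchFamily.insert hC hsC hCs
      (fun B hB => Finset.disjoint_left.2 fun x hx => (mem_restVerts.1 (hCU hx)).2 B hB) hadj with
    disjoint_discarded := (Finset.forall_mem_insert _ _ _).2
      ⟨Finset.disjoint_left.2 fun x hx => (mem_restVerts.1 (hCU hx)).1, h.disjoint_discarded⟩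
    card_family_le := (Finset.card_insert_le _ _).trans hlt
    boundary_le := by
      have hrest : restVerts X (insert C ℬ) ⊆ restVerts X ℬ := fun x hx => by
        rw [mem_restVerts, Finset.forall_mem_insert] at hx
        exact mem_restVerts.2 ⟨hx.1, hx.2.2⟩
      refine le_trans ?_ h.boundary_le
      exact_mod_cast Finset.card_le_card
        (Finset.filter_subset_filter _ (Finset.sdiff_subset_sdiff hrest subset_rfl))
    card_inter_le := h.card_inter_le }

lemma IsPartialMinor.exists_insert (h : IsPartialMinor H s t α Z X ℬ) (hα : 0 < α)
    (hΔ : ∀ x, ∑ y, adjWeight H x y ≤ Δ) (hΔ0 : 0 < Δ) (hs : 0 < s)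
    (hWs : Fintype.card W ≤ s ^ 2)
    (ht : t * (hitConst (α ^ 2 / (16 * Δ ^ 2)) (α ^ 2 / Δ) + 1) ≤ s) (hlt : ℬ.card < t)
    (hU : ExpandsOn (adjWeight H) (restVerts X ℬ) α) (hsU : 2 * s ≤ (restVerts X ℬ).card)
    (hnbrs : ∀ B ∈ ℬ, α * B.card ≤ (nbrsIn H (restVerts X ℬ) B).card) :
    ∃ C ∉ ℬ, IsPartialMinor H s t α Z X (insert C ℬ) := by
  have hK : 0 ≤ hitConst (α ^ 2 / (16 * Δ ^ 2)) (α ^ 2 / Δ) :=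
    hitConst_nonneg (by positivity) (by positivity)
  obtain ⟨C₀, hC₀U, hC₀, hC₀s, hmeet⟩ := exists_connected_hitting (J := ℬ)
    (S := nbrsIn H (restVerts X ℬ))
    (fun x _ => (Finset.sum_le_univ_sum_of_nonneg fun y => adjWeight_nonneg H x y).trans (hΔ x))
    hΔ0 hα hU hs ((Finset.card_le_univ _).trans hWs) hsU
    ((mul_le_mul_of_nonneg_right (by exact_mod_cast hlt.le) (by linarith)).trans ht)
    (fun B _ => (Finset.filter_subset _ _).trans Finset.sdiff_subset)
    (fun B hB => le_trans (by have := h.le_card B hB; gcongr) (hnbrs B hB))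
  obtain ⟨C, hCU, hC₀C, hC, hsC, hCs⟩ :=
    exists_connected_superset_le_card hα hU hsU hC₀U hC₀ le_rfl
  refine ⟨C, fun hCℬ => ?_, h.insert_branchSet hlt hCU hC hsC (hCs.trans (max_le hC₀s (by omega)))
    fun B hB => ?_⟩
  · obtain ⟨x, hx⟩ := hC.nonempty
    exact (mem_restVerts.1 (hCU hx)).2 C hCℬ hx
  · obtain ⟨x, hx, hxB⟩ := Finset.not_disjoint_iff.1 (hmeet B hB)
    obtain ⟨-, y, hy, hyx⟩ := mem_nbrsIn.1 hxB
    exact ⟨x, hC₀C hx, y, hy, hyx.symm⟩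

lemma IsPartialMinor.two_mul_le_card_restVerts (h : IsPartialMinor H s t α Z X ℬ) (ht : 0 < t)
    (hst : 36 * s * t ≤ Z.card) : 2 * s ≤ (restVerts X ℬ).card := by
  have hcover : Z ⊆ (X ∩ Z) ∪ ℬ.biUnion id ∪ restVerts X ℬ := fun z hz => by
    simp only [restVerts, Finset.mem_union, Finset.mem_inter, Finset.mem_compl]
    tauto
  have hcard : Z.card ≤ (X ∩ Z).card + (ℬ.biUnion id).card + (restVerts X ℬ).card :=
    (Finset.card_le_card hcover).trans ((Finset.card_union_le _ _).trans
      (Nat.add_le_add_right (Finset.card_union_le _ _) _))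
  have hs : s ≤ s * t := Nat.le_mul_of_pos_right s ht
  have := h.card_biUnion_le
  have := h.card_inter_le
  rw [mul_assoc] at *
  omega

lemma IsPartialMinor.exists_larger (h : IsPartialMinor H s t α Z X ℬ) (hα : 0 < α)
    (hΔ : ∀ x, ∑ y, adjWeight H x y ≤ Δ) (hΔ0 : 0 < Δ) (hZ : IsWellLinkedSet H Z m)
    (hm : 3 * s * t + α * Fintype.card W ≤ m) (hmZ : 12 * m ≤ Z.card) (hs : 0 < s)
    (hWs : Fintype.card W ≤ s ^ 2)
    (ht : t * (hitConst (α ^ 2 / (16 * Δ ^ 2)) (α ^ 2 / Δ) + 1) ≤ s) (hlt : ℬ.card < t) :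
    ∃ X' ℬ', IsPartialMinor H s t α Z X' ℬ' ∧
      (X.card < X'.card ∨ X.card = X'.card ∧ ℬ.card < ℬ'.card) := by
  have ht0 : 0 < t := by omega
  by_cases hU : ExpandsOn (adjWeight H) (restVerts X ℬ) α
  · by_cases hnbrs : ∀ B ∈ ℬ, α * B.card ≤ (nbrsIn H (restVerts X ℬ) B).card
    · have hst : 36 * s * t ≤ Z.card := by
        have : 0 ≤ α * Fintype.card W := by positivity
        rify
        linarith
      obtain ⟨C, hC, hins⟩ := h.exists_insert hα hΔ hΔ0 hs hWs ht hlt hU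
        (h.two_mul_le_card_restVerts ht0 hst) hnbrs
      exact ⟨X, _, hins, Or.inr ⟨rfl, Finset.card_lt_card (Finset.ssubset_insert hC)⟩⟩
    · push Not at hnbrs
      obtain ⟨B, hB, hBnbrs⟩ := hnbrs
      refine ⟨_, _, h.discard_branchSet hα.le hZ hm hmZ ht0 hB hBnbrs.le, Or.inl ?_⟩
      rw [Finset.card_union_of_disjoint (h.disjoint_discarded B hB).symm]
      have := h.le_card B hB
      omega
  · obtain ⟨T, hT, hXT, hdiscard⟩ := h.exists_discard_of_not_expandsOn hα.le hZ hm hmZ hU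
    refine ⟨_, _, hdiscard, Or.inl ?_⟩
    rw [Finset.card_union_of_disjoint hXT]
    have := hT.card_pos
    omega

lemma exists_isPartialMinor_card_eq (hα : 0 < α) (hΔ : ∀ x, ∑ y, adjWeight H x y ≤ Δ)
    (hΔ0 : 0 < Δ) (hZ : IsWellLinkedSet H Z m) (hm : 3 * s * t + α * Fintype.card W ≤ m)
    (hmZ : 12 * m ≤ Z.card) (hs : 0 < s) (hWs : Fintype.card W ≤ s ^ 2)
    (ht : t * (hitConst (α ^ 2 / (16 * Δ ^ 2)) (α ^ 2 / Δ) + 1) ≤ s) :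
    ∃ X ℬ, IsPartialMinor H s t α Z X ℬ ∧ ℬ.card = t := by
  have hempty : IsPartialMinor H s t α Z ∅ ∅ :=
    ⟨⟨by simp, by simp, by simp, by simp, by simp⟩, by simp, by simp, by simp [nbrsIn], by simp⟩
  obtain ⟨⟨X, ℬ⟩, hmem, hmax⟩ := Finset.exists_max_image
    {a : Finset W × Finset (Finset W) | IsPartialMinor H s t α Z a.1 a.2}
    (fun a => toLex (a.1.card, a.2.card)) ⟨(∅, ∅), by simpa using hempty⟩
  have h : IsPartialMinor H s t α Z X ℬ := (Finset.mem_filter.1 hmem).2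
  refine ⟨X, ℬ, h, h.card_family_le.eq_of_not_lt fun hlt => ?_⟩
  obtain ⟨X', ℬ', h', hlarger⟩ := h.exists_larger hα hΔ hΔ0 hZ hm hmZ hs hWs ht hlt
  exact (hmax (X', ℬ') (by simpa using h')).not_gt (Prod.Lex.toLex_lt_toLex.2 hlarger)

end PartialMinors

section LargeMinors

variable {W : Type} [Fintype W] {H G : SimpleGraph W} {d : ℕ} {p η ε δ : ℝ}

lemma sum_adjWeight (H : SimpleGraph W) (x : W) :
    ∑ y, adjWeight H x y = (H.neighborSet x).ncard := by
  simp only [adjWeight, Finset.sum_boole, card_filter_adj_eq]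

lemma exists_branch_size_and_number {a : ℝ} (ha : 0 < a) (K : ℝ) :
    ∃ δ > (0 : ℝ), ∃ n₀ : ℕ, ∀ n : ℕ, n₀ ≤ n → ∃ s t : ℕ, 0 < s ∧ n ≤ s ^ 2 ∧
      3 * s * t ≤ a * n ∧ t * K ≤ s ∧ δ * Real.sqrt n ≤ t := by
  have hK : 0 < max K 1 := one_pos.trans_le (le_max_right _ _)
  set δ := min (a / 12) (1 / (2 * max K 1)) with hδ
  have hδ0 : 0 < δ := lt_min (by positivity) (by positivity)
  have hδa : 12 * δ ≤ a := by linarith [min_le_left (a / 12) (1 / (2 * max K 1))]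
  have hδK : 2 * δ * max K 1 ≤ 1 := by
    have := min_le_right (a / 12) (1 / (2 * max K 1))
    rw [← hδ, le_div_iff₀ (by positivity)] at this
    linarith
  refine ⟨δ, hδ0, ⌈(1 / δ) ^ 2⌉₊, fun n hn => ?_⟩
  set r := Real.sqrt n
  have hrr : r * r = n := Real.mul_self_sqrt (Nat.cast_nonneg n)
  have hδr : 1 ≤ δ * r := by
    have : 1 / δ ≤ r := Real.le_sqrt_of_sq_le (Nat.ceil_le.1 hn)
    rwa [div_le_iff₀' hδ0] at this
  have hr : 1 ≤ r := by nlinarith [le_max_right K (1 : ℝ)]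
  have hs := Nat.le_ceil r
  have hs2 : (⌈r⌉₊ : ℝ) ≤ 2 * r := by linarith [Nat.ceil_lt_add_one (a := r) (by linarith)]
  have ht2 : (⌈δ * r⌉₊ : ℝ) ≤ 2 * (δ * r) := by
    linarith [Nat.ceil_lt_add_one (a := δ * r) (by linarith)]
  refine ⟨⌈r⌉₊, ⌈δ * r⌉₊, Nat.ceil_pos.2 (by linarith), ?_, ?_, ?_, Nat.le_ceil _⟩
  · rify
    rw [← hrr, ← sq]
    gcongr
  · calc 3 * (⌈r⌉₊ : ℝ) * ⌈δ * r⌉₊ ≤ 3 * (2 * r) * (2 * (δ * r)) := by gcongr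
      _ = 12 * δ * (r * r) := by ring
      _ ≤ a * n := by rw [hrr]; gcongr
  · calc (⌈δ * r⌉₊ : ℝ) * K ≤ ⌈δ * r⌉₊ * max K 1 := by
          gcongr
          exact le_max_left K 1
      _ ≤ 2 * (δ * r) * max K 1 := by gcongr
      _ = 2 * δ * max K 1 * r := by ring
      _ ≤ ⌈r⌉₊ := by nlinarith

lemma exists_wellLinked_hasLargeCompleteMinor (hd : 0 < d) (hη : 0 < η) (hε : 0 < ε) :
    ∃ δ > (0 : ℝ), ∃ n₀ : ℕ, ∀ (W : Type) [Fintype W] (H : SimpleGraph W),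
      n₀ ≤ Fintype.card W → (∀ x, (H.neighborSet x).ncard ≤ d) → WellLinked H η ε →
      HasLargeCompleteMinor δ H := by
  set ε' := min ε (η / 12)
  have hε' : 0 < ε' := lt_min hε (by positivity)
  have hε'η : 12 * ε' ≤ η := by linarith [min_le_right ε (η / 12)]
  obtain ⟨δ, hδ, n₀, hparam⟩ := exists_branch_size_and_number (half_pos hε')
    (hitConst ((ε' / 2) ^ 2 / (16 * (d : ℝ) ^ 2)) ((ε' / 2) ^ 2 / d) + 1)
  refine ⟨δ, hδ, n₀, fun W _ H hn hdeg ⟨Z, hZ, hlinked⟩ => ?_⟩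
  obtain ⟨s, t, hs, hns, hst, ht, hδt⟩ := hparam _ hn
  have hlinked' : IsWellLinkedSet H Z (ε' * Fintype.card W) := fun A B X hX hA hB =>
    lt_of_le_of_lt (by gcongr; exact min_le_left _ _) (hlinked A B X hX hA hB)
  obtain ⟨X, ℬ, h, hℬ⟩ := exists_isPartialMinor_card_eq (half_pos hε')
    (fun x => (sum_adjWeight H x).trans_le (by exact_mod_cast hdeg x)) (by exact_mod_cast hd)
    hlinked' (by linarith)
    (le_trans (by rw [← mul_assoc]; gcongr) hZ) hs hns ht
  exact h.hasLargeCompleteMinor (hℬ ▸ hδt)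

lemma ncard_neighborSet_openGraph_le {s : Finset (Sym2 W)} (hs : s ⊆ edgeFinset' G)
    (hdeg : ∀ x, (G.neighborSet x).ncard ≤ d) (x : W) :
    ((openGraph s).neighborSet x).ncard ≤ d :=
  (Set.ncard_le_ncard (fun _ hy => openGraph_le hs hy) (Set.toFinite _)).trans (hdeg x)

lemma one_sub_percPr_not_wellLinked_le (h0 : 0 ≤ p) (h1 : p ≤ 1)
    (hdeg : ∀ x, (G.neighborSet x).ncard ≤ d)
    (hminor : ∀ H : SimpleGraph W, (∀ x, (H.neighborSet x).ncard ≤ d) → WellLinked H η ε →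
      HasLargeCompleteMinor δ H) :
    1 - percPr p (edgeFinset' G) (fun s => ¬ WellLinked (openGraph s) η ε)
      ≤ percPr p (edgeFinset' G) (fun s => HasLargeCompleteMinor δ (openGraph s)) := by
  rw [percPr_not, sub_sub_cancel]
  exact percPr_mono h0 h1 fun s hs => hminor _ (ncard_neighborSet_openGraph_le hs hdeg)

lemma one_le_exp_mul_exp_neg {c a n : ℝ} (hc : 0 ≤ c) (hn : n ≤ a) :
    1 ≤ Real.exp (c * a) * Real.exp (-c * n) := by
  rw [← Real.exp_add, Real.one_le_exp_iff]
  nlinarith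

end LargeMinors

theorem complete_minor_in_percolated_expander (d : ℕ) (hd : 3 ≤ d) (p : ℝ)
    (hp : 1 / ((d : ℝ) - 1) < p) (hp1 : p < 1) (b : ℝ) (hb : 0 < b) :
    ∃ δ > (0:ℝ), ∃ c > (0:ℝ), ∃ C > (0:ℝ), ∃ R : ℕ, 0 < R ∧
      ∀ (V : Type) [Fintype V] [DecidableEq V] (G : SimpleGraph V),
        IsRegularExpander G b d → (R : ℕ∞) < G.girth →
        1 - C * Real.exp (-c * Fintype.card V) ≤
          percProb G p (fun H =>
            ∃ t : ℕ, δ * Real.sqrt (Fintype.card V) ≤ (t : ℝ) ∧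
              ∃ f : Fin t → Finset V,
                (∀ i j, i ≠ j → Disjoint (f i) (f j)) ∧
                (∀ i, (H.induce (↑(f i) : Set V)).Connected) ∧
                (∀ i j, i ≠ j → ∃ x ∈ f i, ∃ y ∈ f j, H.Adj x y)) := by
  obtain ⟨η, hη, ε, hε, c, hc, R, hR, hlinked⟩ := exists_percPr_not_wellLinked_le hd hp hp1 hb
  obtain ⟨δ, hδ, n₀, hminor⟩ :=
    exists_wellLinked_hasLargeCompleteMinor (show 0 < d by omega) hη hε
  have hp0 : 0 ≤ p := (critProb_pos (show 2 ≤ d by omega)).le.trans hp.le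
  refine ⟨δ, hδ, c, hc, 1 + Real.exp 1 + Real.exp (c * (n₀ + 1)), by positivity, R, hR, ?_⟩
  intro V _ _ G hG hgirth
  change _ ≤ percPr p (edgeFinset' G) (fun s => HasLargeCompleteMinor δ (openGraph s))
  have hfirst : 0 ≤ (1 + Real.exp 1) * Real.exp (-c * Fintype.card V) := by positivity
  have hsecond : 0 ≤ Real.exp (c * (n₀ + 1)) * Real.exp (-c * Fintype.card V) := by positivity
  rcases le_or_gt (n₀ + 1) (Fintype.card V) with hlarge | hsmall
  · have : Nonempty V := Fintype.card_pos_iff.1 (by omega)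
    -- `convert` identifies the given `DecidableEq V` instance with the classical one.
    linarith [hlinked V G (by convert hG) (by exact_mod_cast hgirth),
      one_sub_percPr_not_wellLinked_le hp0 hp1.le hG.1.1 fun H => hminor V H (by omega)]
  · have hcard : (Fintype.card V : ℝ) ≤ n₀ + 1 := by exact_mod_cast hsmall.le
    linarith [one_le_exp_mul_exp_neg hc.le hcard,
      percPr_nonneg hp0 hp1.le (edgeFinset' G) fun s => HasLargeCompleteMinor δ (openGraph s)]

end Percolation

end
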